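/- arXiv:1511.01937 — 2 statements merged into one kernel-verified Lean document; each statement's English description precedes it below -/
import Mathlib

section
/- Let f : D → {0,1} be a partial function with D ⊆ [M]^n, and let φ be a certifying function for f. Then R_1(f_CS(φ)) = Õ(R(f) + R_0(φ)) and Q_1(f_CS(φ)) = Õ(Q(f) + Q_0(φ)). -/
open scoped BigOperators ENNReal

namespace QC

/-! ### Inputs and partial functions -/

/-- An input assigns to each index `i` a symbol from the alphabet `Fin (α i)`. -/
abbrev Input (ι : Type) (α : ι → ℕ) := ∀ i : ι, Fin (α i)

/-- A (possibly partial) Boolean-valued query function; `none` means the input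
is outside the promise/domain. -/
abbrev PartialFn (ι : Type) (α : ι → ℕ) := Input ι α → Option Bool

/-- A total function has every input in its domain. -/
def TotalFn {ι : Type} {α : ι → ℕ} (f : PartialFn ι α) : Prop := ∀ x, f x ≠ none

/-- Classical truth value of a proposition, as a `Bool`. -/
noncomputable def ofProp (P : Prop) : Bool := @decide P (Classical.propDecidable P)

/-! ### Decision trees and classical query complexity -/

/-- Decision trees over index set `ι` with alphabets `α` and leaf labels `L`. -/
inductive DTree (ι : Type) (α : ι → ℕ) (L : Type) : Type
  | leaf : L → DTree ι α L
  | node : (i : ι) → (Fin (α i) → DTree ι α L) → DTree ι α L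

namespace DTree

variable {ι : Type} {α : ι → ℕ} {L : Type}

/-- Evaluate a decision tree on an input. -/
def eval : DTree ι α L → Input ι α → L
  | leaf b, _ => b
  | node i child, x => eval (child (x i)) x

/-- The number of queries the tree makes on a given input. -/
def cost : DTree ι α L → Input ι α → ℕ
  | leaf _, _ => 0
  | node i child, x => cost (child (x i)) x + 1

/-- The depth (worst-case number of queries) of a decision tree. -/
def depth : DTree ι α L → ℕ
  | leaf _ => 0
  | node _ child => (Finset.univ.sup fun a => depth (child a)) + 1

end DTree

variable {ι : Type} {α : ι → ℕ}

/-- Deterministic query complexity `D(f)`. -/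
noncomputable def Dq (f : PartialFn ι α) : ℕ :=
  sInf {d | ∃ T : DTree ι α (Option Bool), T.depth ≤ d ∧
    ∀ x b, f x = some b → T.eval x = some b}

/-- Bounded-error randomized query complexity `R(f)` (worst-case queries,
success probability at least 2/3 on every domain input). -/
noncomputable def Rq (f : PartialFn ι α) : ℕ :=
  sInf {d | ∃ μ : PMF (DTree ι α (Option Bool)),
    (∀ T ∈ μ.support, T.depth ≤ d) ∧
    ∀ x b, f x = some b → 2/3 ≤ μ.toOuterMeasure {T | T.eval x = some b}}

/-- Zero-error randomized query complexity `R₀(f)` (worst-case queries): the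
algorithm never errs, and outputs `none` ("don't know") with probability at most 1/2. -/
noncomputable def R0q (f : PartialFn ι α) : ℕ :=
  sInf {d | ∃ μ : PMF (DTree ι α (Option Bool)),
    (∀ T ∈ μ.support, T.depth ≤ d) ∧
    (∀ T ∈ μ.support, ∀ x b, f x = some b → T.eval x = some b ∨ T.eval x = none) ∧
    ∀ x b, f x = some b → μ.toOuterMeasure {T | T.eval x = none} ≤ 1/2}

/-- Zero-error randomized query complexity, measured by the worst-case *expected*
number of queries over domain inputs (value in `ℝ≥0∞`). -/
noncomputable def R0expq (f : PartialFn ι α) : ℝ≥0∞ :=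
  sInf {c | ∃ μ : PMF (DTree ι α (Option Bool)),
    (∀ T ∈ μ.support, ∀ x b, f x = some b → T.eval x = some b ∨ T.eval x = none) ∧
    (∀ x b, f x = some b → μ.toOuterMeasure {T | T.eval x = none} ≤ 1/2) ∧
    (∀ x b, f x = some b → ∑' T, μ T * (T.cost x : ℝ≥0∞) ≤ c)}

/-- One-sided-error randomized query complexity `R₁(f)`: accept every 1-input with
probability at least 2/3, and never accept a 0-input. -/
noncomputable def R1q (f : PartialFn ι α) : ℕ :=
  sInf {d | ∃ μ : PMF (DTree ι α (Option Bool)),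
    (∀ T ∈ μ.support, T.depth ≤ d) ∧
    (∀ x, f x = some true → 2/3 ≤ μ.toOuterMeasure {T | T.eval x = some true}) ∧
    (∀ x, f x = some false → ∀ T ∈ μ.support, T.eval x ≠ some true)}

/-! ### Quantum query complexity -/

/-- The index set of the state space of a quantum query algorithm:
a query register `Σ i, Fin (α i)` together with a workspace register `Fin W`. -/
abbrev QIdx (ι : Type) (α : ι → ℕ) (W : ℕ) := (Σ i : ι, Fin (α i)) × Fin W

variable [Fintype ι] [DecidableEq ι]

/-- The standard query oracle for input `x`: the permutation matrix sending the basis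
vector `|i,a⟩|w⟩` to `|i, a + x i⟩|w⟩` (addition modulo `α i`). -/
noncomputable def oracleMatrix (W : ℕ) (x : Input ι α) :
    Matrix (QIdx ι α W) (QIdx ι α W) ℂ :=
  Matrix.of fun j j' =>
    if j.2 = j'.2 ∧ j.1 = ⟨j'.1.1, j'.1.2 + x j'.1.1⟩ then 1 else 0

/-- The product `U_T · O · U_{T-1} · O ⋯ O · U_0` of unitaries interleaved with oracle
calls, defining a `T`-query quantum algorithm. -/
noncomputable def qProd {τ : Type} [Fintype τ] (U : ℕ → Matrix τ τ ℂ) (Ox : Matrix τ τ ℂ) :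
    ℕ → Matrix τ τ ℂ
  | 0 => U 0
  | t + 1 => U (t + 1) * Ox * qProd U Ox t

/-- A quantum query algorithm: a number `T` of queries, a workspace size `W`,
unitaries `U 0, …, U T`, a unit initial state, and a measurement assigning to each
basis state an output in `Option Bool` (`none` = "don't know"). -/
structure QAlg (ι : Type) [Fintype ι] [DecidableEq ι] (α : ι → ℕ) where
  T : ℕ
  W : ℕ
  U : ℕ → Matrix (QIdx ι α W) (QIdx ι α W) ℂ
  unitary : ∀ t, U t ∈ Matrix.unitaryGroup (QIdx ι α W) ℂ
  init : QIdx ι α W → ℂ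
  init_norm : ∑ j, ‖init j‖ ^ 2 = 1
  out : QIdx ι α W → Option Bool

/-- The final state of a quantum algorithm on input `x`. -/
noncomputable def QAlg.finalState (A : QAlg ι α) (x : Input ι α) : QIdx ι α A.W → ℂ :=
  (qProd A.U (oracleMatrix A.W x) A.T).mulVec A.init

/-- The probability that the algorithm outputs `v` on input `x`. -/
noncomputable def QAlg.outProb (A : QAlg ι α) (x : Input ι α) (v : Option Bool) : ℝ :=
  ∑ j, if A.out j = v then ‖A.finalState x j‖ ^ 2 else 0

/-- Bounded-error quantum query complexity `Q(f)`. -/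
noncomputable def Qq (f : PartialFn ι α) : ℕ :=
  sInf {d | ∃ A : QAlg ι α, A.T ≤ d ∧
    ∀ x b, f x = some b → (2 : ℝ)/3 ≤ A.outProb x (some b)}

/-- Exact quantum query complexity `Q_E(f)`. -/
noncomputable def QEq (f : PartialFn ι α) : ℕ :=
  sInf {d | ∃ A : QAlg ι α, A.T ≤ d ∧
    ∀ x b, f x = some b → A.outProb x (some b) = 1}

/-- One-sided-error quantum query complexity `Q₁(f)`. -/
noncomputable def Q1q (f : PartialFn ι α) : ℕ :=
  sInf {d | ∃ A : QAlg ι α, A.T ≤ d ∧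
    (∀ x, f x = some true → (2 : ℝ)/3 ≤ A.outProb x (some true)) ∧
    (∀ x, f x = some false → A.outProb x (some true) = 0)}

/-- Zero-error quantum query complexity `Q₀(f)`: never wrong, outputs `none`
with probability at most 1/2. -/
noncomputable def Q0q (f : PartialFn ι α) : ℕ :=
  sInf {d | ∃ A : QAlg ι α, A.T ≤ d ∧
    ∀ x b, f x = some b → A.outProb x (some !b) = 0 ∧ A.outProb x none ≤ 1/2}

/-! ### Certificate complexity -/

/-- A partial assignment `ρ` is consistent with an input `x`. -/
def Consistent (ρ : ∀ i : ι, Option (Fin (α i))) (x : Input ι α) : Prop :=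
  ∀ i v, ρ i = some v → x i = v

/-- The number of fixed positions of a partial assignment. -/
noncomputable def certSize (ρ : ∀ i : ι, Option (Fin (α i))) : ℕ :=
  Nat.card {i // (ρ i).isSome}

/-- The certificate complexity of `f` at input `x`: the least size of a partial
assignment consistent with `x` forcing the value `f x` on all domain inputs. -/
noncomputable def CxAt (f : PartialFn ι α) (x : Input ι α) : ℕ :=
  sInf {s | ∃ ρ, Consistent ρ x ∧ (∀ y, Consistent ρ y → f y = none ∨ f y = f x) ∧
    certSize ρ ≤ s}

/-- Certificate complexity `C(f)`. -/
noncomputable def Cq (f : PartialFn ι α) : ℕ :=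
  sSup {s | ∃ x, f x ≠ none ∧ s = CxAt f x}

/-- One-certificate complexity `C¹(f)`. -/
noncomputable def C1q (f : PartialFn ι α) : ℕ :=
  sSup {s | ∃ x, f x = some true ∧ s = CxAt f x}

/-! ### Polynomial degree -/

/-- Exact polynomial degree `deg(f)`: least degree of a real polynomial agreeing
with `f` (as a 0/1 function of the numerical values of the input symbols) on its domain. -/
noncomputable def degq (f : PartialFn ι α) : ℕ :=
  sInf {d | ∃ p : MvPolynomial ι ℝ, p.totalDegree ≤ d ∧
    ∀ x b, f x = some b →
      MvPolynomial.eval (fun i => ((x i : ℕ) : ℝ)) p = if b then 1 else 0}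

/-- Approximate polynomial degree `adeg(f)`: least degree of a real polynomial
approximating `f` pointwise to error 1/3 on its domain. -/
noncomputable def adegq (f : PartialFn ι α) : ℕ :=
  sInf {d | ∃ p : MvPolynomial ι ℝ, p.totalDegree ≤ d ∧
    ∀ x b, f x = some b →
      |MvPolynomial.eval (fun i => ((x i : ℕ) : ℝ)) p - if b then 1 else 0| ≤ 1/3}

end QC
/-! ### Certifying functions and cheat sheets -/

namespace QC

variable {ι : Type} {α : ι → ℕ}

/-- `φ` is a certifying function for the partial function `f`: it accepts `(x, y)`
only when `x` is in the domain of `f` and the first bit of `y` equals `f x`; every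
domain input has some accepted certificate `y`; and the all-zeros `y` is never accepted. -/
def IsCertifying {k : ℕ} (hk : 0 < k) (f : PartialFn ι α)
    (φ : Input ι α → (Fin k → Fin 2) → Bool) : Prop :=
  (∀ x y, f x = none → φ x y = false) ∧
  (∀ x y b, f x = some b → y ⟨0, hk⟩ ≠ (if b then 1 else 0) → φ x y = false) ∧
  (∀ x b, f x = some b → ∃ y, φ x y = true) ∧
  (∀ x, φ x (fun _ => 0) = false)

/-- The index set of the input to a certifying function, viewed as a query function:
the original input together with `k` certificate bits. -/
abbrev CertIdx (ι : Type) (k : ℕ) := ι ⊕ Fin k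

/-- Alphabets for `CertIdx`. -/
def certAlphabet (α : ι → ℕ) (k : ℕ) : CertIdx ι k → ℕ := Sum.elim α fun _ => 2

/-- A certifying function viewed as a total query function on input ⊕ certificate bits. -/
def certFn {k : ℕ} (φ : Input ι α → (Fin k → Fin 2) → Bool) :
    PartialFn (CertIdx ι k) (certAlphabet α k) :=
  fun z => some (φ (fun i => z (Sum.inl i)) (fun q => z (Sum.inr q)))

/-- The index set of the input to the cheat sheet version of a function: `c` copies of
the original input, followed by `2^c` cells each holding `c` certificate strings of `k` bits. -/
abbrev CSIdx (ι : Type) (c k : ℕ) := (Fin c × ι) ⊕ (Fin (2 ^ c) × Fin c × Fin k)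

/-- Alphabets for `CSIdx`. -/
def csAlphabet (α : ι → ℕ) (c k : ℕ) : CSIdx ι c k → ℕ :=
  Sum.elim (fun p => α p.2) fun _ => 2

/-- The `i`-th copy of the original input inside a cheat sheet input. -/
def csX {c k : ℕ} (z : Input (CSIdx ι c k) (csAlphabet α c k)) (i : Fin c) : Input ι α :=
  fun p => z (Sum.inl (i, p))

/-- The `i`-th certificate string in the `ℓ`-th cheat sheet cell. -/
def csY {c k : ℕ} (z : Input (CSIdx ι c k) (csAlphabet α c k)) (ℓ : Fin (2 ^ c))
    (i : Fin c) : Fin k → Fin 2 :=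
  fun q => z (Sum.inr (ℓ, i, q))

/-- The number in `[2^c]` whose binary representation is the bit string `b`. -/
def binToFin (c : ℕ) (b : Fin c → Bool) : Fin (2 ^ c) :=
  ⟨(∑ i, if b i then 2 ^ (i : ℕ) else 0) % 2 ^ c, Nat.mod_lt _ (by positivity)⟩

/-- The defining condition of the cheat sheet function: all `c` copies lie in the
domain of `f`, and the cell addressed by their `f`-values holds certificates
accepted by `φ` for each copy. -/
def CSCond {c k : ℕ} (f : PartialFn ι α) (φ : Input ι α → (Fin k → Fin 2) → Bool)
    (z : Input (CSIdx ι c k) (csAlphabet α c k)) : Prop :=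
  ∃ bvec : Fin c → Bool, (∀ i, f (csX z i) = some (bvec i)) ∧
    ∀ i, φ (csX z i) (csY z (binToFin c bvec) i) = true

/-- The cheat sheet version of `f` with respect to the certifying function `φ`,
with `c` copies of `f`. It is a total function. -/
noncomputable def cheatSheet (c : ℕ) {k : ℕ} (f : PartialFn ι α)
    (φ : Input ι α → (Fin k → Fin 2) → Bool) :
    PartialFn (CSIdx ι c k) (csAlphabet α c k) :=
  fun z => some (ofProp (CSCond f φ z))

/-! ### OR / AND compositions -/

/-- The `OR` function on `m` bits (alphabet `Fin 2`). -/
def orFn (m : ℕ) (z : Fin m → Fin 2) : Fin 2 := if ∃ j, z j = 1 then 1 else 0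

/-- The `AND` function on `m` bits (alphabet `Fin 2`). -/
def andFn (m : ℕ) (z : Fin m → Fin 2) : Fin 2 := if ∀ j, z j = 1 then 1 else 0

/-- The composition `f ∘ OR_m`. -/
def composeOr {n : ℕ} (f : PartialFn (Fin n) fun _ => 2) (m : ℕ) :
    PartialFn (Fin n × Fin m) (fun _ => 2) :=
  fun z => f fun i => orFn m fun j => z (i, j)

/-- The composition `f ∘ AND_m ∘ OR_m`. -/
def composeAndOr {n : ℕ} (f : PartialFn (Fin n) fun _ => 2) (m : ℕ) :
    PartialFn (Fin n × Fin m × Fin m) (fun _ => 2) :=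
  fun z => f fun i => andFn m fun j => orFn m fun l => z (i, j, l)

/-! ### k-SUM, Block k-sum, BKK and its recursive composition -/

/-- The `k`-SUM function on `n` numbers from `[q]`: is there a set of `k` of the
input numbers summing to `0` modulo `q`? -/
noncomputable def kSUMfn (n q k : ℕ) : PartialFn (Fin n) (fun _ => q) :=
  fun x => some (ofProp (∃ S : Finset (Fin n), S.card = k ∧
    (∑ i ∈ S, (x i : ℕ)) % q = 0))

/-- Number of ones in a block of bits. -/
def onesCount {B : ℕ} (z : Fin B → Fin 2) : ℕ := (Finset.univ.filter fun j => z j = 1).card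

/-- The number encoded in binary by a block of bits. -/
def blockVal {B : ℕ} (z : Fin B → Fin 2) : ℕ := ∑ j, if z j = 1 then 2 ^ (j : ℕ) else 0

/-- A block is balanced if it has an equal number of 0s and 1s. -/
def isBalanced {B : ℕ} (z : Fin B → Fin 2) : Prop := 2 * onesCount z = B

/-- Block `k`-sum on `nb` blocks of `B` bits each: value 1 iff there are `k` balanced
blocks whose encoded numbers sum to 0 (mod `2^B`) and every other block has at least
as many 1s as 0s. -/
noncomputable def blockKSumBool (nb B k : ℕ) (z : Fin nb × Fin B → Fin 2) : Bool :=
  ofProp (∃ S : Finset (Fin nb), S.card = k ∧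
    (∀ i ∈ S, isBalanced fun j => z (i, j)) ∧
    (∑ i ∈ S, blockVal fun j => z (i, j)) % 2 ^ B = 0 ∧
    ∀ i ∉ S, B ≤ 2 * onesCount fun j => z (i, j))

/-- The Boolean version of `k`-SUM on `m` numbers of `w` bits each (mod `2^w`). -/
noncomputable def kSumBool (m w k : ℕ) (z : Fin m × Fin w → Fin 2) : Bool :=
  ofProp (∃ S : Finset (Fin m), S.card = k ∧
    (∑ i ∈ S, blockVal fun j => z (i, j)) % 2 ^ w = 0)

/-- Block size of the outer Block `k`-sum in `BKK` on (roughly) `n` outer bits. -/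
def bkkB (n k : ℕ) : ℕ := 10 * k * Nat.log 2 n
/-- Number of blocks of the outer Block `k`-sum in `BKK`. -/
def bkkNB (n k : ℕ) : ℕ := n / bkkB n k
/-- Bits per number of the inner Boolean `k`-SUM in `BKK`. -/
def bkkW (n k : ℕ) : ℕ := k * Nat.log 2 n
/-- Number of numbers of the inner Boolean `k`-SUM in `BKK`. -/
def bkkM (n k : ℕ) : ℕ := n / bkkW n k

/-- The index set of the inputs of `BKK_{n²,k}` (one inner `k`-SUM input bit for
each outer Block `k`-sum input bit; roughly `n²` bits in total). -/
abbrev BKKIdx (n k : ℕ) := (Fin (bkkNB n k) × Fin (bkkB n k)) × (Fin (bkkM n k) × Fin (bkkW n k))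

/-- `BKK_{n²,k}`: Block `k`-sum composed with the Boolean version of `k`-SUM. -/
noncomputable def bkkBool (n k : ℕ) (z : BKKIdx n k → Fin 2) : Bool :=
  blockKSumBool (bkkNB n k) (bkkB n k) k fun ob =>
    if kSumBool (bkkM n k) (bkkW n k) k (fun p => z (ob, p)) then 1 else 0

/-- `BKK_{n²,k}` as a total query function. -/
noncomputable def BKKfn (n k : ℕ) : PartialFn (BKKIdx n k) (fun _ => 2) :=
  fun z => some (bkkBool n k z)

/-- The `d`-fold self-composition of a total Boolean function `g`: a depth-`d` tree
each of whose internal nodes is a copy of `g`; input bits are indexed by root-to-leaf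
paths `Fin d → I`. -/
noncomputable def iterFn {I : Type} (g : (I → Fin 2) → Bool) :
    (d : ℕ) → ((Fin d → I) → Fin 2) → Bool
  | 0, z => decide (z (fun i => i.elim0) = 1)
  | d + 1, z => g fun a => if iterFn g d (fun v => z (Fin.cons a v)) then 1 else 0

/-- The recursion depth used for `RecBKK`: `d = (4/25)·log n / log log n`. -/
def recD (n : ℕ) : ℕ := 4 * Nat.log 2 n / (25 * Nat.log 2 (Nat.log 2 n))

/-- The index set of the inputs of `RecBKK`. -/
abbrev RecIdx (n : ℕ) := Fin (recD n) → BKKIdx n (Nat.log 2 n)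

/-- `RecBKK`: the `recD n`-fold self-composition of `BKK` with `k = log n`. -/
noncomputable def RecBKKfn (n : ℕ) : PartialFn (RecIdx n) (fun _ => 2) :=
  fun z => some (iterFn (bkkBool n (Nat.log 2 n)) (recD n) z)

/-- The nominal input size `N = n^{2d}` of `RecBKK`. -/
def recN (n : ℕ) : ℕ := n ^ (2 * recD n)

end QC

namespace QC

/-! ### Query models -/

/-- The point mass at `l₀`. -/
noncomputable def dirac {L : Type} (l₀ l : L) : ℝ :=
  open Classical in if l = l₀ then 1 else 0

theorem dirac_self {L : Type} (l : L) : dirac l l = 1 := by simp [dirac]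

theorem dirac_ne {L : Type} {l₀ l : L} (h : l ≠ l₀) : dirac l₀ l = 0 := by simp [dirac, h]

theorem sum_dirac_mul {L : Type} [Fintype L] (l₀ : L) (g : L → ℝ) :
    ∑ l, dirac l₀ l * g l = g l₀ := by
  classical
  rw [Finset.sum_eq_single l₀ (fun l _ h => by rw [dirac_ne h, zero_mul]) (by simp),
    dirac_self, one_mul]

theorem sum_dirac {L : Type} [Fintype L] (l₀ : L) : ∑ l, dirac l₀ l = 1 := by
  simpa using sum_dirac_mul l₀ fun _ => 1

/-- A notion of query algorithm, recorded through the output distributions that are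
realizable with a given number of queries, together with the closure properties shared
by randomized and quantum algorithms. -/
structure QueryModel where
  /-- `Realizes T p`: some `T`-query algorithm has output distribution `p x` on input `x`. -/
  Realizes : ∀ {ι : Type} {α : ι → ℕ} {L : Type}, ℕ → (Input ι α → L → ℝ) → Prop
  nonneg : ∀ {ι : Type} {α : ι → ℕ} {L : Type} {T : ℕ} {p : Input ι α → L → ℝ},
    Realizes T p → ∀ x l, 0 ≤ p x l
  sum_eq_one : ∀ {ι : Type} {α : ι → ℕ} {L : Type} [Fintype L] {T : ℕ}
    {p : Input ι α → L → ℝ}, Realizes T p → ∀ x, ∑ l, p x l = 1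
  pure : ∀ {ι : Type} {α : ι → ℕ} {L : Type} (l₀ : L), Realizes 0 fun _ : Input ι α => dirac l₀
  query : ∀ {ι : Type} {α : ι → ℕ}, Input ι α → ∀ i,
    Realizes 1 fun x : Input ι α => dirac (x i)
  bind : ∀ {ι : Type} {α : ι → ℕ} {L L' : Type} [Fintype L] {S T : ℕ}
    {p : Input ι α → L → ℝ} {q : L → Input ι α → L' → ℝ}, Realizes S p →
    (∀ l, Realizes T (q l)) → Realizes (S + T) fun x l' => ∑ l, p x l * q l x l'
  pullback : ∀ {ι ι' : Type} {α : ι → ℕ} (σ : ι' → ι) {L : Type} {T : ℕ}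
    {p : Input ι' (fun i => α (σ i)) → L → ℝ}, Realizes T p →
    Realizes T fun x : Input ι α => p fun i => x (σ i)

namespace QueryModel

variable (𝓜 : QueryModel) {ι : Type} {α : ι → ℕ} {L L' : Type}

theorem map [Fintype L] {T : ℕ} {p : Input ι α → L → ℝ} (hp : 𝓜.Realizes T p) (g : L → L') :
    𝓜.Realizes T fun x l' => ∑ l, p x l * dirac (g l) l' :=
  𝓜.bind hp fun l => 𝓜.pure (g l)

/-- Every function of the input is computed exactly by querying everything. -/
theorem exact_of_dependsOn [Nonempty (Input ι α)] (s : Finset ι) :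
    ∀ g : Input ι α → L, (∀ x y, (∀ i ∈ s, x i = y i) → g x = g y) →
      𝓜.Realizes s.card fun x => dirac (g x) := by
  classical
  induction s using Finset.induction_on with
  | empty =>
    intro g hg
    obtain ⟨x₀⟩ := ‹Nonempty (Input ι α)›
    have : (fun x => dirac (g x)) = fun _ : Input ι α => dirac (g x₀) := by
      funext x
      rw [hg x x₀ (by simp)]
    rw [this]
    exact 𝓜.pure _
  | insert i s hi ih =>
    intro g hg
    obtain ⟨x₀⟩ := ‹Nonempty (Input ι α)›
    have key := 𝓜.bind (𝓜.query x₀ i) fun a => ih (fun x => g (Function.update x i a)) (by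
      intro x y hxy
      refine hg _ _ fun j hj => ?_
      by_cases hji : j = i
      · subst hji
        simp
      · simpa [hji] using hxy j (Finset.mem_of_mem_insert_of_ne hj hji))
    rw [Finset.card_insert_of_notMem hi, add_comm]
    convert key using 3 with x l
    rw [sum_dirac_mul, Function.update_eq_self]

theorem exact_of_fintype [Fintype ι] [Nonempty (Input ι α)] (g : Input ι α → L) :
    𝓜.Realizes (Fintype.card ι) fun x => dirac (g x) :=
  𝓜.exact_of_dependsOn Finset.univ g fun x y h => by
    rw [show x = y from funext fun i => h i (Finset.mem_univ i)]

/-- Running `m` algorithms one after the other gives the product distribution. -/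
theorem pi [Fintype L] {T : ℕ} : ∀ {m : ℕ} {p : Fin m → Input ι α → L → ℝ},
    (∀ i, 𝓜.Realizes T (p i)) →
      𝓜.Realizes (m * T) fun x (v : Fin m → L) => ∏ i, p i x (v i)
  | 0, p, _ => by
    have := 𝓜.pure (α := α) (default : Fin 0 → L)
    convert this using 2
    · simp
    · funext v
      rw [Subsingleton.elim v default, dirac_self]
      simp
  | m + 1, p, hp => by
    have key := 𝓜.bind (hp 0) fun a =>
      𝓜.map (pi (fun i => hp (Fin.succ i))) (Fin.cons (α := fun _ => L) a)
    convert key using 2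
    · ring
    · rename_i x
      funext w
      symm
      rw [Fin.prod_univ_succ]
      have h1 : ∀ a, (∑ v : Fin m → L, (∏ i, p (Fin.succ i) x (v i)) *
          dirac (Fin.cons (α := fun _ => L) a v) w)
          = dirac (w 0) a * ∏ i, p (Fin.succ i) x (w (Fin.succ i)) := by
        intro a
        by_cases ha : a = w 0
        · subst ha
          rw [dirac_self, one_mul, Finset.sum_eq_single (fun i => w (Fin.succ i))]
          · have : (Fin.cons (α := fun _ => L) (w 0) fun i => w (Fin.succ i)) = w :=
              Fin.cons_self_tail w
            rw [this, dirac_self, mul_one]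
          · intro v _ hv
            rw [dirac_ne, mul_zero]
            intro h
            apply hv
            funext i
            rw [h, Fin.cons_succ]
          · simp
        · rw [dirac_ne ha, zero_mul]
          refine Finset.sum_eq_zero fun v _ => ?_
          rw [dirac_ne, mul_zero]
          intro h
          apply ha
          rw [h, Fin.cons_zero]
      simp_rw [h1]
      rw [← sum_dirac_mul (w 0) fun a => p 0 x a * ∏ i, p (Fin.succ i) x (w (Fin.succ i))]
      exact Finset.sum_congr rfl fun a _ => by ring

/-- Majority of three runs reduces the error by a constant factor. -/
theorem majority_step {T : ℕ} {p : Input ι α → Bool → ℝ} (hp : 𝓜.Realizes T p) :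
    ∃ p' : Input ι α → Bool → ℝ, 𝓜.Realizes (3 * T) p' ∧
      ∀ x b ε, ε ≤ 1 / 3 → 1 - ε ≤ p x b → 1 - 7 / 9 * ε ≤ p' x b := by
  have h := 𝓜.bind hp fun a => 𝓜.bind hp fun b => 𝓜.map hp fun c => if a = b then a else c
  rw [show T + (T + T) = 3 * T by ring] at h
  refine ⟨_, h, ?_⟩
  · intro x b ε hε hb
    have hs := 𝓜.sum_eq_one hp x
    have h0 := 𝓜.nonneg hp x
    have ht := h0 true
    have hf := h0 false
    rw [Fintype.sum_bool] at hs
    have hkey : ∀ u : ℝ, 0 ≤ u → u ≤ ε → 3 * u ^ 2 - 2 * u ^ 3 ≤ 7 / 9 * ε := by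
      intro u h0 hu
      have h1 : 3 * u - 2 * u ^ 2 ≤ 7 / 9 := by nlinarith
      nlinarith [mul_le_mul_of_nonneg_left h1 h0]
    cases b
    · have := hkey (p x true) ht (by linarith)
      simp [dirac]
      have e : p x false = 1 - p x true := by linarith
      rw [e]
      nlinarith
    · have := hkey (p x false) hf (by linarith)
      simp [dirac]
      have e : p x true = 1 - p x false := by linarith
      rw [e]
      nlinarith

theorem majority_iterate {T : ℕ} {p : Input ι α → Bool → ℝ} (hp : 𝓜.Realizes T p) (j : ℕ) :
    ∃ p' : Input ι α → Bool → ℝ, 𝓜.Realizes (3 ^ j * T) p' ∧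
      ∀ x b, 2 / 3 ≤ p x b → 1 - (7 / 9) ^ j * (1 / 3) ≤ p' x b := by
  induction j with
  | zero => exact ⟨p, by simpa using hp, fun x b h => by norm_num; linarith⟩
  | succ j ih =>
    obtain ⟨p', hp', h⟩ := ih
    obtain ⟨p'', hp'', h'⟩ := 𝓜.majority_step hp'
    refine ⟨p'', by convert hp'' using 1; ring, fun x b hb => ?_⟩
    have := h' x b ((7 / 9) ^ j * (1 / 3)) ?_ (h x b hb)
    · rw [pow_succ]
      linarith
    · have : ((7 : ℝ) / 9) ^ j ≤ 1 := pow_le_one₀ (by norm_num) (by norm_num)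
      linarith

/-- Bounded-error computation of a partial function with error at most `2⁻ᵐ`. -/
theorem amplify {T : ℕ} {p : Input ι α → Option Bool → ℝ} (hp : 𝓜.Realizes T p) (m : ℕ) :
    ∃ p' : Input ι α → Bool → ℝ, 𝓜.Realizes (27 ^ m * T) p' ∧
      ∀ x b, 2 / 3 ≤ p x (some b) → 1 - (1 / 2) ^ m ≤ p' x b := by
  obtain ⟨p', hp', h⟩ := 𝓜.majority_iterate (𝓜.map hp fun o => o.getD false) (3 * m)
  refine ⟨p', by convert hp' using 2; rw [pow_mul]; norm_num, fun x b hb => ?_⟩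
  have h1 : ((7 : ℝ) / 9) ^ (3 * m) ≤ (1 / 2) ^ m := by
    rw [pow_mul]
    exact pow_le_pow_left₀ (by norm_num) (by norm_num) m
  have h2 : (0 : ℝ) ≤ (1 / 2) ^ m := by positivity
  have h3 := h x b (by
    refine hb.trans ?_
    have := 𝓜.nonneg hp x none
    cases b <;> simp [Fintype.sum_option, dirac, this])
  linarith

/-- Accept if one of `r` runs outputs `some true`. -/
theorem exists_repeat {T : ℕ} {p : Input ι α → Option Bool → ℝ} (hp : 𝓜.Realizes T p) (r : ℕ) :
    ∃ p' : Input ι α → Bool → ℝ, 𝓜.Realizes (r * T) p' ∧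
      ∀ x, p' x true = 1 - (1 - p x (some true)) ^ r := by
  induction r with
  | zero =>
    refine ⟨fun _ => dirac false, by simpa using 𝓜.pure _, fun x => ?_⟩
    simp [dirac]
  | succ r ih =>
    obtain ⟨p', hp', h⟩ := ih
    have hb := 𝓜.bind hp fun o => 𝓜.map hp' fun b => b || decide (o = some true)
    rw [show T + r * T = (r + 1) * T by ring] at hb
    refine ⟨_, hb, ?_⟩
    · intro x
      have hs := 𝓜.sum_eq_one hp x
      have hs' := 𝓜.sum_eq_one hp' x
      rw [Fintype.sum_bool] at hs'
      rw [Fintype.sum_option, Fintype.sum_bool] at hs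
      simp [Fintype.sum_option, dirac]
      rw [hs', h x, pow_succ]
      have e : p x (some false) = 1 - p x none - p x (some true) := by linarith
      rw [e]
      ring

/-- `pullback` along an index map that preserves alphabets only propositionally. -/
theorem pullback_cast {ι' : Type} {α' : ι' → ℕ} (σ : ι' → ι) (h : ∀ i, α (σ i) = α' i) {T : ℕ}
    {p : Input ι' α' → L → ℝ} (hp : 𝓜.Realizes T p) :
    𝓜.Realizes T fun x : Input ι α => p fun i => Fin.cast (h i) (x (σ i)) := by
  obtain rfl : (fun i => α (σ i)) = α' := funext h
  exact 𝓜.pullback σ hp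

end QueryModel

end QC

namespace QC

/-! ### The cheat sheet algorithm -/

namespace QueryModel

variable (𝓜 : QueryModel) {ι : Type} {α : ι → ℕ}

/-- Checking one certificate: `r` runs of the zero-error algorithm on the `i`-th copy and its
certificate in cell `ℓ`, and a query to the first bit of that certificate. -/
theorem verify_copy {c k : ℕ} (hk : 0 < k) [Nonempty (Input (CSIdx ι c k) (csAlphabet α c k))]
    {T : ℕ} {p : Input (CertIdx ι k) (certAlphabet α k) → Option Bool → ℝ}
    (hp : 𝓜.Realizes T p) (r : ℕ) (ℓ : Fin (2 ^ c)) (i : Fin c) (b : Bool) :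
    ∃ v : Input (CSIdx ι c k) (csAlphabet α c k) → Bool → ℝ, 𝓜.Realizes (1 + r * T) v ∧
      ∀ z, v z true = if csY z ℓ i ⟨0, hk⟩ = (if b then 1 else 0) then
        1 - (1 - p (fun j => Sum.casesOn (motive := fun j => Fin (certAlphabet α k j)) j
          (csX z i) (csY z ℓ i)) (some true)) ^ r else 0 := by
  obtain ⟨z₀⟩ := ‹Nonempty (Input (CSIdx ι c k) (csAlphabet α c k))›
  obtain ⟨q, hq, hqt⟩ := 𝓜.exists_repeat (𝓜.pullback_cast (α := csAlphabet α c k)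
    (Sum.elim (fun j => Sum.inl (i, j)) fun j => Sum.inr (ℓ, i, j))
    (by rintro (j | j) <;> rfl) hp) r
  let accept : Fin 2 → Bool → Bool := fun a t => t && decide (a = if b then 1 else 0)
  have h := 𝓜.bind (𝓜.query z₀ (Sum.inr (ℓ, i, ⟨0, hk⟩))) fun a => 𝓜.map hq (accept a)
  refine ⟨_, h, fun z => ?_⟩
  dsimp only
  rw [sum_dirac_mul, Fintype.sum_bool, hqt z]
  change _ * dirac (true && decide (csY z ℓ i ⟨0, hk⟩ = _)) true +
    _ * dirac (false && decide (csY z ℓ i ⟨0, hk⟩ = _)) true = _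
  have e : (fun j => Fin.cast (by rcases j with j | j <;> rfl)
      (z ((Sum.elim (fun j => Sum.inl (i, j)) fun j => Sum.inr (ℓ, i, j) :
        CertIdx ι k → CSIdx ι c k) j)) : Input (CertIdx ι k) (certAlphabet α k)) =
      fun j => Sum.casesOn (motive := fun j => Fin (certAlphabet α k j)) j
          (csX z i) (csY z ℓ i) := by
    funext j
    rcases j with j | j <;> rfl
  rw [e]
  by_cases hz : csY z ℓ i ⟨0, hk⟩ = (if b then 1 else 0)
  · simp [hz, dirac]
  · simp [hz, dirac]

theorem cheatSheet_algorithm {c k : ℕ} (hk : 0 < k)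
    [Nonempty (Input (CSIdx ι c k) (csAlphabet α c k))]
    {f : PartialFn ι α} {φ : Input ι α → (Fin k → Fin 2) → Bool} (hφ : IsCertifying hk f φ)
    {S T : ℕ} {p : Input ι α → Option Bool → ℝ}
    {q : Input (CertIdx ι k) (certAlphabet α k) → Option Bool → ℝ}
    (hp : 𝓜.Realizes S p) (hpf : ∀ x b, f x = some b → 2 / 3 ≤ p x (some b))
    (hq : 𝓜.Realizes T q)
    (hqφ : ∀ z b, certFn φ z = some b → q z (some !b) = 0 ∧ q z none ≤ 1 / 2)
    {m r : ℕ} (hm : 8 * c ≤ 2 ^ m) (hr : 8 * c ≤ 2 ^ r) :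
    ∃ a : Input (CSIdx ι c k) (csAlphabet α c k) → Option Bool → ℝ,
      𝓜.Realizes (c * (27 ^ m * S) + c * (1 + r * T)) a ∧
      (∀ z, cheatSheet c f φ z = some true → 2 / 3 ≤ a z (some true)) ∧
      ∀ z, cheatSheet c f φ z = some false → a z (some true) = 0 := by
  classical
  obtain ⟨p', hp', hp's⟩ := 𝓜.amplify hp m
  have hfirst := 𝓜.pi (m := c) fun i => 𝓜.pullback (α := csAlphabet α c k)
    (fun j => Sum.inl (i, j)) hp'
  choose v hv hvt using fun (bvec : Fin c → Bool) (i : Fin c) =>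
    𝓜.verify_copy (c := c) hk hq r (binToFin c bvec) i (bvec i)
  have h := 𝓜.bind hfirst fun bvec => 𝓜.map (𝓜.pi (hv bvec))
    fun w => some (decide (w = fun _ => true))
  have hval : ∀ z bvec, ∑ w : Fin c → Bool, (∏ i, v bvec i z (w i)) *
      dirac (some (decide (w = fun _ => true))) (some true) = ∏ i, v bvec i z true := by
    intro z bvec
    rw [Finset.sum_eq_single fun _ => true]
    · simp [dirac]
    · intro w _ hw
      simp [dirac, hw]
    · simp
  set ζ : Input (CSIdx ι c k) (csAlphabet α c k) → (Fin c → Bool) → Fin c →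
      Input (CertIdx ι k) (certAlphabet α k) := fun z bvec i j =>
    Sum.casesOn (motive := fun j => Fin (certAlphabet α k j)) j
      (csX z i) (csY z (binToFin c bvec) i) with hζ
  have hcert : ∀ z bvec i, certFn φ (ζ z bvec i) =
      some (φ (csX z i) (csY z (binToFin c bvec) i)) := fun z bvec i => rfl
  refine ⟨_, h, fun z hz => ?_, fun z hz => ?_⟩
  · have hcond : CSCond f φ z := by
      simpa [cheatSheet, ofProp] using hz
    obtain ⟨bvec, hb, hy⟩ := hcond
    simp_rw [hval]
    have hnn : ∀ b' ∈ (Finset.univ : Finset (Fin c → Bool)),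
        0 ≤ (∏ i, p' (fun j => z (Sum.inl (i, j))) (b' i)) * ∏ i, v b' i z true := fun b' _ =>
      mul_nonneg (Finset.prod_nonneg fun i _ => 𝓜.nonneg hp' _ _)
        (Finset.prod_nonneg fun i _ => 𝓜.nonneg (hv b' i) _ _)
    refine le_trans ?_ (Finset.single_le_sum hnn (Finset.mem_univ bvec))
    have hsmall : ∀ e : ℕ, 8 * c ≤ 2 ^ e → (c : ℝ) * (1 / 2) ^ e ≤ 1 / 8 := by
      intro e he
      have he' : (8 : ℝ) * c ≤ 2 ^ e := by exact_mod_cast he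
      rw [div_pow, one_pow, mul_one_div, div_le_iff₀ (by positivity)]
      linarith
    have hprod : ∀ (e : ℕ) (g : Fin c → ℝ), 8 * c ≤ 2 ^ e → (∀ i, 1 - (1 / 2) ^ e ≤ g i) →
        7 / 8 ≤ ∏ i, g i := by
      intro e g he hg
      have h1 : (1 : ℝ) - (1 / 2) ^ e ≥ 0 := by
        have : ((1 : ℝ) / 2) ^ e ≤ 1 := pow_le_one₀ (by norm_num) (by norm_num)
        linarith
      calc (7 : ℝ) / 8 ≤ 1 + (c : ℝ) * -(1 / 2) ^ e := by linarith [hsmall e he]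
        _ ≤ (1 + -(1 / 2) ^ e) ^ c := one_add_mul_le_pow (by linarith) c
        _ = ∏ _i : Fin c, (1 + -((1 : ℝ) / 2) ^ e) := by simp
        _ ≤ ∏ i, g i := Finset.prod_le_prod (fun i _ => by linarith)
            fun i _ => by linarith [hg i]
    have h1 := hprod m (fun i => p' (fun j => z (Sum.inl (i, j))) (bvec i)) hm
      fun i => hp's _ _ (hpf _ _ (hb i))
    have h2 := hprod r (fun i => v bvec i z true) hr fun i => by
      have hbit : csY z (binToFin c bvec) i ⟨0, hk⟩ = if bvec i then 1 else 0 := by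
        by_contra hne
        have := hφ.2.1 _ _ _ (hb i) hne
        rw [hy i] at this
        cases this
      rw [hvt, if_pos hbit]
      obtain ⟨hz0, hzn⟩ := hqφ (ζ z bvec i) true (by rw [hcert, hy i])
      have hs := 𝓜.sum_eq_one hq (ζ z bvec i)
      have hle := 𝓜.nonneg hq (ζ z bvec i)
      have hsome : 1 / 2 ≤ q (ζ z bvec i) (some true) := by
        rw [Fintype.sum_option, Fintype.sum_bool] at hs
        simp only [Bool.not_true] at hz0
        linarith
      have hone : q (ζ z bvec i) (some true) ≤ 1 := by
        rw [← hs]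
        exact Finset.single_le_sum (fun l _ => hle l) (Finset.mem_univ _)
      have := pow_le_pow_left₀ (by linarith) (show 1 - q (ζ z bvec i) (some true) ≤ 1 / 2 by
        linarith) r
      linarith
    nlinarith
  · have hcond : ¬ CSCond f φ z := by
      simpa [cheatSheet, ofProp] using hz
    simp_rw [hval]
    refine Finset.sum_eq_zero fun bvec _ => mul_eq_zero_of_right _ ?_
    by_contra hne
    rw [← ne_eq, Finset.prod_ne_zero_iff] at hne
    have hall : ∀ i, csY z (binToFin c bvec) i ⟨0, hk⟩ = (if bvec i then 1 else 0) ∧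
        φ (csX z i) (csY z (binToFin c bvec) i) = true := by
      intro i
      have hi := hne i (Finset.mem_univ i)
      rw [hvt] at hi
      by_cases hbit : csY z (binToFin c bvec) i ⟨0, hk⟩ = if bvec i then 1 else 0
      · rw [if_pos hbit] at hi
        refine ⟨hbit, ?_⟩
        by_contra hφf
        rw [Bool.not_eq_true] at hφf
        have := (hqφ (ζ z bvec i) false (by rw [hcert, hφf])).1
        apply hi
        rw [show q _ (some true) = 0 from this]
        simp
      · rw [if_neg hbit] at hi
        exact absurd rfl hi
    refine hcond ⟨bvec, fun i => ?_, fun i => (hall i).2⟩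
    obtain ⟨hbit, hacc⟩ := hall i
    cases hf : f (csX z i) with
    | none => rw [hφ.1 _ _ hf] at hacc; cases hacc
    | some b =>
      by_contra hne'
      rw [hφ.2.1 _ _ b hf] at hacc
      · cases hacc
      · rw [hbit]
        cases b <;> cases hbv : bvec i <;> simp_all

end QueryModel

end QC

namespace QC

/-! ### Randomized algorithms form a query model -/

namespace DTree

variable {ι : Type} {α : ι → ℕ} {L L' : Type}

/-- Replace every leaf `l` of a decision tree by the tree `g l`. -/
def graft : DTree ι α L → (L → DTree ι α L') → DTree ι α L'
  | leaf l, g => g l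
  | node i child, g => node i fun a => graft (child a) g

theorem eval_graft (t : DTree ι α L) (g : L → DTree ι α L') (x : Input ι α) :
    (t.graft g).eval x = (g (t.eval x)).eval x := by
  induction t with
  | leaf l => rfl
  | node i child ih => exact ih (x i)

theorem depth_graft_le (t : DTree ι α L) (g : L → DTree ι α L') {d : ℕ}
    (hg : ∀ l, (g l).depth ≤ d) : (t.graft g).depth ≤ t.depth + d := by
  induction t with
  | leaf l => simpa [graft, depth] using hg l
  | node i child ih =>
    simp only [graft, depth]
    have : (Finset.univ.sup fun a => ((child a).graft g).depth) ≤
        (Finset.univ.sup fun a => (child a).depth) + d :=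
      Finset.sup_le fun a _ => (ih a).trans
        (Nat.add_le_add_right (Finset.le_sup (f := fun a => (child a).depth)
          (Finset.mem_univ a)) d)
    omega

/-- Rename the queried indices of a decision tree along `σ`. -/
def reindex {ι' : Type} (σ : ι' → ι) : DTree ι' (fun i => α (σ i)) L → DTree ι α L
  | leaf l => leaf l
  | node i child => node (σ i) fun a => reindex σ (child a)

theorem eval_reindex {ι' : Type} (σ : ι' → ι) (t : DTree ι' (fun i => α (σ i)) L)
    (x : Input ι α) : (t.reindex σ).eval x = t.eval fun i => x (σ i) := by
  induction t with
  | leaf l => rfl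
  | node i child ih => exact ih (x (σ i))

theorem depth_reindex {ι' : Type} (σ : ι' → ι) (t : DTree ι' (fun i => α (σ i)) L) :
    (t.reindex σ).depth = t.depth := by
  induction t with
  | leaf l => rfl
  | node i child ih => simp only [reindex, depth, ih]

theorem finite_depth_le [Finite ι] [Finite L] (d : ℕ) :
    Finite {t : DTree ι α L // t.depth ≤ d} := by
  induction d with
  | zero =>
    refine Finite.of_surjective (fun l : L => (⟨leaf l, le_rfl⟩ : {t : DTree ι α L // t.depth ≤ 0})) ?_
    rintro ⟨t | ⟨i, child⟩, h⟩
    · exact ⟨t, rfl⟩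
    · simp [depth] at h
  | succ d ih =>
    refine Finite.of_surjective
      (fun s : L ⊕ Σ i, Fin (α i) → {t : DTree ι α L // t.depth ≤ d} =>
        (⟨Sum.elim leaf (fun p => node p.1 fun a => (p.2 a).1) s, ?_⟩ :
          {t : DTree ι α L // t.depth ≤ d + 1})) ?_
    · rcases s with l | ⟨i, g⟩
      · simp [depth]
      · simp only [Sum.elim_inr, depth, Nat.add_le_add_iff_right]
        exact Finset.sup_le fun a _ => (g a).2
    · rintro ⟨t | ⟨i, child⟩, h⟩
      · exact ⟨Sum.inl t, rfl⟩
      · simp only [depth, Nat.add_le_add_iff_right, Finset.sup_le_iff] at h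
        exact ⟨Sum.inr ⟨i, fun a => ⟨child a, h a (Finset.mem_univ a)⟩⟩, rfl⟩

end DTree

/-- Output distributions of finite mixtures of decision trees of depth at most `T`. -/
def RandRealizes {ι : Type} {α : ι → ℕ} {L : Type} (T : ℕ) (p : Input ι α → L → ℝ) : Prop :=
  ∃ (Ω : Type) (_ : Fintype Ω) (w : Ω → ℝ) (t : Ω → DTree ι α L),
    (∀ ω, 0 ≤ w ω) ∧ ∑ ω, w ω = 1 ∧ (∀ ω, (t ω).depth ≤ T) ∧
    ∀ x l, p x l = ∑ ω, w ω * dirac ((t ω).eval x) l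

theorem sum_prod_mul_apply {L : Type} [Fintype L] [DecidableEq L] {Ω : L → Type}
    [∀ l, Fintype (Ω l)]
    (w : ∀ l, Ω l → ℝ) (hw : ∀ l, ∑ ω, w l ω = 1) (l₀ : L) (F : Ω l₀ → ℝ) :
    ∑ g : ∀ l, Ω l, (∏ l, w l (g l)) * F (g l₀) = ∑ ω, w l₀ ω * F ω := by
  have h := Finset.prod_univ_sum (fun l => (Finset.univ : Finset (Ω l)))
    fun l ω => w l ω * if h : l = l₀ then F (h ▸ ω) else 1
  rw [Fintype.piFinset_univ] at h
  have h1 : ∀ g : ∀ l, Ω l, (∏ l, (w l (g l) * if h : l = l₀ then F (h ▸ g l) else 1)) =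
      (∏ l, w l (g l)) * F (g l₀) := by
    intro g
    rw [Finset.prod_mul_distrib, Finset.prod_eq_single l₀ (f := fun l => dite _ _ _)]
    · simp
    · intro l _ hl
      simp [hl]
    · simp
  rw [Finset.prod_eq_single l₀] at h
  · simp only [dif_pos] at h
    rw [h]
    exact Finset.sum_congr rfl fun g _ => (h1 g).symm
  · intro l _ hl
    simp [hl, hw]
  · simp

/-- The query model of randomized algorithms. -/
def randModel : QueryModel where
  Realizes := RandRealizes
  nonneg := by
    rintro ι α L T p ⟨Ω, _, w, t, hw, -, -, hp⟩ x l
    rw [hp]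
    refine Finset.sum_nonneg fun ω _ => mul_nonneg (hw ω) ?_
    unfold dirac
    split_ifs <;> norm_num
  sum_eq_one := by
    rintro ι α L _ T p ⟨Ω, _, w, t, -, hw, -, hp⟩ x
    simp_rw [hp]
    rw [Finset.sum_comm]
    simp_rw [← Finset.mul_sum, sum_dirac, mul_one, hw]
  pure := fun l₀ =>
    ⟨Unit, inferInstance, fun _ => 1, fun _ => .leaf l₀, by simp, by simp,
      by simp [DTree.depth], fun x l => by simp [DTree.eval]⟩
  query := fun _ i =>
    ⟨Unit, inferInstance, fun _ => 1, fun _ => .node i .leaf, by simp, by simp,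
      by simp [DTree.depth], fun x l => by simp [DTree.eval]⟩
  bind := by
    classical
    rintro ι α L L' _ S T p q ⟨Ω, _, w, t, hw, hw1, hd, hp⟩ hq
    choose Ω' inst w' t' hw' hw1' hd' hq using hq
    refine ⟨Ω × ∀ l, Ω' l, inferInstance, fun o => w o.1 * ∏ l, w' l (o.2 l),
      fun o => (t o.1).graft fun l => t' l (o.2 l), ?_, ?_, ?_, ?_⟩
    · exact fun o => mul_nonneg (hw _) (Finset.prod_nonneg fun l _ => hw' _ _)
    · rw [Fintype.sum_prod_type]
      simp_rw [← Finset.mul_sum]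
      have : ∑ g : ∀ l, Ω' l, ∏ l, w' l (g l) = 1 := by
        rw [← Fintype.piFinset_univ, ← Finset.prod_univ_sum]
        simp [hw1']
      rw [this]
      simpa using hw1
    · exact fun o => (DTree.depth_graft_le _ _ fun l => hd' l _).trans
        (Nat.add_le_add_right (hd _) _)
    · intro x l'
      rw [Fintype.sum_prod_type]
      simp_rw [DTree.eval_graft, mul_assoc, ← Finset.mul_sum]
      have : ∀ l, ∑ g : ∀ l, Ω' l, (∏ l, w' l (g l)) * dirac ((t' l (g l)).eval x) l' =
          q l x l' := fun l => by
        rw [hq, sum_prod_mul_apply w' hw1' l fun ω => dirac ((t' l ω).eval x) l']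
      simp_rw [this, hp, Finset.sum_mul]
      rw [Finset.sum_comm]
      refine Finset.sum_congr rfl fun ω _ => ?_
      simp_rw [mul_assoc, ← Finset.mul_sum, sum_dirac_mul]
  pullback := by
    rintro ι ι' α σ L T p ⟨Ω, _, w, t, hw, hw1, hd, hp⟩
    refine ⟨Ω, inferInstance, w, fun ω => (t ω).reindex σ, hw, hw1, fun ω => ?_, fun x l => ?_⟩
    · rw [DTree.depth_reindex]
      exact hd ω
    · simp_rw [DTree.eval_reindex]
      exact hp _ _

theorem RandRealizes.of_pmf {ι : Type} [Finite ι] {α : ι → ℕ} {L : Type} [Finite L] {d : ℕ}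
    (μ : PMF (DTree ι α L)) (hμ : ∀ t ∈ μ.support, t.depth ≤ d) :
    RandRealizes d fun x l => (μ.toOuterMeasure {t | t.eval x = l}).toReal := by
  classical
  have := DTree.finite_depth_le (α := α) (ι := ι) (L := L) d
  have := Fintype.ofFinite {t : DTree ι α L // t.depth ≤ d}
  have key : ∀ s : Set (DTree ι α L), (μ.toOuterMeasure s).toReal =
      ∑ t : {t : DTree ι α L // t.depth ≤ d}, (s.indicator μ t.1).toReal := by
    intro s
    rw [PMF.toOuterMeasure_apply, ← ENNReal.toReal_sum, ← tsum_fintype (L := .unconditional _)]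
    · congr 1
      exact (tsum_subtype_eq_of_support_subset (s := {t : DTree ι α L | t.depth ≤ d})
        (f := s.indicator μ) fun t ht => hμ t (by
          rw [PMF.mem_support_iff]
          intro h0
          apply ht
          simp [Set.indicator, h0])).symm
    · intro t _
      refine ne_top_of_le_ne_top (μ.apply_ne_top t.1) ?_
      exact Set.indicator_le_self _ _ _
  refine ⟨{t : DTree ι α L // t.depth ≤ d}, inferInstance, fun t => (μ t.1).toReal,
    fun t => t.1, fun _ => ENNReal.toReal_nonneg, ?_, fun t => t.2, fun x l => ?_⟩
  · have h := key Set.univ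
    have h1 : μ.toOuterMeasure Set.univ = 1 :=
      (PMF.toOuterMeasure_apply_eq_one_iff μ _).2 (Set.subset_univ _)
    rw [h1] at h
    simpa using h.symm
  · simp only [key]
    refine Finset.sum_congr rfl fun t _ => ?_
    by_cases ht : t.1.eval x = l
    · simp [ht, dirac]
    · simp [ht, dirac, Ne.symm ht]

theorem RandRealizes.exists_pmf {ι : Type} {α : ι → ℕ} {L : Type} {d : ℕ}
    {p : Input ι α → L → ℝ} (hp : RandRealizes d p) :
    ∃ μ : PMF (DTree ι α L), (∀ t ∈ μ.support, t.depth ≤ d) ∧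
      ∀ x l, μ.toOuterMeasure {t | t.eval x = l} = ENNReal.ofReal (p x l) := by
  classical
  obtain ⟨Ω, _, w, t, hw, hw1, hd, hp⟩ := hp
  have h1 : ∑ ω, ENNReal.ofReal (w ω) = 1 := by
    rw [← ENNReal.ofReal_sum_of_nonneg fun ω _ => hw ω, hw1, ENNReal.ofReal_one]
  refine ⟨(PMF.ofFintype _ h1).map t, ?_, fun x l => ?_⟩
  · intro s hs
    obtain ⟨ω, -, rfl⟩ := (PMF.mem_support_map_iff _ _ _).1 hs
    exact hd ω
  · rw [PMF.toOuterMeasure_map_apply, PMF.toOuterMeasure_apply,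
      tsum_fintype (L := .unconditional _), hp, ENNReal.ofReal_sum_of_nonneg]
    · refine Finset.sum_congr rfl fun ω _ => ?_
      by_cases hω : (t ω).eval x = l
      · simp [hω, dirac]
      · simp [hω, dirac, Ne.symm hω]
    · intro ω _
      refine mul_nonneg (hw ω) ?_
      unfold dirac
      split_ifs <;> norm_num

end QC

namespace QC

/-! ### State families reachable by quantum queries -/

/-- A linear map preserving the sum of squared moduli, as a linear isometry. -/
noncomputable def isometryOfSum {τ σ : Type} [Fintype τ] [Fintype σ]
    (f : EuclideanSpace ℂ τ →ₗ[ℂ] EuclideanSpace ℂ σ)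
    (hf : ∀ v, ∑ j, ‖f v j‖ ^ 2 = ∑ j, ‖v j‖ ^ 2) :
    EuclideanSpace ℂ τ →ₗᵢ[ℂ] EuclideanSpace ℂ σ where
  toLinearMap := f
  norm_map' v := by rw [EuclideanSpace.norm_eq, EuclideanSpace.norm_eq, hf]

@[simp]
theorem isometryOfSum_apply {τ σ : Type} [Fintype τ] [Fintype σ]
    (f : EuclideanSpace ℂ τ →ₗ[ℂ] EuclideanSpace ℂ σ)
    (hf : ∀ v, ∑ j, ‖f v j‖ ^ 2 = ∑ j, ‖v j‖ ^ 2) (v : EuclideanSpace ℂ τ) :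
    isometryOfSum f hf v = f v := rfl

theorem sum_norm_sq_map {τ σ : Type} [Fintype τ] [Fintype σ]
    (V : EuclideanSpace ℂ τ →ₗᵢ[ℂ] EuclideanSpace ℂ σ) (v : EuclideanSpace ℂ τ) :
    ∑ j, ‖V v j‖ ^ 2 = ∑ j, ‖v j‖ ^ 2 := by
  rw [← EuclideanSpace.norm_sq_eq, ← EuclideanSpace.norm_sq_eq, V.norm_map]

/-- Block-diagonal isometry between spaces of functions on sigma types. -/
noncomputable def blockIsometry {τ : Type} [Fintype τ] {σ σ' : τ → Type} [∀ j, Fintype (σ j)]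
    [∀ j, Fintype (σ' j)] (V : ∀ j, EuclideanSpace ℂ (σ j) →ₗᵢ[ℂ] EuclideanSpace ℂ (σ' j)) :
    EuclideanSpace ℂ (Σ j, σ j) →ₗᵢ[ℂ] EuclideanSpace ℂ (Σ j, σ' j) :=
  isometryOfSum
    { toFun := fun v => WithLp.toLp 2 fun s => V s.1 (WithLp.toLp 2 fun b => v ⟨s.1, b⟩) s.2
      map_add' := fun u v => by
        ext s
        simp only [PiLp.add_apply]
        rw [← PiLp.add_apply, ← map_add]
        rfl
      map_smul' := fun a v => by
        ext s
        simp only [PiLp.smul_apply, RingHom.id_apply]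
        rw [← PiLp.smul_apply, ← map_smul]
        rfl }
    (fun v => by
      rw [Fintype.sum_sigma, Fintype.sum_sigma]
      refine Finset.sum_congr rfl fun j _ => ?_
      exact sum_norm_sq_map (V j) (WithLp.toLp 2 fun b => v ⟨j, b⟩))

theorem blockIsometry_apply {τ : Type} [Fintype τ] {σ σ' : τ → Type} [∀ j, Fintype (σ j)]
    [∀ j, Fintype (σ' j)] (V : ∀ j, EuclideanSpace ℂ (σ j) →ₗᵢ[ℂ] EuclideanSpace ℂ (σ' j))
    (v : EuclideanSpace ℂ (Σ j, σ j)) (s : Σ j, σ' j) :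
    blockIsometry V v s = V s.1 (WithLp.toLp 2 fun b => v ⟨s.1, b⟩) s.2 := rfl

/-- The isometry adjoining to each basis vector `j` the unit vector `v j`. -/
noncomputable def adjoinIsometry {τ : Type} [Fintype τ] {σ : τ → Type} [∀ j, Fintype (σ j)]
    (v : ∀ j, EuclideanSpace ℂ (σ j)) (hv : ∀ j, ‖v j‖ = 1) :
    EuclideanSpace ℂ τ →ₗᵢ[ℂ] EuclideanSpace ℂ (Σ j, σ j) :=
  isometryOfSum
    { toFun := fun u => WithLp.toLp 2 fun s => u s.1 * v s.1 s.2
      map_add' := fun u w => by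
        ext s
        simp [add_mul]
      map_smul' := fun a u => by
        ext s
        simp [mul_assoc] }
    (fun u => by
      rw [Fintype.sum_sigma]
      refine Finset.sum_congr rfl fun j _ => ?_
      have h : ∑ b, ‖v j b‖ ^ 2 = 1 := by rw [← EuclideanSpace.norm_sq_eq, hv]; norm_num
      simp [mul_pow, ← Finset.mul_sum, h])

/-- Addition of a fixed element as a permutation of `Fin n`. -/
def finAddRight {n : ℕ} (b : Fin n) : Fin n ≃ Fin n where
  toFun a := a + b
  invFun a := a - b
  left_inv a := by
    have : NeZero n := ⟨by have := b.2; omega⟩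
    exact add_sub_cancel_right a b
  right_inv a := by
    have : NeZero n := ⟨by have := b.2; omega⟩
    exact sub_add_cancel a b

variable {ι : Type} {α : ι → ℕ}

/-- The query permutation on a register whose query position is determined by `q`. -/
def oraclePerm {κ : Type} (q : κ → ι) (x : Input ι α) :
    (Σ w, Fin (α (q w))) ≃ Σ w, Fin (α (q w)) :=
  Equiv.sigmaCongrRight fun w => finAddRight (x (q w))

/-- The query unitary on a register whose query position is determined by `q`. -/
noncomputable def oracleIsometry {κ : Type} [Fintype κ] (q : κ → ι) (x : Input ι α) :
    EuclideanSpace ℂ (Σ w, Fin (α (q w))) ≃ₗᵢ[ℂ] EuclideanSpace ℂ (Σ w, Fin (α (q w))) :=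
  LinearIsometryEquiv.piLpCongrLeft 2 ℂ ℂ (oraclePerm q x)

theorem oracleIsometry_apply {κ : Type} [Fintype κ] (q : κ → ι) (x : Input ι α)
    (v : EuclideanSpace ℂ (Σ w, Fin (α (q w)))) (s : Σ w, Fin (α (q w))) :
    oracleIsometry q x v s = v ((oraclePerm q x).symm s) := rfl

/-- `Reach T ψ`: the family of states `ψ x` is prepared by a `T`-query quantum algorithm,
with isometries between the queries. -/
def Reach : ℕ → ∀ {τ : Type} [Fintype τ], (Input ι α → EuclideanSpace ℂ τ) → Prop
  | 0, _, _, ψ => ∃ v, ‖v‖ = 1 ∧ ψ = fun _ => v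
  | T + 1, τ, _, ψ => ∃ (κ : Type) (_ : Fintype κ) (q : κ → ι)
      (χ : Input ι α → EuclideanSpace ℂ (Σ w, Fin (α (q w))))
      (V : EuclideanSpace ℂ (Σ w, Fin (α (q w))) →ₗᵢ[ℂ] EuclideanSpace ℂ τ),
      Reach T χ ∧ ∀ x, ψ x = V (oracleIsometry q x (χ x))

namespace Reach

theorem norm_eq_one {T : ℕ} : ∀ {τ : Type} [Fintype τ] {ψ : Input ι α → EuclideanSpace ℂ τ},
    Reach T ψ → ∀ x, ‖ψ x‖ = 1 := by
  induction T with
  | zero =>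
    rintro τ _ ψ ⟨v, hv, rfl⟩ x
    exact hv
  | succ T ih =>
    rintro τ _ ψ ⟨κ, _, q, χ, V, hχ, h⟩ x
    rw [h, V.norm_map, LinearIsometryEquiv.norm_map, ih hχ]

theorem isometry {T : ℕ} {τ σ : Type} [Fintype τ] [Fintype σ]
    {ψ : Input ι α → EuclideanSpace ℂ τ} (hψ : Reach T ψ)
    (V : EuclideanSpace ℂ τ →ₗᵢ[ℂ] EuclideanSpace ℂ σ) : Reach T fun x => V (ψ x) := by
  cases T with
  | zero =>
    obtain ⟨v, hv, rfl⟩ := hψ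
    exact ⟨V v, by rw [V.norm_map, hv], rfl⟩
  | succ T =>
    obtain ⟨κ, _, q, χ, V', hχ, h⟩ := hψ
    exact ⟨κ, inferInstance, q, χ, V.comp V', hχ, fun x => congrArg V (h x)⟩

/-- Running, on outcome `o j` of the first algorithm, the algorithm for that outcome. -/
theorem sigma {L : Type} {S : ℕ} {τ : Type} [Fintype τ] {ψ : Input ι α → EuclideanSpace ℂ τ}
    (hψ : Reach S ψ) (o : τ → L) {T : ℕ} : ∀ {σ : L → Type} [∀ l, Fintype (σ l)]
    {χ : ∀ l, Input ι α → EuclideanSpace ℂ (σ l)}, (∀ l, Reach T (χ l)) →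
    Reach (S + T) fun x =>
      WithLp.toLp 2 fun s : Σ j, σ (o j) => ψ x s.1 * χ (o s.1) x s.2 := by
  induction T with
  | zero =>
    intro σ _ χ hχ
    choose v hv hχ using hχ
    have key := hψ.isometry (adjoinIsometry (fun j => v (o j)) fun j => hv (o j))
    have e : (fun x => adjoinIsometry (fun j => v (o j)) (fun j => hv (o j)) (ψ x)) = fun x =>
        WithLp.toLp 2 fun s : Σ j, σ (o j) => ψ x s.1 * χ (o s.1) x s.2 := by
      funext x
      ext s
      simp [adjoinIsometry, hχ]
    rw [e] at key
    exact key
  | succ T ih =>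
    intro σ _ χ hχ
    choose κ inst q χ' V hχ' h using hχ
    have h1 := (ih hχ').isometry (LinearIsometryEquiv.piLpCongrLeft 2 ℂ ℂ
      (Equiv.sigmaAssoc (fun j w => Fin (α (q (o j) w)))).symm).toLinearIsometry
    refine ⟨Σ j, κ (o j), inferInstance, fun s => q (o s.1) s.2, _,
      (blockIsometry fun j => V (o j)).comp (LinearIsometryEquiv.piLpCongrLeft 2 ℂ ℂ
      (Equiv.sigmaAssoc (fun j w => Fin (α (q (o j) w))))).toLinearIsometry, h1, fun x => ?_⟩
    ext s
    rw [LinearIsometry.coe_comp, Function.comp_apply, blockIsometry_apply]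
    simp only [h]
    have : (WithLp.toLp 2 fun b => ((LinearIsometryEquiv.piLpCongrLeft 2 ℂ ℂ
        (Equiv.sigmaAssoc (fun j w => Fin (α (q (o j) w))))).toLinearIsometry
        (oracleIsometry (fun s : Σ j, κ (o j) => q (o s.1) s.2) x
          ((LinearIsometryEquiv.piLpCongrLeft 2 ℂ ℂ
          (Equiv.sigmaAssoc (fun j w => Fin (α (q (o j) w)))).symm).toLinearIsometry
          (WithLp.toLp 2 fun s => ψ x s.1 * χ' (o s.1) x s.2)))) ⟨s.1, b⟩) =
        ψ x s.1 • oracleIsometry (q (o s.1)) x (χ' (o s.1) x) := by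
      ext b
      rfl
    rw [this, map_smul]
    rfl

theorem pullback {ι' : Type} (σ : ι' → ι) {T : ℕ} : ∀ {τ : Type} [Fintype τ]
    {ψ : Input ι' (fun i => α (σ i)) → EuclideanSpace ℂ τ}, Reach T ψ →
    Reach T fun x : Input ι α => ψ fun i => x (σ i) := by
  induction T with
  | zero =>
    rintro τ _ ψ ⟨v, hv, rfl⟩
    exact ⟨v, hv, rfl⟩
  | succ T ih =>
    rintro τ _ ψ ⟨κ, _, q, χ, V, hχ, h⟩
    exact ⟨κ, inferInstance, fun w => σ (q w), _, V, ih hχ, fun x => h _⟩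

end Reach

/-! ### Quantum algorithms form a query model -/

/-- Output distributions of measurements of states reachable with `T` quantum queries. -/
def QuantRealizes {L : Type} (T : ℕ) (p : Input ι α → L → ℝ) : Prop :=
  ∃ (τ : Type) (_ : Fintype τ) (ψ : Input ι α → EuclideanSpace ℂ τ) (o : τ → L),
    Reach T ψ ∧ ∀ x l, p x l = ∑ j, ‖ψ x j‖ ^ 2 * dirac (o j) l

/-- The query model of quantum algorithms. -/
noncomputable def quantModel : QueryModel where
  Realizes := QuantRealizes
  nonneg := by
    rintro ι α L T p ⟨τ, _, ψ, o, -, hp⟩ x l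
    rw [hp]
    refine Finset.sum_nonneg fun j _ => mul_nonneg (by positivity) ?_
    unfold dirac
    split_ifs <;> norm_num
  sum_eq_one := by
    rintro ι α L _ T p ⟨τ, _, ψ, o, hψ, hp⟩ x
    simp_rw [hp]
    rw [Finset.sum_comm]
    simp_rw [← Finset.mul_sum, sum_dirac, mul_one]
    rw [← EuclideanSpace.norm_sq_eq, hψ.norm_eq_one]
    norm_num
  pure := fun l₀ =>
    ⟨Unit, inferInstance, fun _ => EuclideanSpace.single () 1, fun _ => l₀,
      ⟨_, by simp, rfl⟩, fun x l => by simp⟩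
  query := fun {ι} {α} x₀ i => by
    classical
    have : NeZero (α i) := ⟨by have := (x₀ i).2; omega⟩
    refine ⟨Σ _ : Unit, Fin (α i), inferInstance,
      fun x => EuclideanSpace.single ⟨(), x i⟩ 1, fun s => s.2,
      ⟨Unit, inferInstance, fun _ => i, fun _ => EuclideanSpace.single ⟨(), 0⟩ 1,
        LinearIsometry.id, ⟨_, by simp, rfl⟩, fun x => ?_⟩, fun x l => ?_⟩
    · have e : oraclePerm (α := α) (fun _ : Unit => i) x ⟨(), 0⟩ = ⟨(), x i⟩ := by
        simp [oraclePerm, finAddRight]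
      ext s
      rw [LinearIsometry.id_apply, oracleIsometry_apply]
      simp only [PiLp.single_apply]
      simp only [Equiv.symm_apply_eq, e]
    · rw [Finset.sum_eq_single ⟨(), x i⟩]
      · simp
      · intro s _ hs
        simp [hs]
      · simp
  bind := by
    rintro ι α L L' _ S T p q ⟨τ, _, ψ, o, hψ, hp⟩ hq
    choose τ' inst ψ' o' hψ' hq using hq
    refine ⟨Σ j, τ' (o j), inferInstance, _, fun s => o' (o s.1) s.2, hψ.sigma o hψ',
      fun x l' => ?_⟩
    rw [Fintype.sum_sigma]
    simp only [norm_mul, mul_pow, mul_assoc, ← Finset.mul_sum, ← hq, hp, Finset.sum_mul]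
    rw [Finset.sum_comm]
    refine Finset.sum_congr rfl fun j _ => ?_
    simp_rw [← Finset.mul_sum, sum_dirac_mul]
  pullback := by
    rintro ι ι' α σ L T p ⟨τ, _, ψ, o, hψ, hp⟩
    exact ⟨τ, inferInstance, _, o, hψ.pullback σ, fun x l => hp _ _⟩

end QC

namespace QC

variable {ι : Type} {α : ι → ℕ}

/-! ### Matrix quantum algorithms and reachable state families -/

/-- The permutation of basis states underlying the query oracle. -/
def queryPerm (W : ℕ) (x : Input ι α) : QIdx ι α W ≃ QIdx ι α W :=
  (Equiv.sigmaCongrRight fun i => finAddRight (x i)).prodCongr (Equiv.refl _)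

theorem oracleMatrix_mulVec [Fintype ι] [DecidableEq ι] (W : ℕ) (x : Input ι α)
    (v : QIdx ι α W → ℂ) : (oracleMatrix W x).mulVec v = v ∘ (queryPerm W x).symm := by
  funext j
  have h : ∀ j' : QIdx ι α W,
      (j.2 = j'.2 ∧ j.1 = ⟨j'.1.1, j'.1.2 + x j'.1.1⟩) ↔ j' = (queryPerm W x).symm j := by
    intro j'
    rw [Equiv.eq_symm_apply]
    constructor
    · rintro ⟨h2, h1⟩
      exact Prod.ext h1.symm h2.symm
    · rintro rfl
      exact ⟨rfl, rfl⟩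
  simp [Matrix.mulVec, dotProduct, oracleMatrix, h]

theorem exists_isometry_of_unitary {τ : Type} [Fintype τ] [DecidableEq τ] {U : Matrix τ τ ℂ}
    (hU : U ∈ Matrix.unitaryGroup τ ℂ) :
    ∃ V : EuclideanSpace ℂ τ →ₗᵢ[ℂ] EuclideanSpace ℂ τ,
      ∀ v, V (WithLp.toLp 2 v) = WithLp.toLp 2 (U.mulVec v) := by
  have h : Matrix.toEuclideanCLM (n := τ) (𝕜 := ℂ) U ∈
      unitary (EuclideanSpace ℂ τ →L[ℂ] EuclideanSpace ℂ τ) :=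
    Unitary.map_mem (Matrix.toEuclideanCLM (n := τ) (𝕜 := ℂ)) hU
  exact ⟨(Unitary.linearIsometryEquiv ⟨_, h⟩).toLinearIsometry, fun v => rfl⟩

theorem exists_unitary_of_isometry {τ : Type} [Fintype τ] [DecidableEq τ]
    (V : EuclideanSpace ℂ τ →ₗᵢ[ℂ] EuclideanSpace ℂ τ) :
    ∃ U ∈ Matrix.unitaryGroup τ ℂ, ∀ v, WithLp.toLp 2 (U.mulVec v) = V (WithLp.toLp 2 v) := by
  let e := Unitary.linearIsometryEquiv.symm (V.toLinearIsometryEquiv rfl)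
  refine ⟨(Matrix.toEuclideanCLM (n := τ) (𝕜 := ℂ)).symm e,
    Unitary.map_mem (Matrix.toEuclideanCLM (n := τ) (𝕜 := ℂ)).symm e.2, fun v => ?_⟩
  rw [← Matrix.toEuclideanCLM_toLp, StarAlgEquiv.apply_symm_apply]
  rfl

/-- Two isometric embeddings into the same space differ by a unitary. -/
theorem exists_isometry_comp_eq {E F : Type*} [NormedAddCommGroup E] [InnerProductSpace ℂ E]
    [NormedAddCommGroup F] [InnerProductSpace ℂ F] [FiniteDimensional ℂ F]
    (P R : E →ₗᵢ[ℂ] F) : ∃ V : F →ₗᵢ[ℂ] F, ∀ v, V (P v) = R v := by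
  refine ⟨(R.comp P.equivRange.symm.toLinearIsometry).extend, fun v => ?_⟩
  have := (R.comp P.equivRange.symm.toLinearIsometry).extend_apply (P.equivRange v)
  simpa using this

/-- Extension by zero along an embedding of index types. -/
noncomputable def embedIsometry {τ σ : Type} [Fintype τ] [Fintype σ] (e : τ ↪ σ) :
    EuclideanSpace ℂ τ →ₗᵢ[ℂ] EuclideanSpace ℂ σ :=
  isometryOfSum
    { toFun := fun v => WithLp.toLp 2 (Function.extend e (fun i => v i) 0)
      map_add' := fun u v => by
        ext s
        by_cases h : ∃ i, e i = s
        · obtain ⟨i, rfl⟩ := h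
          simp [e.injective.extend_apply]
        · simp [Function.extend_apply' _ _ _ h]
      map_smul' := fun a v => by
        ext s
        by_cases h : ∃ i, e i = s
        · obtain ⟨i, rfl⟩ := h
          simp [e.injective.extend_apply]
        · simp [Function.extend_apply' _ _ _ h] }
    (fun v => by
      symm
      refine Fintype.sum_of_injective e e.injective _ _ (fun s hs => ?_) fun i => ?_
      · simp [Function.extend_apply' _ _ _ hs]
      · simp [e.injective.extend_apply])

theorem embedIsometry_apply {τ σ : Type} [Fintype τ] [Fintype σ] (e : τ ↪ σ)
    (v : EuclideanSpace ℂ τ) (s : σ) :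
    embedIsometry e v s = Function.extend e (fun i => v i) 0 s := rfl

/-- Placing a register with query position `q` into the query and workspace registers. -/
def registerEmbedding {κ : Type} (q : κ → ι) {W : ℕ} (c : κ ↪ Fin W) :
    (Σ w, Fin (α (q w))) ↪ QIdx ι α W where
  toFun s := (⟨q s.1, s.2⟩, c s.1)
  inj' := by
    rintro ⟨w, a⟩ ⟨w', a'⟩ h
    obtain rfl : w = w' := c.injective (congrArg Prod.snd h)
    have := congrArg Prod.fst h
    simpa using this

theorem registerEmbedding_oraclePerm {κ : Type} (q : κ → ι) {W : ℕ} (c : κ ↪ Fin W)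
    (x : Input ι α) (s : Σ w, Fin (α (q w))) :
    registerEmbedding q c (oraclePerm q x s) = queryPerm W x (registerEmbedding q c s) := rfl

theorem oracleMatrix_mulVec_embed [Fintype ι] [DecidableEq ι] {κ : Type} [Fintype κ] (q : κ → ι)
    {W : ℕ} (c : κ ↪ Fin W) (x : Input ι α) (v : EuclideanSpace ℂ (Σ w, Fin (α (q w)))) :
    WithLp.toLp 2 ((oracleMatrix W x).mulVec (embedIsometry (registerEmbedding q c) v).ofLp) =
      embedIsometry (registerEmbedding q c) (oracleIsometry q x v) := by
  ext j
  rw [oracleMatrix_mulVec]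
  change embedIsometry (registerEmbedding q c) v ((queryPerm W x).symm j) = _
  rw [embedIsometry_apply, embedIsometry_apply]
  by_cases h : ∃ s, registerEmbedding q c s = j
  · obtain ⟨s, rfl⟩ := h
    obtain ⟨s, rfl⟩ := (oraclePerm q x).surjective s
    rw [(registerEmbedding q c).injective.extend_apply, registerEmbedding_oraclePerm,
      Equiv.symm_apply_apply, (registerEmbedding q c).injective.extend_apply,
      oracleIsometry_apply, Equiv.symm_apply_apply]
  · rw [Function.extend_apply' _ _ _ h, Function.extend_apply']
    · rfl
    · rintro ⟨s, hs⟩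
      exact h ⟨oraclePerm q x s, by rw [registerEmbedding_oraclePerm, hs, Equiv.apply_symm_apply]⟩

theorem qProd_congr {τ : Type} [Fintype τ] {U U' : ℕ → Matrix τ τ ℂ} (O : Matrix τ τ ℂ) {T : ℕ}
    (h : ∀ t ≤ T, U t = U' t) : qProd U O T = qProd U' O T := by
  induction T with
  | zero => exact h 0 le_rfl
  | succ T ih => rw [qProd, qProd, h _ le_rfl, ih fun t ht => h t (by omega)]

variable [Fintype ι] [DecidableEq ι]

theorem Reach.exists_unitaries {T : ℕ} : ∀ {τ : Type} [Fintype τ]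
    {ψ : Input ι α → EuclideanSpace ℂ τ}, Reach T ψ → ∃ N, ∀ W ≥ N, ∀ e : τ ↪ QIdx ι α W,
    ∃ U : ℕ → Matrix (QIdx ι α W) (QIdx ι α W) ℂ,
      (∀ t, U t ∈ Matrix.unitaryGroup (QIdx ι α W) ℂ) ∧ ∃ v : QIdx ι α W → ℂ,
      ∑ j, ‖v j‖ ^ 2 = 1 ∧ ∀ x,
        WithLp.toLp 2 ((qProd U (oracleMatrix W x) T).mulVec v) = embedIsometry e (ψ x) := by
  induction T with
  | zero =>
    rintro τ _ ψ ⟨v, hv, rfl⟩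
    refine ⟨0, fun W _ e => ⟨fun _ => 1, fun _ => one_mem _, (embedIsometry e v).ofLp, ?_, ?_⟩⟩
    · rw [sum_norm_sq_map, ← EuclideanSpace.norm_sq_eq, hv, one_pow]
    · intro x
      simp [qProd]
  | succ T ih =>
    rintro τ _ ψ ⟨κ, _, q, χ, V, hχ, hψ⟩
    obtain ⟨N, hN⟩ := ih hχ
    refine ⟨max N (Fintype.card κ), fun W hW e => ?_⟩
    obtain ⟨c⟩ : Nonempty (κ ↪ Fin W) :=
      Function.Embedding.nonempty_of_card_le (by simpa using le_trans (le_max_right _ _) hW)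
    obtain ⟨U, hU, v, hv, h⟩ := hN W (le_trans (le_max_left _ _) hW) (registerEmbedding q c)
    obtain ⟨V', hV'⟩ := exists_isometry_comp_eq (embedIsometry (registerEmbedding q c))
      ((embedIsometry e).comp V)
    obtain ⟨B, hB, hBV⟩ := exists_unitary_of_isometry V'
    refine ⟨fun t => if t ≤ T then U t else B, fun t => ?_, v, hv, fun x => ?_⟩
    · dsimp only
      split_ifs
      exacts [hU t, hB]
    · have hq : qProd (fun t => if t ≤ T then U t else B) (oracleMatrix W x) T =
          qProd U (oracleMatrix W x) T := qProd_congr _ fun t ht => if_pos ht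
      rw [qProd, hq, if_neg (by omega), ← Matrix.mulVec_mulVec, ← Matrix.mulVec_mulVec, hBV,
        show (qProd U (oracleMatrix W x) T).mulVec v =
          (embedIsometry (registerEmbedding q c) (χ x)).ofLp from congrArg WithLp.ofLp (h x),
        oracleMatrix_mulVec_embed, hV', hψ]
      rfl

/-- Query positions paired with workspace, regrouped as query register and workspace. -/
def registerEquiv (W : ℕ) : (Σ w : ι × Fin W, Fin (α w.1)) ≃ QIdx ι α W where
  toFun s := (⟨s.1.1, s.2⟩, s.1.2)
  invFun j := ⟨(j.1.1, j.2), j.1.2⟩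

theorem reach_qProd {W : ℕ} {U : ℕ → Matrix (QIdx ι α W) (QIdx ι α W) ℂ}
    (hU : ∀ t, U t ∈ Matrix.unitaryGroup (QIdx ι α W) ℂ) {v : QIdx ι α W → ℂ}
    (hv : ∑ j, ‖v j‖ ^ 2 = 1) (T : ℕ) :
    Reach T fun x => WithLp.toLp 2 ((qProd U (oracleMatrix W x) T).mulVec v) := by
  induction T with
  | zero =>
    obtain ⟨V, hV⟩ := exists_isometry_of_unitary (hU 0)
    refine ⟨V (WithLp.toLp 2 v), ?_, ?_⟩
    · rw [V.norm_map, EuclideanSpace.norm_eq]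
      simp [hv]
    · simp [qProd, hV]
  | succ T ih =>
    obtain ⟨V, hV⟩ := exists_isometry_of_unitary (hU (T + 1))
    refine ⟨ι × Fin W, inferInstance, Prod.fst, _,
      V.comp (LinearIsometryEquiv.piLpCongrLeft 2 ℂ ℂ (registerEquiv W)).toLinearIsometry,
      ih.isometry (LinearIsometryEquiv.piLpCongrLeft 2 ℂ ℂ (registerEquiv W).symm).toLinearIsometry,
      fun x => ?_⟩
    simp only [qProd]
    rw [← Matrix.mulVec_mulVec, ← Matrix.mulVec_mulVec, ← hV, LinearIsometry.coe_comp,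
      Function.comp_apply, oracleMatrix_mulVec]
    rfl

theorem QAlg.quantRealizes (A : QAlg ι α) : QuantRealizes A.T A.outProb := by
  refine ⟨_, inferInstance, _, A.out, reach_qProd A.unitary A.init_norm A.T, fun x l => ?_⟩
  refine Finset.sum_congr rfl fun j _ => ?_
  simp only [dirac, QAlg.finalState]
  split_ifs <;> simp_all

theorem QuantRealizes.exists_qalg [Nonempty (Σ i, Fin (α i))] {T : ℕ}
    {p : Input ι α → Option Bool → ℝ} (hp : QuantRealizes T p) :
    ∃ A : QAlg ι α, A.T = T ∧ ∀ x l, A.outProb x l = p x l := by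
  obtain ⟨τ, _, ψ, o, hψ, hp⟩ := hp
  obtain ⟨N, hN⟩ := hψ.exists_unitaries
  let W := max N (Fintype.card τ)
  obtain ⟨c⟩ : Nonempty (τ ↪ Fin W) :=
    Function.Embedding.nonempty_of_card_le (by simp [W])
  let e : τ ↪ QIdx ι α W :=
    ⟨fun j => (Classical.arbitrary _, c j), fun j j' h => c.injective (congrArg Prod.snd h)⟩
  obtain ⟨U, hU, v, hv, h⟩ := hN W (le_max_left _ _) e
  refine ⟨⟨T, W, U, hU, v, hv, Function.extend e o fun _ => none⟩, rfl, fun x l => ?_⟩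
  rw [hp]
  symm
  have hs : ∀ s, (qProd U (oracleMatrix W x) T).mulVec v s =
      Function.extend e (fun i => ψ x i) 0 s :=
    fun s => congrArg (fun u : EuclideanSpace ℂ (QIdx ι α W) => u s) (h x)
  refine Fintype.sum_of_injective e e.injective _ _ (fun s hs' => ?_) fun j => ?_
  · simp only [QAlg.finalState, hs]
    rw [Function.extend_apply' (fun i => ψ x i) _ _ hs']
    simp
  · simp only [QAlg.finalState, hs, e.injective.extend_apply, dirac]
    split_ifs <;> simp_all

end QC

namespace QC

variable {ι : Type} {α : ι → ℕ}

/-! ### Certificates and deterministic query complexity -/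

/-- Some decision tree of depth at most `d` computes `f` on the inputs in `P`. -/
def DecidesOn (f : PartialFn ι α) (d : ℕ) (P : Set (Input ι α)) : Prop :=
  ∃ t : DTree ι α (Option Bool), t.depth ≤ d ∧ ∀ x ∈ P, ∀ b, f x = some b → t.eval x = some b

namespace DecidesOn

variable {f : PartialFn ι α}

theorem leaf {P : Set (Input ι α)} (b : Bool) (h : ∀ x ∈ P, f x ≠ some !b) (d : ℕ) :
    DecidesOn f d P := by
  refine ⟨.leaf (some b), Nat.zero_le _, fun x hx b' hb' => ?_⟩
  have := h x hx
  cases b <;> cases b' <;> simp_all [DTree.eval]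

theorem mono {d d' : ℕ} {P : Set (Input ι α)} (hd : d ≤ d') (h : DecidesOn f d P) :
    DecidesOn f d' P := by
  obtain ⟨t, ht, h⟩ := h
  exact ⟨t, ht.trans hd, h⟩

theorem node {d : ℕ} {P : Set (Input ι α)} (i : ι)
    (h : ∀ a, DecidesOn f d {x | x ∈ P ∧ x i = a}) : DecidesOn f (d + 1) P := by
  choose t ht h using h
  refine ⟨.node i t, ?_, fun x hx b hb => h (x i) x ⟨hx, rfl⟩ b hb⟩
  rw [DTree.depth]
  exact Nat.succ_le_succ (Finset.sup_le fun a _ => ht a)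

/-- Querying all positions in `S`. -/
theorem query_finset {d : ℕ} (S : Finset ι) : ∀ {P : Set (Input ι α)},
    (∀ x ∈ P, DecidesOn f d {y | y ∈ P ∧ ∀ i ∈ S, y i = x i}) → DecidesOn f (d + S.card) P := by
  classical
  induction S using Finset.induction_on with
  | empty =>
    intro P h
    by_cases hP : ∃ x, x ∈ P
    · obtain ⟨x, hx⟩ := hP
      simpa using h x hx
    · exact leaf true (fun x hx => (hP ⟨x, hx⟩).elim) _
  | insert i S hi ih =>
    intro P h
    rw [Finset.card_insert_of_notMem hi, ← add_assoc]
    refine node i fun a => ih fun x hx => ?_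
    convert h x hx.1 using 1
    ext y
    simp only [Set.mem_ofPred_eq, Finset.forall_mem_insert, hx.2, and_assoc]

end DecidesOn

theorem decidesOn_of_certificates {f : PartialFn ι α} {s : ℕ}
    (hC : ∀ x b, f x = some b →
      ∃ S : Finset ι, S.card ≤ s ∧ ∀ y, (∀ i ∈ S, y i = x i) → f y = some b)
    [DecidableEq ι] (t : ℕ) : ∀ (Q : Finset ι) (x₀ : Input ι α),
    (∀ x, (∀ i ∈ Q, x i = x₀ i) → f x = some false →
      ∃ S : Finset ι, (S \ Q).card ≤ t ∧ ∀ y, (∀ i ∈ S, y i = x i) → f y = some false) →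
    DecidesOn f (t * s) {x | ∀ i ∈ Q, x i = x₀ i} := by
  induction t with
  | zero =>
    intro Q x₀ h
    by_cases hx : ∃ x, (∀ i ∈ Q, x i = x₀ i) ∧ f x = some false
    · obtain ⟨x, hxQ, hx⟩ := hx
      obtain ⟨S, hS, hSf⟩ := h x hxQ hx
      rw [Nat.le_zero, Finset.card_eq_zero, Finset.sdiff_eq_empty_iff_subset] at hS
      refine DecidesOn.leaf false (fun y hy => ?_) _
      rw [hSf y fun i hi => by rw [hy i (hS hi), hxQ i (hS hi)]]
      simp
    · exact DecidesOn.leaf true (fun y hy hf => hx ⟨y, hy, by simpa using hf⟩) _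
  | succ t ih =>
    intro Q x₀ h
    by_cases hx : ∃ x, (∀ i ∈ Q, x i = x₀ i) ∧ f x = some true
    · obtain ⟨x₁, hx₁Q, hx₁⟩ := hx
      obtain ⟨R, hR, hRf⟩ := hC x₁ true hx₁
      refine (DecidesOn.query_finset R (d := t * s) fun x hxQ => ?_).mono
        (by rw [Nat.succ_mul]; omega)
      convert ih (Q ∪ R) x fun y hy hf => ?_ using 1
      · ext y
        simp only [Set.mem_ofPred_eq, Finset.mem_union]
        constructor
        · rintro ⟨h1, h2⟩ i (hi | hi)
          · rw [h1 i hi, hxQ i hi]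
          · exact h2 i hi
        · intro h1
          exact ⟨fun i hi => by rw [h1 i (Or.inl hi), hxQ i hi], fun i hi => h1 i (Or.inr hi)⟩
      · have hyQ : ∀ i ∈ Q, y i = x₀ i := fun i hi => by
          rw [hy i (Finset.mem_union_left _ hi), hxQ i hi]
        obtain ⟨S, hS, hSf⟩ := h y hyQ hf
        refine ⟨S, ?_, hSf⟩
        obtain ⟨i, hiS, hiR, hiQ⟩ : ∃ i ∈ S, i ∈ R ∧ i ∉ Q := by
          by_contra! hcon
          have h1 := hRf (fun i => if i ∈ R then x₁ i else y i) fun i hi => if_pos hi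
          rw [hSf] at h1
          · simp at h1
          · intro i hi
            split_ifs with hiR
            · rw [hx₁Q i (hcon i hi hiR), hyQ i (hcon i hi hiR)]
            · rfl
        have : S \ (Q ∪ R) ⊂ S \ Q := by
          refine Finset.ssubset_iff_of_subset
            (Finset.sdiff_subset_sdiff le_rfl Finset.subset_union_left) |>.2 ⟨i, ?_, ?_⟩
          · simp [hiS, hiQ]
          · simp [hiR]
        have := Finset.card_lt_card this
        omega
    · exact DecidesOn.leaf false (fun y hy hf => hx ⟨y, hy, by simpa using hf⟩) _

/-- A partial function whose values are certified by at most `s` positions has deterministic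
query complexity at most `s²`. -/
theorem Dq_le_of_certificates {f : PartialFn ι α} {s : ℕ}
    (hC : ∀ x b, f x = some b →
      ∃ S : Finset ι, S.card ≤ s ∧ ∀ y, (∀ i ∈ S, y i = x i) → f y = some b) :
    Dq f ≤ s * s := by
  classical
  have key : DecidesOn f (s * s) Set.univ := by
    by_cases h : Nonempty (Input ι α)
    · obtain ⟨x₀⟩ := h
      simpa using decidesOn_of_certificates hC s ∅ x₀ fun x _ hx => by simpa using hC x false hx
    · exact DecidesOn.leaf true (fun x => (h ⟨x⟩).elim) _
  obtain ⟨t, ht, h⟩ := key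
  exact Nat.sInf_le ⟨t, ht, fun x => h x trivial⟩

theorem Dq_le_of_certFn_certificates {k : ℕ} {hk : 0 < k} {f : PartialFn ι α}
    {φ : Input ι α → (Fin k → Fin 2) → Bool} (hφ : IsCertifying hk f φ) {s : ℕ}
    (hC : ∀ z, certFn φ z = some true → ∃ S : Finset (CertIdx ι k), S.card ≤ s ∧
      ∀ z', (∀ i ∈ S, z' i = z i) → certFn φ z' = some true) : Dq f ≤ s * s := by
  classical
  obtain ⟨h1, h2, h3, -⟩ := hφ
  refine Dq_le_of_certificates fun x b hb => ?_
  obtain ⟨y, hy⟩ := h3 x b hb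
  let pair : Input ι α → Input (CertIdx ι k) (certAlphabet α k) := fun x =>
    Sum.rec (fun i => x i) fun j => y j
  have hpair : ∀ x', certFn φ (pair x') = some (φ x' y) := fun x' => rfl
  obtain ⟨S, hS, hSf⟩ := hC (pair x) (by rw [hpair, hy])
  refine ⟨S.preimage Sum.inl Sum.inl_injective.injOn, ?_, fun x' hx' => ?_⟩
  · refine le_trans ?_ hS
    rw [← Finset.card_map ⟨Sum.inl, Sum.inl_injective⟩]
    refine Finset.card_le_card fun j hj => ?_
    simp only [Finset.mem_map, Finset.mem_preimage, Function.Embedding.coeFn_mk] at hj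
    obtain ⟨i, hi, rfl⟩ := hj
    exact hi
  · have hφx' : φ x' y = true := by
      have := hSf (pair x') fun i hi => by
        cases i with
        | inl i => exact hx' i (by simpa using hi)
        | inr j => rfl
      simpa [hpair] using this
    cases hfx : f x' with
    | none => simp [h1 x' y hfx] at hφx'
    | some b' =>
      have e1 : y ⟨0, hk⟩ = if b then 1 else 0 := by
        by_contra hne
        simp [h2 x y b hb hne] at hy
      have e2 : y ⟨0, hk⟩ = if b' then 1 else 0 := by
        by_contra hne
        simp [h2 x' y b' hfx hne] at hφx'
      rw [e1] at e2
      cases b <;> cases b' <;> simp_all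

theorem DTree.exists_path {L : Type} (t : DTree ι α L) (x : Input ι α) :
    ∃ S : Finset ι, S.card ≤ t.depth ∧ ∀ y, (∀ i ∈ S, y i = x i) → t.eval y = t.eval x := by
  classical
  induction t with
  | leaf l => exact ⟨∅, by simp, fun y _ => rfl⟩
  | node i child ih =>
    obtain ⟨S, hS, h⟩ := ih (x i)
    refine ⟨insert i S, (Finset.card_insert_le _ _).trans ?_, fun y hy => ?_⟩
    · rw [DTree.depth]
      exact Nat.succ_le_succ (hS.trans
        (Finset.le_sup (f := fun a => (child a).depth) (Finset.mem_univ (x i))))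
    · rw [Finset.forall_mem_insert] at hy
      rw [DTree.eval, DTree.eval, hy.1]
      exact h y hy.2

theorem certificates_of_zero_error {f : PartialFn ι α} {d : ℕ} {μ : PMF (DTree ι α (Option Bool))}
    (hd : ∀ t ∈ μ.support, t.depth ≤ d)
    (h0 : ∀ t ∈ μ.support, ∀ x b, f x = some b → t.eval x = some b ∨ t.eval x = none)
    (h1 : ∀ x b, f x = some b → μ.toOuterMeasure {t | t.eval x = none} ≤ 1 / 2)
    (hf : ∀ x, f x ≠ none) {x : Input ι α} {b : Bool} (hx : f x = some b) :
    ∃ S : Finset ι, S.card ≤ d ∧ ∀ y, (∀ i ∈ S, y i = x i) → f y = some b := by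
  obtain ⟨t, ht, hne⟩ : ∃ t ∈ μ.support, t.eval x ≠ none := by
    by_contra! hcon
    have : μ.toOuterMeasure {t | t.eval x = none} = 1 :=
      (PMF.toOuterMeasure_apply_eq_one_iff _ _).2 hcon
    have h := h1 x b hx
    rw [this] at h
    norm_num at h
  obtain ⟨S, hS, hSt⟩ := t.exists_path x
  refine ⟨S, hS.trans (hd t ht), fun y hy => ?_⟩
  have htx := (h0 t ht x b hx).resolve_right hne
  obtain ⟨b', hb'⟩ := Option.ne_none_iff_exists'.1 (hf y)
  have := h0 t ht y b' hb'
  rw [hSt y hy, htx] at this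
  simp at this
  rw [hb', this]

/-! ### Block sensitivity -/

/-- Bounded block sensitivity yields small certificates. -/
theorem certificates_of_block_sensitivity [Finite ι] {β : Type} {g : Input ι α → β} {K : ℕ}
    (H : ∀ (x : Input ι α) (F : Finset (Input ι α)), (∀ y ∈ F, g y ≠ g x) →
      (∀ y ∈ F, ∀ y' ∈ F, y ≠ y' → ∀ i, y i = x i ∨ y' i = x i) → F.card ≤ K)
    (x : Input ι α) :
    ∃ S : Finset ι, S.card ≤ K * K ∧ ∀ y, (∀ i ∈ S, y i = x i) → g y = g x := by
  classical
  have := Fintype.ofFinite ι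
  let diff : Input ι α → Finset ι := fun y => Finset.univ.filter fun i => y i ≠ x i
  have hdiff : ∀ y i, i ∈ diff y ↔ y i ≠ x i := fun y i => by simp [diff]
  let Minimal : Input ι α → Prop := fun y => g y ≠ g x ∧ ∀ y', diff y' ⊂ diff y → g y' = g x
  have card_diff : ∀ y, Minimal y → (diff y).card ≤ K := by
    rintro y ⟨hy, hmin⟩
    have hinj : Set.InjOn (fun i => Function.update y i (x i)) (diff y) := by
      intro i hi j hj hij
      by_contra hne
      have := congrFun hij i
      simp only [Function.update_self, Function.update_of_ne hne] at this
      exact (hdiff y i).1 hi this.symm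
    rw [← Finset.card_image_of_injOn hinj]
    refine H y _ ?_ ?_
    · intro z hz
      obtain ⟨i, hi, rfl⟩ := Finset.mem_image.1 hz
      rw [hmin]
      · exact hy.symm
      · refine (Finset.ssubset_iff_of_subset fun j hj => ?_).2 ⟨i, hi, ?_⟩
        · rw [hdiff] at hj ⊢
          by_cases hji : j = i
          · subst hji
            simp at hj
          · rwa [Function.update_of_ne hji] at hj
        · simp [hdiff]
    · intro z hz z' hz' hne l
      obtain ⟨i, hi, rfl⟩ := Finset.mem_image.1 hz
      obtain ⟨j, hj, rfl⟩ := Finset.mem_image.1 hz'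
      by_cases hl : l = i
      · right
        refine Function.update_of_ne ?_ _ _
        rintro rfl
        exact hne (by rw [hl])
      · left
        exact Function.update_of_ne hl _ _
  have exists_minimal : ∀ n y, (diff y).card = n → g y ≠ g x →
      ∃ y', Minimal y' ∧ diff y' ⊆ diff y := by
    intro n
    induction n using Nat.strong_induction_on with
    | _ n ih =>
      intro y hn hy
      by_cases hmin : Minimal y
      · exact ⟨y, hmin, le_rfl⟩
      · obtain ⟨y', hsub, hy'⟩ : ∃ y', diff y' ⊂ diff y ∧ g y' ≠ g x := by
          by_contra! hcon
          exact hmin ⟨hy, hcon⟩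
        obtain ⟨z, hz, hzs⟩ := ih _ (hn ▸ Finset.card_lt_card hsub) y' rfl hy'
        exact ⟨z, hz, hzs.trans hsub.1⟩
  let Family : Finset (Input ι α) → Prop := fun F => (∀ y ∈ F, Minimal y) ∧
    ∀ y ∈ F, ∀ y' ∈ F, y ≠ y' → ∀ i, y i = x i ∨ y' i = x i
  have : Nonempty {F // Family F} := ⟨⟨∅, by simp [Family]⟩⟩
  have : Finite (Input ι α) := inferInstanceAs (Finite (∀ i, Fin (α i)))
  obtain ⟨⟨F, hF, hFd⟩, hmax⟩ := Finite.exists_max fun F : {F // Family F} => F.1.card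
  refine ⟨F.biUnion diff, ?_, fun y hy => ?_⟩
  · exact (Finset.card_biUnion_le_card_mul _ _ K fun y hy => card_diff y (hF y hy)).trans
      (Nat.mul_le_mul_right _ (H x F (fun y hy => (hF y hy).1) hFd))
  · by_contra hne
    obtain ⟨y', hy', hsub⟩ := exists_minimal _ y rfl hne
    have hdisj : ∀ z ∈ F, ∀ i, z i = x i ∨ y' i = x i := by
      intro z hz i
      by_contra! hcon
      exact (hdiff y i).1 (hsub ((hdiff y' i).2 hcon.2))
        (hy i (Finset.mem_biUnion.2 ⟨z, hz, (hdiff z i).2 hcon.1⟩))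
    have hnot : y' ∉ F := by
      intro hmem
      refine hy'.1 (congrArg g (funext fun i => ?_))
      simpa using hdisj y' hmem i
    have hfam : Family (insert y' F) := by
      refine ⟨?_, ?_⟩
      · intro z hz
        rcases Finset.mem_insert.1 hz with rfl | hz
        exacts [hy', hF z hz]
      · intro z hz z' hz' hzz i
        rcases Finset.mem_insert.1 hz with rfl | hzF <;>
          rcases Finset.mem_insert.1 hz' with rfl | hzF'
        · exact (hzz rfl).elim
        · exact (hdisj z' hzF' i).symm
        · exact hdisj z hzF i
        · exact hFd z hzF z' hzF' hzz i
    have := hmax ⟨_, hfam⟩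
    simp only [Finset.card_insert_of_notMem hnot] at this
    omega

end QC

namespace QC

variable {ι : Type} {α : ι → ℕ}

/-! ### The hybrid argument -/

theorem sum_sigma_swap {κ : Type} [Fintype κ] [Fintype ι] [DecidableEq ι] (q : κ → ι)
    (m : (Σ w, Fin (α (q w))) → ℝ) (P : ι → Prop) [DecidablePred P] :
    (∑ i, if P i then ∑ s, (if q s.1 = i then m s else 0) else 0) =
      ∑ s, if P (q s.1) then m s else 0 := by
  have : ∀ i, (if P i then ∑ s, (if q s.1 = i then m s else 0) else 0) =
      ∑ s, if q s.1 = i then (if P (q s.1) then m s else 0) else 0 := by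
    intro i
    split_ifs with h
    · refine Finset.sum_congr rfl fun s _ => ?_
      split_ifs with h1 h2
      · rfl
      · exact (h2 (h1 ▸ h)).elim
      · rfl
    · refine (Finset.sum_eq_zero fun s _ => ?_).symm
      split_ifs with h1 h2
      · exact (h (h1 ▸ h2)).elim
      · rfl
      · rfl
  simp_rw [this]
  rw [Finset.sum_comm]
  simp

theorem norm_oracleIsometry_sub_sq_le {κ : Type} [Fintype κ] (q : κ → ι) (x y : Input ι α)
    [DecidableEq ι] (v : EuclideanSpace ℂ (Σ w, Fin (α (q w)))) :
    ‖oracleIsometry q x v - oracleIsometry q y v‖ ^ 2 ≤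
      4 * ∑ s, if x (q s.1) ≠ y (q s.1) then ‖v s‖ ^ 2 else 0 := by
  let m : (Σ w, Fin (α (q w))) → ℝ := fun s => if x (q s.1) ≠ y (q s.1) then ‖v s‖ ^ 2 else 0
  have hperm : ∀ z : Input ι α, ∑ s, m ((oraclePerm q z).symm s) = ∑ s, m s :=
    fun z => Equiv.sum_comp _ _
  have hle : ∀ s, ‖(oracleIsometry q x v - oracleIsometry q y v) s‖ ^ 2 ≤
      2 * m ((oraclePerm q x).symm s) + 2 * m ((oraclePerm q y).symm s) := by
    intro s
    rw [PiLp.sub_apply, oracleIsometry_apply, oracleIsometry_apply]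
    obtain ⟨w, a⟩ := s
    by_cases h : x (q w) = y (q w)
    · have e : (oraclePerm q x).symm ⟨w, a⟩ = (oraclePerm q y).symm ⟨w, a⟩ := by
        simp [oraclePerm, h]
      have hm : m ((oraclePerm q y).symm ⟨w, a⟩) = 0 := if_neg (not_not.2 h)
      rw [e, hm]
      simp
    · have hmx : m ((oraclePerm q x).symm ⟨w, a⟩) = ‖v ((oraclePerm q x).symm ⟨w, a⟩)‖ ^ 2 :=
        if_pos h
      have hmy : m ((oraclePerm q y).symm ⟨w, a⟩) = ‖v ((oraclePerm q y).symm ⟨w, a⟩)‖ ^ 2 :=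
        if_pos h
      rw [hmx, hmy]
      have h1 := norm_sub_le (v ((oraclePerm q x).symm ⟨w, a⟩)) (v ((oraclePerm q y).symm ⟨w, a⟩))
      have h2 := pow_le_pow_left₀ (norm_nonneg _) h1 2
      nlinarith [sq_nonneg (‖v ((oraclePerm q x).symm ⟨w, a⟩)‖ -
        ‖v ((oraclePerm q y).symm ⟨w, a⟩)‖)]
  rw [EuclideanSpace.norm_sq_eq]
  refine (Finset.sum_le_sum fun s _ => hle s).trans (le_of_eq ?_)
  rw [Finset.sum_add_distrib, ← Finset.mul_sum, ← Finset.mul_sum, hperm, hperm]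
  ring

/-- The hybrid argument: changing the input on positions of small total query weight changes
the final state little. -/
theorem Reach.exists_weights [Fintype ι] [DecidableEq ι] {T : ℕ} : ∀ {τ : Type} [Fintype τ]
    {ψ : Input ι α → EuclideanSpace ℂ τ}, Reach T ψ → ∀ x, ∃ w : ι → ℝ, (∀ i, 0 ≤ w i) ∧
    ∑ i, w i ≤ T ∧ ∀ y, ‖ψ x - ψ y‖ ^ 2 ≤ 4 * T * ∑ i, if x i ≠ y i then w i else 0 := by
  induction T with
  | zero =>
    rintro τ _ ψ ⟨v, hv, rfl⟩ x
    exact ⟨fun _ => 0, by simp, by simp, by simp⟩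
  | succ T ih =>
    rintro τ _ ψ ⟨κ, _, q, χ, V, hχ, hψ⟩ x
    obtain ⟨w, hw, hwT, hwy⟩ := ih hχ x
    have hm : ∀ i, 0 ≤ ∑ s : Σ w, Fin (α (q w)), if q s.1 = i then ‖χ x s‖ ^ 2 else 0 := fun i =>
      Finset.sum_nonneg fun s _ => by split_ifs <;> positivity
    refine ⟨fun i => w i + ∑ s : Σ w, Fin (α (q w)), if q s.1 = i then ‖χ x s‖ ^ 2 else 0,
      fun i => add_nonneg (hw i) (hm i), ?_, fun y => ?_⟩
    · have h1 := sum_sigma_swap q (fun s => ‖χ x s‖ ^ 2) fun _ => True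
      simp only [if_true] at h1
      rw [Finset.sum_add_distrib, h1, ← EuclideanSpace.norm_sq_eq, hχ.norm_eq_one]
      push_cast
      linarith
    · have h1 := sum_sigma_swap q (fun s => ‖χ x s‖ ^ 2) fun i => x i ≠ y i
      have hsplit : (∑ i, if x i ≠ y i then w i +
          ∑ s : Σ w, Fin (α (q w)), (if q s.1 = i then ‖χ x s‖ ^ 2 else 0) else 0) =
          (∑ i, if x i ≠ y i then w i else 0) +
          ∑ s : Σ w, Fin (α (q w)), if x (q s.1) ≠ y (q s.1) then ‖χ x s‖ ^ 2 else 0 := by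
        rw [← h1, ← Finset.sum_add_distrib]
        exact Finset.sum_congr rfl fun i _ => by split_ifs <;> simp
      rw [hsplit, hψ, hψ, ← map_sub, V.norm_map]
      have hA := norm_oracleIsometry_sub_sq_le q x y (χ x)
      have hB := hwy y
      have hW : 0 ≤ ∑ i, if x i ≠ y i then w i else 0 :=
        Finset.sum_nonneg fun i _ => by split_ifs <;> simp [hw]
      have hM : 0 ≤ ∑ s : Σ w, Fin (α (q w)),
          if x (q s.1) ≠ y (q s.1) then ‖χ x s‖ ^ 2 else 0 :=
        Finset.sum_nonneg fun i _ => by split_ifs <;> positivity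
      have htri : ‖oracleIsometry q x (χ x) - oracleIsometry q y (χ y)‖ ≤
          ‖oracleIsometry q x (χ x) - oracleIsometry q y (χ x)‖ + ‖χ x - χ y‖ := by
        rw [← (oracleIsometry q y).norm_map (χ x - χ y), map_sub]
        exact norm_sub_le_norm_sub_add_norm_sub _ _ _
      refine (pow_le_pow_left₀ (norm_nonneg _) htri 2).trans ?_
      generalize ‖oracleIsometry q x (χ x) - oracleIsometry q y (χ x)‖ = a at *
      generalize ‖χ x - χ y‖ = b at *
      generalize (∑ i, if x i ≠ y i then w i else 0) = B at *
      generalize (∑ s : Σ w, Fin (α (q w)),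
        if x (q s.1) ≠ y (q s.1) then ‖χ x s‖ ^ 2 else 0) = A at *
      have hT : (0 : ℝ) ≤ T := Nat.cast_nonneg T
      have hab : 2 * (a * b) ≤ 4 * T * A + 4 * B := by
        refine le_of_sq_le_sq ?_ (by positivity)
        have h2 : a ^ 2 * b ^ 2 ≤ (4 * A) * (4 * T * B) :=
          mul_le_mul hA hB (sq_nonneg b) (by positivity)
        nlinarith [sq_nonneg (4 * T * A - 4 * B)]
      push_cast
      nlinarith

/-- The block sensitivity of a function with a zero-error `T`-query quantum algorithm. -/
theorem QuantRealizes.block_sensitivity_le [Finite ι] {T : ℕ}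
    {p : Input ι α → Option Bool → ℝ} (hp : QuantRealizes T p) {g : Input ι α → Bool}
    (hg : ∀ x, p x (some !(g x)) = 0 ∧ p x none ≤ 1 / 2) (x : Input ι α)
    (F : Finset (Input ι α)) (hF : ∀ y ∈ F, g y ≠ g x)
    (hd : ∀ y ∈ F, ∀ y' ∈ F, y ≠ y' → ∀ i, y i = x i ∨ y' i = x i) : F.card ≤ 8 * T ^ 2 := by
  classical
  have := Fintype.ofFinite ι
  have hsum := quantModel.sum_eq_one hp x
  obtain ⟨τ, _, ψ, o, hψ, hp⟩ := hp
  obtain ⟨w, hw, hwT, hwy⟩ := hψ.exists_weights x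
  have hpx : 1 / 2 ≤ p x (some (g x)) := by
    have := hg x
    rw [Fintype.sum_option, Fintype.sum_bool] at hsum
    cases hgx : g x <;> simp only [hgx, Bool.not_true, Bool.not_false] at this ⊢ <;> linarith
  have hfar : ∀ y ∈ F, 1 / 2 ≤ ‖ψ x - ψ y‖ ^ 2 := by
    intro y hy
    have hpy : p y (some (g x)) = 0 := by
      rw [← (hg y).1, Bool.eq_not_of_ne (hF y hy), Bool.not_not]
    rw [hp, Finset.sum_eq_zero_iff_of_nonneg fun j _ => by
      unfold dirac; split_ifs <;> simp] at hpy
    refine hpx.trans ?_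
    rw [hp, EuclideanSpace.norm_sq_eq]
    refine Finset.sum_le_sum fun j hj => ?_
    have hj0 := hpy j hj
    by_cases hoj : some (g x) = o j
    · simp only [dirac, if_pos hoj, mul_one] at hj0 ⊢
      rw [PiLp.sub_apply, show ψ y j = 0 by simpa using hj0, sub_zero]
    · simp only [dirac, if_neg hoj, mul_zero]
      positivity
  have hswap : ∑ y ∈ F, ∑ i, (if x i ≠ y i then w i else 0) ≤ ∑ i, w i := by
    rw [Finset.sum_comm]
    refine Finset.sum_le_sum fun i _ => ?_
    by_cases hi : ∃ y ∈ F, y i ≠ x i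
    · obtain ⟨y, hy, hyi⟩ := hi
      rw [Finset.sum_eq_single_of_mem y hy fun y' hy' hne => ?_]
      · split_ifs <;> simp [hw]
      · rcases hd y' hy' y hy hne i with h | h
        · simp [h]
        · exact (hyi h).elim
    · push Not at hi
      rw [Finset.sum_eq_zero fun y hy => by simp [hi y hy]]
      exact hw i
  have key : (F.card : ℝ) * (1 / 2) ≤ 4 * T * T := by
    calc (F.card : ℝ) * (1 / 2) = ∑ y ∈ F, (1 / 2 : ℝ) := by simp
      _ ≤ ∑ y ∈ F, 4 * (T : ℝ) * ∑ i, (if x i ≠ y i then w i else 0) :=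
        Finset.sum_le_sum fun y hy => (hfar y hy).trans (hwy y)
      _ = 4 * (T : ℝ) * ∑ y ∈ F, ∑ i, (if x i ≠ y i then w i else 0) := by rw [Finset.mul_sum]
      _ ≤ 4 * T * T := mul_le_mul_of_nonneg_left (hswap.trans hwT) (by positivity)
  have : (F.card : ℝ) ≤ ((8 * T ^ 2 : ℕ) : ℝ) := by
    push_cast
    linarith
  exact_mod_cast this

end QC

namespace QC

variable {ι : Type} {α : ι → ℕ}

/-! ### Algorithms attaining the complexity measures -/

theorem toOuterMeasure_le_one {Ω : Type*} (μ : PMF Ω) (s : Set Ω) : μ.toOuterMeasure s ≤ 1 :=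
  (μ.toOuterMeasure.mono (Set.subset_univ s)).trans
    ((PMF.toOuterMeasure_apply_eq_one_iff _ _).2 (Set.subset_univ _)).le

theorem exists_pmf_exact [Finite ι] [Nonempty (Input ι α)] (f : PartialFn ι α) :
    ∃ (d : ℕ) (μ : PMF (DTree ι α (Option Bool))), (∀ t ∈ μ.support, t.depth ≤ d) ∧
      ∀ x l, μ.toOuterMeasure {t | t.eval x = l} = ENNReal.ofReal (dirac (f x) l) := by
  have := Fintype.ofFinite ι
  obtain ⟨μ, hμ⟩ := RandRealizes.exists_pmf (randModel.exact_of_fintype f)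
  exact ⟨_, μ, hμ⟩

theorem Rq_spec [Finite ι] [Nonempty (Input ι α)] (f : PartialFn ι α) :
    ∃ μ : PMF (DTree ι α (Option Bool)), (∀ t ∈ μ.support, t.depth ≤ Rq f) ∧
      ∀ x b, f x = some b → 2 / 3 ≤ μ.toOuterMeasure {t | t.eval x = some b} := by
  obtain ⟨d, μ, hd, hμ⟩ := exists_pmf_exact f
  refine Nat.sInf_mem (s := {d | ∃ μ : PMF (DTree ι α (Option Bool)),
      (∀ t ∈ μ.support, t.depth ≤ d) ∧
      ∀ x b, f x = some b → 2 / 3 ≤ μ.toOuterMeasure {t | t.eval x = some b}})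
    ⟨d, μ, hd, fun x b hb => ?_⟩
  rw [hμ, hb, dirac_self, ENNReal.ofReal_one]
  exact ENNReal.div_le_of_le_mul (by norm_num)

theorem R0q_spec [Finite ι] [Nonempty (Input ι α)] (f : PartialFn ι α) :
    ∃ μ : PMF (DTree ι α (Option Bool)), (∀ t ∈ μ.support, t.depth ≤ R0q f) ∧
      (∀ t ∈ μ.support, ∀ x b, f x = some b → t.eval x = some b ∨ t.eval x = none) ∧
      ∀ x b, f x = some b → μ.toOuterMeasure {t | t.eval x = none} ≤ 1 / 2 := by
  obtain ⟨d, μ, hd, hμ⟩ := exists_pmf_exact f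
  refine Nat.sInf_mem (s := {d | ∃ μ : PMF (DTree ι α (Option Bool)),
      (∀ t ∈ μ.support, t.depth ≤ d) ∧
      (∀ t ∈ μ.support, ∀ x b, f x = some b → t.eval x = some b ∨ t.eval x = none) ∧
      ∀ x b, f x = some b → μ.toOuterMeasure {t | t.eval x = none} ≤ 1 / 2})
    ⟨d, μ, hd, fun t ht x b hb => Or.inl ?_, fun x b hb => ?_⟩
  · have h1 : μ.toOuterMeasure {t | t.eval x = some b} = 1 := by
      rw [hμ, hb, dirac_self, ENNReal.ofReal_one]
    exact (PMF.toOuterMeasure_apply_eq_one_iff _ _).1 h1 ht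
  · rw [hμ, hb]
    simp [dirac]

theorem exists_qalg_exact [Fintype ι] [DecidableEq ι] [Nonempty (Input ι α)]
    [Nonempty (Σ i, Fin (α i))] (f : PartialFn ι α) :
    ∃ A : QAlg ι α, ∀ x l, A.outProb x l = dirac (f x) l := by
  obtain ⟨A, -, hA⟩ := QuantRealizes.exists_qalg (quantModel.exact_of_fintype f)
  exact ⟨A, hA⟩

theorem Qq_spec [Fintype ι] [DecidableEq ι] [Nonempty (Input ι α)]
    [Nonempty (Σ i, Fin (α i))] (f : PartialFn ι α) :
    ∃ A : QAlg ι α, A.T ≤ Qq f ∧ ∀ x b, f x = some b → (2 : ℝ) / 3 ≤ A.outProb x (some b) := by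
  obtain ⟨A, hA⟩ := exists_qalg_exact f
  refine Nat.sInf_mem (s := {d | ∃ A : QAlg ι α, A.T ≤ d ∧
      ∀ x b, f x = some b → (2 : ℝ) / 3 ≤ A.outProb x (some b)})
    ⟨A.T, A, le_rfl, fun x b hb => ?_⟩
  rw [hA, hb, dirac_self]
  norm_num

theorem Q0q_spec [Fintype ι] [DecidableEq ι] [Nonempty (Input ι α)]
    [Nonempty (Σ i, Fin (α i))] (f : PartialFn ι α) :
    ∃ A : QAlg ι α, A.T ≤ Q0q f ∧
      ∀ x b, f x = some b → A.outProb x (some !b) = 0 ∧ A.outProb x none ≤ 1 / 2 := by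
  obtain ⟨A, hA⟩ := exists_qalg_exact f
  refine Nat.sInf_mem (s := {d | ∃ A : QAlg ι α, A.T ≤ d ∧
      ∀ x b, f x = some b → A.outProb x (some !b) = 0 ∧ A.outProb x none ≤ 1 / 2})
    ⟨A.T, A, le_rfl, fun x b hb => ?_⟩
  rw [hA, hA, hb]
  simp [dirac]

/-! ### The degenerate case -/

theorem R1q_eq_zero_of_isEmpty [IsEmpty ι] (f : PartialFn ι α) : R1q f = 0 := by
  refine Nat.le_zero.1 (Nat.sInf_le ⟨PMF.pure (.leaf (f isEmptyElim)), ?_, ?_, ?_⟩)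
  · intro t ht
    rw [PMF.support_pure, Set.mem_singleton_iff] at ht
    rw [ht, DTree.depth]
  · intro x hx
    have h1 : (PMF.pure (DTree.leaf (f isEmptyElim))).toOuterMeasure
        {t : DTree ι α (Option Bool) | t.eval x = some true} = 1 := by
      rw [PMF.toOuterMeasure_apply_eq_one_iff, PMF.support_pure, Set.singleton_subset_iff]
      change f isEmptyElim = some true
      rw [← hx]
      congr 1
      exact funext isEmptyElim
    rw [h1]
    exact ENNReal.div_le_of_le_mul (by norm_num)
  · intro x hx t ht
    rw [PMF.support_pure, Set.mem_singleton_iff] at ht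
    have : (isEmptyElim : Input ι α) = x := funext isEmptyElim
    rw [ht, DTree.eval, this, hx]
    simp

theorem Q1q_eq_zero_of_isEmpty [IsEmpty ι] [Fintype ι] [DecidableEq ι] (f : PartialFn ι α) :
    Q1q f = 0 := by
  refine Nat.sInf_eq_zero.2 (Or.inr (Set.eq_empty_of_forall_notMem ?_))
  rintro d ⟨A, -⟩
  simpa using A.init_norm

theorem exists_ne_of_two_le_Dq {f : PartialFn ι α} (h : 2 ≤ Dq f) :
    ∃ x y : Input ι α, x ≠ y := by
  by_contra! hcon
  have : Dq f ≤ 0 := by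
    by_cases hne : Nonempty (Input ι α)
    · obtain ⟨x₀⟩ := hne
      exact Nat.sInf_le ⟨.leaf (f x₀), le_rfl, fun x b hb => by rw [DTree.eval, hcon x₀ x, hb]⟩
    · exact Nat.sInf_le ⟨.leaf none, le_rfl, fun x => (hne ⟨x⟩).elim⟩
  omega

/-! ### The quantitative bound -/

theorem query_bound {D S T : ℕ} (hD : 2 ≤ D) (hDT : D ≤ (8 * T ^ 2) ^ 4) {c : ℕ}
    (hc : c = 10 * Nat.clog 2 D) :
    ((c * (27 ^ Nat.clog 2 (8 * c) * S) + c * (1 + 8 * c * T) : ℕ) : ℝ) ≤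
      16 ^ 5 * 420 ^ 6 * ((S : ℝ) + T + 2) * Real.log ((S : ℝ) + T + 2) ^ 6 := by
  have hS0 : (0 : ℝ) ≤ S := Nat.cast_nonneg S
  have hT0 : (0 : ℝ) ≤ T := Nat.cast_nonneg T
  set X : ℝ := (S : ℝ) + T + 2 with hX
  set L := Real.log X with hL
  have hclog : 0 < Nat.clog 2 D := Nat.clog_pos (by norm_num) hD
  have hlog2 : (1 : ℝ) / 2 < Real.log 2 := by linarith [Real.log_two_gt_d9]
  have hL2 : Real.log 2 ≤ L := Real.log_le_log (by norm_num) (by linarith)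
  have hlogD : Real.log D ≤ 20 * L := by
    have h1 : (D : ℝ) ≤ (8 * X ^ 2) ^ 4 := by
      have : (D : ℝ) ≤ (8 * (T : ℝ) ^ 2) ^ 4 := by exact_mod_cast hDT
      refine this.trans ?_
      gcongr
      linarith
    have hXpos : 0 < X := by positivity
    have h2 : Real.log ((8 * X ^ 2) ^ 4) = 4 * (3 * Real.log 2 + 2 * L) := by
      rw [Real.log_pow, Real.log_mul (by norm_num) (by positivity), Real.log_pow,
        show (8 : ℝ) = 2 ^ 3 by norm_num, Real.log_pow]
      norm_num
      rfl
    have h3 := Real.log_le_log (by positivity) h1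
    rw [h2] at h3
    linarith
  have hcL : (c : ℝ) ≤ 420 * L := by
    have h1 := Nat.pow_pred_clog_lt_self one_lt_two (x := D) (by omega)
    obtain ⟨l, hl⟩ := Nat.exists_eq_add_of_lt hclog
    rw [zero_add] at hl
    rw [hl, Nat.pred_succ] at h1
    have h2 : ((2 : ℝ) ^ l) ≤ D := by exact_mod_cast h1.le
    have h3 := Real.log_le_log (by positivity) h2
    rw [Real.log_pow] at h3
    rw [hc, hl]
    push_cast
    have : (l : ℝ) * (1 / 2) ≤ l * Real.log 2 := by gcongr
    linarith
  have hc1 : 1 ≤ c := by omega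
  have hm : 27 ^ Nat.clog 2 (8 * c) ≤ (16 * c) ^ 5 := by
    have h1 := Nat.pow_pred_clog_lt_self one_lt_two (x := 8 * c) (by omega)
    obtain ⟨l, hl⟩ := Nat.exists_eq_add_of_lt
      (Nat.clog_pos one_lt_two (show 2 ≤ 8 * c by omega))
    rw [zero_add] at hl
    rw [hl, Nat.pred_succ] at h1
    rw [hl]
    calc 27 ^ (l + 1) ≤ 32 ^ (l + 1) := Nat.pow_le_pow_left (by norm_num) _
      _ = (2 * 2 ^ l) ^ 5 := by
        rw [show (32 : ℕ) = 2 ^ 5 by norm_num, ← pow_mul, ← pow_succ', ← pow_mul, mul_comm]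
      _ ≤ (16 * c) ^ 5 := Nat.pow_le_pow_left (by omega) _
  have hnat : c * (27 ^ Nat.clog 2 (8 * c) * S) + c * (1 + 8 * c * T) ≤
      16 ^ 5 * c ^ 6 * (S + T + 2) := by
    have h1 : c * (27 ^ Nat.clog 2 (8 * c) * S) ≤ 16 ^ 5 * c ^ 6 * S := by
      calc c * (27 ^ Nat.clog 2 (8 * c) * S) ≤ c * ((16 * c) ^ 5 * S) := by gcongr
        _ = 16 ^ 5 * c ^ 6 * S := by ring
    have h2 : c * (1 + 8 * c * T) ≤ 16 ^ 5 * c ^ 6 * (T + 2) := by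
      have h3 : c ≤ c ^ 6 := Nat.le_self_pow (by norm_num) c
      have h4 : c ^ 2 ≤ c ^ 6 := Nat.pow_le_pow_right hc1 (by norm_num)
      calc c * (1 + 8 * c * T) = c + 8 * c ^ 2 * T := by ring
        _ ≤ c ^ 6 + 8 * c ^ 6 * T := by gcongr
        _ ≤ 16 ^ 5 * c ^ 6 * (T + 2) := by nlinarith [Nat.zero_le (c ^ 6 * T), Nat.zero_le (c ^ 6)]
    calc _ ≤ 16 ^ 5 * c ^ 6 * S + 16 ^ 5 * c ^ 6 * (T + 2) := Nat.add_le_add h1 h2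
      _ = _ := by ring
  have hcast : ((c * (27 ^ Nat.clog 2 (8 * c) * S) + c * (1 + 8 * c * T) : ℕ) : ℝ) ≤
      16 ^ 5 * (c : ℝ) ^ 6 * X := by
    rw [hX]
    exact_mod_cast hnat
  refine hcast.trans ?_
  calc 16 ^ 5 * (c : ℝ) ^ 6 * X ≤ 16 ^ 5 * (420 * L) ^ 6 * X := by gcongr
    _ = 16 ^ 5 * 420 ^ 6 * X * L ^ 6 := by ring

section Bounds

variable {k : ℕ} {hk : 0 < k} {f : PartialFn ι α} {φ : Input ι α → (Fin k → Fin 2) → Bool}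

theorem nonempty_certInput (x : Input ι α) (k : ℕ) :
    Nonempty (Input (CertIdx ι k) (certAlphabet α k)) :=
  ⟨Sum.rec (fun i => x i) fun _ => (0 : Fin 2)⟩

theorem nonempty_csInput (x : Input ι α) (c k : ℕ) :
    Nonempty (Input (CSIdx ι c k) (csAlphabet α c k)) :=
  ⟨Sum.rec (fun p => x p.2) fun _ => (0 : Fin 2)⟩

theorem R1q_cheatSheet_le [Finite ι] (hφ : IsCertifying hk f φ) :
    (R1q (cheatSheet (10 * Nat.clog 2 (Dq f)) f φ) : ℝ) ≤
      16 ^ 5 * 420 ^ 6 * ((Rq f : ℝ) + R0q (certFn φ) + 2) *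
        Real.log ((Rq f : ℝ) + R0q (certFn φ) + 2) ^ 6 := by
  rcases Nat.lt_or_ge (Dq f) 2 with hD | hD
  · rw [Nat.clog_of_right_le_one (by omega), mul_zero, R1q_eq_zero_of_isEmpty]
    have : 0 ≤ Real.log ((Rq f : ℝ) + R0q (certFn φ) + 2) :=
      Real.log_nonneg (by norm_cast; omega)
    push_cast
    positivity
  · obtain ⟨x₀, -⟩ := exists_ne_of_two_le_Dq hD
    set c := 10 * Nat.clog 2 (Dq f) with hc
    have : Nonempty (Input ι α) := ⟨x₀⟩
    have := nonempty_certInput x₀ k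
    have := nonempty_csInput x₀ c k
    obtain ⟨μ, hμd, hμ⟩ := Rq_spec f
    obtain ⟨ν, hνd, hν0, hν⟩ := R0q_spec (certFn φ)
    have hDT : Dq f ≤ R0q (certFn φ) * R0q (certFn φ) :=
      Dq_le_of_certFn_certificates hφ fun z hz =>
        certificates_of_zero_error hνd hν0 hν (fun _ => by simp [certFn]) hz
    obtain ⟨a, ha, ha1, ha0⟩ := randModel.cheatSheet_algorithm hk hφ
      (RandRealizes.of_pmf μ hμd)
      (fun x b hb => by
        have h := ENNReal.toReal_mono (ne_top_of_le_ne_top ENNReal.one_ne_top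
          (toOuterMeasure_le_one μ _)) (hμ x b hb)
        simpa using h)
      (RandRealizes.of_pmf ν hνd)
      (fun z b hb => by
        constructor
        · rw [(PMF.toOuterMeasure_apply_eq_zero_iff _ _).2, ENNReal.toReal_zero]
          refine Set.disjoint_left.2 fun t ht htz => ?_
          have h1 : t.eval z = some !b := htz
          rcases hν0 t ht z b hb with h | h <;> rw [h1] at h <;> simp at h
        · have h := ENNReal.toReal_mono (by simp) (hν z b hb)
          simpa using h)
      (Nat.le_pow_clog one_lt_two (8 * c)) (Nat.lt_two_pow_self (n := 8 * c)).le
    obtain ⟨ρ, hρd, hρ⟩ := RandRealizes.exists_pmf ha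
    refine le_trans (Nat.cast_le.2 (Nat.sInf_le ⟨ρ, hρd, fun z hz => ?_, fun z hz t ht htz => ?_⟩))
      (query_bound (S := Rq f) (T := R0q (certFn φ)) hD (hDT.trans ?_) hc)
    · rw [hρ]
      have h := ENNReal.ofReal_le_ofReal (ha1 z hz)
      rwa [ENNReal.ofReal_div_of_pos (by norm_num), ENNReal.ofReal_ofNat,
        ENNReal.ofReal_ofNat] at h
    · have h := hρ z (some true)
      rw [ha0 z hz, ENNReal.ofReal_zero, PMF.toOuterMeasure_apply_eq_zero_iff] at h
      exact Set.disjoint_left.1 h ht htz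
    · calc R0q (certFn φ) * R0q (certFn φ) ≤ 8 * R0q (certFn φ) ^ 2 := by
            rw [pow_two]
            omega
        _ ≤ _ := Nat.le_self_pow (by norm_num) _

theorem Q1q_cheatSheet_le [Fintype ι] [DecidableEq ι] (hφ : IsCertifying hk f φ) :
    (Q1q (cheatSheet (10 * Nat.clog 2 (Dq f)) f φ) : ℝ) ≤
      16 ^ 5 * 420 ^ 6 * ((Qq f : ℝ) + Q0q (certFn φ) + 2) *
        Real.log ((Qq f : ℝ) + Q0q (certFn φ) + 2) ^ 6 := by
  rcases Nat.lt_or_ge (Dq f) 2 with hD | hD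
  · rw [Nat.clog_of_right_le_one (by omega), mul_zero, Q1q_eq_zero_of_isEmpty]
    have : 0 ≤ Real.log ((Qq f : ℝ) + Q0q (certFn φ) + 2) :=
      Real.log_nonneg (by norm_cast; omega)
    push_cast
    positivity
  · obtain ⟨x₀, y₀, hne⟩ := exists_ne_of_two_le_Dq hD
    obtain ⟨i₀, -⟩ := Function.ne_iff.1 hne
    set c := 10 * Nat.clog 2 (Dq f) with hc
    have hc0 : 0 < c := by
      have := Nat.clog_pos one_lt_two hD
      omega
    have : Nonempty (Input ι α) := ⟨x₀⟩
    have : Nonempty (Σ i, Fin (α i)) := ⟨⟨i₀, x₀ i₀⟩⟩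
    have hz := nonempty_certInput x₀ k
    have : Nonempty (Σ i, Fin (certAlphabet α k i)) := ⟨⟨Sum.inl i₀, hz.some _⟩⟩
    have hw := nonempty_csInput x₀ c k
    have : Nonempty (Σ i, Fin (csAlphabet α c k i)) := ⟨⟨Sum.inl (⟨0, hc0⟩, i₀), hw.some _⟩⟩
    obtain ⟨A, hAT, hA⟩ := Qq_spec f
    obtain ⟨B, hBT, hB⟩ := Q0q_spec (certFn φ)
    have hDT : Dq f ≤ (8 * B.T ^ 2) ^ 4 := by
      refine le_trans (Dq_le_of_certFn_certificates hφ (s := 8 * B.T ^ 2 * (8 * B.T ^ 2))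
        fun z hz => ?_) (le_of_eq (by ring))
      obtain ⟨S, hS, hSg⟩ := certificates_of_block_sensitivity
        (B.quantRealizes.block_sensitivity_le
          (g := fun z => φ (fun i => z (Sum.inl i)) fun q => z (Sum.inr q))
          fun z => hB z _ rfl) z
      exact ⟨S, hS, fun z' hz' => (congrArg some (hSg z' hz')).trans hz⟩
    obtain ⟨a, ha, ha1, ha0⟩ := quantModel.cheatSheet_algorithm hk hφ A.quantRealizes hA
      B.quantRealizes hB
      (Nat.le_pow_clog one_lt_two (8 * c)) (Nat.lt_two_pow_self (n := 8 * c)).le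
    obtain ⟨E, hET, hE⟩ := QuantRealizes.exists_qalg ha
    refine le_trans (Nat.cast_le.2 (Nat.sInf_le ⟨E, ?_, fun z hz => ?_, fun z hz => ?_⟩))
      (query_bound (S := Qq f) (T := Q0q (certFn φ)) hD (hDT.trans ?_) hc)
    · rw [hET]
      gcongr
    · rw [hE]
      exact ha1 z hz
    · rw [hE]
      exact ha0 z hz
    · gcongr

end Bounds

end QC

/-- One-sided-error upper bounds for cheat sheet functions:
`R₁(f_CS) = Õ(R(f) + R₀(φ))` and `Q₁(f_CS) = Õ(Q(f) + Q₀(φ))`. -/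
theorem cheat_sheet_one_sided_upper_bounds :
    ∃ (C : ℝ) (e : ℕ), 0 < C ∧ ∀ (n M k : ℕ) (hk : 0 < k)
      (f : QC.PartialFn (Fin n) fun _ => M)
      (φ : QC.Input (Fin n) (fun _ => M) → (Fin k → Fin 2) → Bool),
      QC.IsCertifying hk f φ →
      (QC.R1q (QC.cheatSheet (10 * Nat.clog 2 (QC.Dq f)) f φ) : ℝ) ≤
          C * ((QC.Rq f : ℝ) + (QC.R0q (QC.certFn φ) : ℝ) + 2) *
            (Real.log ((QC.Rq f : ℝ) + (QC.R0q (QC.certFn φ) : ℝ) + 2)) ^ e ∧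
      (QC.Q1q (QC.cheatSheet (10 * Nat.clog 2 (QC.Dq f)) f φ) : ℝ) ≤
          C * ((QC.Qq f : ℝ) + (QC.Q0q (QC.certFn φ) : ℝ) + 2) *
            (Real.log ((QC.Qq f : ℝ) + (QC.Q0q (QC.certFn φ) : ℝ) + 2)) ^ e := by
  refine ⟨16 ^ 5 * 420 ^ 6, 6, by norm_num, fun n M k hk f φ hφ => ⟨?_, ?_⟩⟩
  · exact QC.R1q_cheatSheet_le hφ
  · exact QC.Q1q_cheatSheet_le hφ
end

section
/- There exists a family of partial functions f : D → {0,1} with D ⊆ {0,1}^n and certifying functions φ for f such that R_0(f_CS(φ)) = Ω̃(R_0(f)^{3/2} + R_0(φ)^{3/2}); in particular, f can be chosen with R_0(f) = O(n^{2/3}) and R_0(φ) = Õ(n^{2/3}) while R_0(f_CS(φ)) = Ω̃(n), so the zero-error randomized query complexity of the cheat sheet version can be polynomially larger than R_0(f) + R_0(φ). -/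
open scoped BigOperators ENNReal

namespace QC

namespace DTree

variable {ι : Type} {α : ι → ℕ} {L : Type}

/-- The list of indices queried by a decision tree on an input, in order. -/
def path : DTree ι α L → Input ι α → List ι
  | leaf _, _ => []
  | node i child, x => i :: path (child (x i)) x

theorem length_path (T : DTree ι α L) (x : Input ι α) : (T.path x).length = T.cost x := by
  induction T with
  | leaf b => rfl
  | node i child ih => simp [path, cost, ih]

theorem cost_le_depth (T : DTree ι α L) (x : Input ι α) : T.cost x ≤ T.depth := by
  induction T with
  | leaf b => simp [cost]
  | node i child ih =>
    have h := Finset.le_sup (f := fun a => depth (child a)) (Finset.mem_univ (x i))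
    have := ih (x i)
    simp only [cost, depth]
    omega

/-- The output only depends on the values at the queried indices. -/
theorem eval_congr (T : DTree ι α L) {x y : Input ι α} (h : ∀ i ∈ T.path x, x i = y i) :
    T.eval y = T.eval x := by
  induction T with
  | leaf b => rfl
  | node i child ih =>
    simp only [path, List.mem_cons, forall_eq_or_imp] at h
    simp only [eval, ← h.1]
    exact ih _ h.2

/-- The tree that queries all indices in a list, records the answers over `acc`, and
continues with `k` applied to the updated record. -/
def read [DecidableEq ι] :
    List ι → Input ι α → (Input ι α → DTree ι α L) → DTree ι α L
  | [], acc, k => k acc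
  | i :: l, acc, k => node i fun a => read l (Function.update acc i a) k

theorem read_spec [DecidableEq ι] (l : List ι) (acc : Input ι α)
    (k : Input ι α → DTree ι α L) (x : Input ι α) :
    ∃ acc' : Input ι α, (∀ i ∈ l, acc' i = x i) ∧ (∀ i ∉ l, acc' i = acc i) ∧
      (read l acc k).eval x = (k acc').eval x ∧
      (read l acc k).cost x = l.length + (k acc').cost x := by
  induction l generalizing acc with
  | nil => exact ⟨acc, by simp, by simp, rfl, by simp [read]⟩
  | cons i l ih =>
    obtain ⟨acc', h₁, h₂, h₃, h₄⟩ := ih (Function.update acc i (x i))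
    refine ⟨acc', ?_, ?_, h₃, ?_⟩
    · intro q hq
      by_cases hql : q ∈ l
      · exact h₁ q hql
      · obtain rfl : q = i := by simpa [hql] using hq
        simp [h₂ q hql]
    · intro q hq
      simp only [List.mem_cons, not_or] at hq
      simp [h₂ q hq.2, Function.update_of_ne hq.1]
    · simp only [read, cost, List.length_cons, h₄]
      omega

end DTree

variable {ι : Type} {α : ι → ℕ}

theorem tsum_pmf_mul_const {Ω : Type*} (μ : PMF Ω) (a : ℝ≥0∞) : ∑' T, μ T * a = a := by
  rw [ENNReal.tsum_mul_right, μ.tsum_coe, one_mul]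

/-- A zero-error algorithm given by a uniformly random tree from a finite family. -/
theorem R0expq_le_of_family {J : Type} [Fintype J] [Nonempty J] (f : PartialFn ι α)
    (T : J → DTree ι α (Option Bool)) (B : ℕ)
    (hc : ∀ j x b, f x = some b → (T j).eval x = some b ∨ (T j).eval x = none)
    (hB : ∀ j x, (T j).cost x ≤ B)
    (hfail : ∀ x b, f x = some b → ∀ s : Finset J, (∀ j ∈ s, (T j).eval x = none) →
      2 * s.card ≤ Fintype.card J) :
    R0expq f ≤ B := by
  classical
  refine sInf_le ⟨(PMF.uniformOfFintype J).map T, ?_, ?_, ?_⟩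
  · intro t ht x b hx
    obtain ⟨j, -, rfl⟩ := (PMF.mem_support_map_iff _ _ _).1 ht
    exact hc j x b hx
  · intro x b hx
    rw [PMF.toOuterMeasure_map_apply, PMF.toOuterMeasure_uniformOfFintype_apply]
    have h := hfail x b hx (Finset.univ.filter fun j => (T j).eval x = none) (by simp)
    have hcard : Fintype.card ↑(T ⁻¹' {t | t.eval x = none}) =
        (Finset.univ.filter fun j => (T j).eval x = none).card := by
      rw [Fintype.card_subtype]
      congr 1
      ext j
      simp
    rw [hcard]
    have hpos : (Fintype.card J : ℝ≥0∞) ≠ 0 := by simp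
    refine ENNReal.div_le_of_le_mul ?_
    rw [one_div, ← ENNReal.mul_le_mul_iff_right (a := 2) (by simp) (by simp), ← mul_assoc,
      ENNReal.mul_inv_cancel (by simp) (by simp), one_mul]
    exact_mod_cast h
  · intro x b hx
    calc ∑' t, (PMF.uniformOfFintype J).map T t * (t.cost x : ℝ≥0∞)
        ≤ ∑' t, (PMF.uniformOfFintype J).map T t * (B : ℝ≥0∞) := by
          refine ENNReal.tsum_le_tsum fun t => ?_
          by_cases ht : t ∈ ((PMF.uniformOfFintype J).map T).support
          · obtain ⟨j, -, rfl⟩ := (PMF.mem_support_map_iff _ _ _).1 ht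
            gcongr
            exact hB j x
          · rw [(PMF.apply_eq_zero_iff _ _).2 ht]
            simp
      _ = B := tsum_pmf_mul_const _ _

/-- The deterministic case of `R0expq_le_of_family`. -/
theorem R0expq_le_of_tree (f : PartialFn ι α) (T : DTree ι α (Option Bool)) (B : ℕ)
    (hc : ∀ x b, f x = some b → T.eval x = some b) (hB : ∀ x, T.cost x ≤ B) :
    R0expq f ≤ B := by
  refine R0expq_le_of_family (J := Unit) f (fun _ => T) B (fun _ x b h => Or.inl (hc x b h))
    (fun _ => hB) fun x b h s hs => ?_
  have : s = ∅ := Finset.eq_empty_of_forall_notMem fun j hj => by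
    simpa [hc x b h] using hs j hj
  simp [this]

/-- Lower bound by averaging over a finite family of inputs: every errorless tree
must on average either spend many queries or give up often. -/
theorem le_R0expq_of_average {Ω : Type} [Fintype Ω] [Nonempty Ω] (f : PartialFn ι α)
    (z : Ω → Input ι α) (hz : ∀ r, f (z r) ≠ none) (N : ℕ)
    (h : ∀ T : DTree ι α (Option Bool),
      (∀ x b, f x = some b → T.eval x = some b ∨ T.eval x = none) →
      3 * Fintype.card Ω * N ≤ 4 * ∑ r, T.cost (z r) +
        4 * N * ∑ r, if T.eval (z r) = none then 1 else 0) :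
    (N : ℝ≥0∞) ≤ 4 * R0expq f := by
  classical
  rw [mul_comm, ← ENNReal.div_le_iff_le_mul (by simp) (by simp)]
  refine le_sInf ?_
  rintro c ⟨μ, hcor, hfail, hcost⟩
  refine ENNReal.div_le_of_le_mul ?_
  have hval : ∀ r, ∃ b, f (z r) = some b := fun r => Option.ne_none_iff_exists'.1 (hz r)
  set W : ℝ≥0∞ := (Fintype.card Ω : ℝ≥0∞) with hW
  have hW0 : W ≠ 0 := by simp [hW]
  have hWt : W ≠ ⊤ := by simp [hW]
  have hcost' : ∑' T, μ T * (∑ r, T.cost (z r) : ℕ) ≤ W * c := by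
    have : ∀ T, μ T * ((∑ r, T.cost (z r) : ℕ) : ℝ≥0∞) =
        ∑ r, μ T * (T.cost (z r) : ℝ≥0∞) := fun T => by
      push_cast
      rw [Finset.mul_sum]
    simp_rw [this]
    rw [Summable.tsum_finsetSum fun _ _ => ENNReal.summable]
    calc _ ≤ ∑ _r : Ω, c := Finset.sum_le_sum fun r _ => by
            obtain ⟨b, hb⟩ := hval r
            exact hcost _ b hb
      _ = W * c := by simp [hW]
  have hfail' : ∑' T, μ T *
      ((∑ r, if T.eval (z r) = none then 1 else 0 : ℕ) : ℝ≥0∞) ≤ W * (1 / 2) := by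
    have : ∀ T : DTree ι α (Option Bool), μ T *
        ((∑ r, if T.eval (z r) = none then 1 else 0 : ℕ) : ℝ≥0∞) =
        ∑ r, {T : DTree ι α (Option Bool) | T.eval (z r) = none}.indicator μ T := fun T => by
      push_cast
      rw [Finset.mul_sum]
      refine Finset.sum_congr rfl fun r _ => ?_
      simp [Set.indicator_apply]
    simp_rw [this]
    rw [Summable.tsum_finsetSum fun _ _ => ENNReal.summable]
    calc _ ≤ ∑ _r : Ω, (1 / 2 : ℝ≥0∞) := Finset.sum_le_sum fun r _ => by
            obtain ⟨b, hb⟩ := hval r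
            rw [← PMF.toOuterMeasure_apply]
            exact hfail _ b hb
      _ = W * (1 / 2) := by simp [hW]
  have key : W * N + 2 * W * N ≤ W * (c * 4) + 2 * W * N := by
    calc W * N + 2 * W * N = ∑' T, μ T * (3 * W * N) := by
          rw [tsum_pmf_mul_const]
          ring
      _ ≤ ∑' T, (4 * (μ T * (∑ r, T.cost (z r) : ℕ)) + 4 * N * (μ T *
            ((∑ r, if T.eval (z r) = none then 1 else 0 : ℕ) : ℝ≥0∞))) := by
          refine ENNReal.tsum_le_tsum fun T => ?_
          by_cases hT : T ∈ μ.support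
          · have h1 : (3 * W * N : ℝ≥0∞) ≤ 4 * (∑ r, T.cost (z r) : ℕ) + 4 * N *
                ((∑ r, if T.eval (z r) = none then 1 else 0 : ℕ) : ℝ≥0∞) := by
              rw [hW]
              exact_mod_cast h T (hcor T hT)
            calc μ T * (3 * W * N) ≤ _ := mul_le_mul_right h1 (μ T)
              _ = _ := by ring
          · rw [(PMF.apply_eq_zero_iff _ _).2 hT]
            simp
      _ = 4 * ∑' T, μ T * (∑ r, T.cost (z r) : ℕ) + 4 * N * ∑' T, μ T *
            ((∑ r, if T.eval (z r) = none then 1 else 0 : ℕ) : ℝ≥0∞) := by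
          rw [ENNReal.tsum_add, ENNReal.tsum_mul_left, ENNReal.tsum_mul_left]
      _ ≤ 4 * (W * c) + 4 * N * (W * (1 / 2)) := by gcongr
      _ = W * (c * 4) + (4 * (1 / 2)) * W * N := by ring
      _ = W * (c * 4) + 2 * W * N := by
          congr 3
          rw [one_div, show (4 : ℝ≥0∞) = 2 * 2 by norm_num, mul_assoc,
            ENNReal.mul_inv_cancel (by simp) (by simp), mul_one]
  have hfin : 2 * W * (N : ℝ≥0∞) ≠ ⊤ :=
    ENNReal.mul_ne_top (ENNReal.mul_ne_top (by simp) hWt) (by simp)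
  exact (ENNReal.mul_le_mul_iff_right hW0 hWt).1 ((ENNReal.add_le_add_iff_right hfin).1 key)

section Search

variable {ι : Type} {α : ι → ℕ} {L Row Col : Type}

/-- If flipping the hidden position `ρ` only affects queries at `ρ`, then at most `m`
positions are discovered within the first `m` relevant queries. -/
theorem card_early_hits_le [Fintype Row] [DecidableEq Row] (T : DTree ι α L) (z : Row → Input ι α)
    (rq : ι → Option Row)
    (hz : ∀ i ρ ρ', rq i ≠ some ρ → rq i ≠ some ρ' → z ρ i = z ρ' i) (m : ℕ) :
    (Finset.univ.filter fun ρ => ρ ∈ ((T.path (z ρ)).filterMap rq).take m).card ≤ m := by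
  induction T generalizing m with
  | leaf b => simp [DTree.path]
  | node i child ih =>
    cases hq : rq i with
    | none =>
      by_cases hR : Nonempty Row
      · obtain ⟨ρ₀⟩ := hR
        refine le_trans (Finset.card_le_card ?_) (ih (z ρ₀ i) m)
        intro ρ hρ
        have hv : z ρ i = z ρ₀ i := hz i ρ ρ₀ (by simp [hq]) (by simp [hq])
        simpa [DTree.path, hq, hv] using hρ
      · have := not_nonempty_iff.1 hR
        simp
    | some a =>
      cases m with
      | zero => simp
      | succ m =>
        by_cases hR : ∃ ρ₀, ρ₀ ≠ a
        · obtain ⟨ρ₀, hρ₀⟩ := hR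
          refine le_trans (Finset.card_le_card ?_) (le_trans
            (Finset.card_insert_le a _) (Nat.succ_le_succ (ih (z ρ₀ i) m)))
          intro ρ hρ
          by_cases hρa : ρ = a
          · simp [hρa]
          · have hv : z ρ i = z ρ₀ i :=
              hz i ρ ρ₀ (by simpa [hq] using Ne.symm hρa) (by simpa [hq] using hρ₀.symm)
            simpa [DTree.path, hq, hv, hρa] using hρ
        · push Not at hR
          refine le_trans (Finset.card_le_card (t := {a}) ?_) (by simp)
          intro ρ _
          simp [hR ρ]

open Classical in
/-- The row of a query into column `j`, when `rc` assigns to each index its row and column. -/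
noncomputable def rowIn (rc : ι → Option (Row × Col)) (j : Col) (i : ι) : Option Row :=
  (rc i).bind fun p => if p.2 = j then some p.1 else none

theorem rowIn_eq_some {rc : ι → Option (Row × Col)} {j : Col} {i : ι} {a : Row} :
    rowIn rc j i = some a ↔ rc i = some (a, j) := by
  unfold rowIn
  cases h : rc i with
  | none => simp
  | some p =>
    obtain ⟨b, j'⟩ := p
    by_cases hj : j' = j <;> simp [hj]

theorem sum_update [Fintype Row] [Fintype Col] [DecidableEq Col] (j : Col) (g : (Col → Row) → ℕ) :
    ∑ r : Col → Row, ∑ ρ : Row, g (Function.update r j ρ) = Fintype.card Row * ∑ r, g r := by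
  have h : ∑ p : (Col → Row) × Row, g (Function.update p.1 j p.2) =
      ∑ p : (Col → Row) × Row, g p.1 := by
    have hinv : Function.Involutive
        (fun p : (Col → Row) × Row => (Function.update p.1 j p.2, p.1 j)) := by
      rintro ⟨r, ρ⟩
      simp
    exact Fintype.sum_equiv hinv.toPerm _ _ fun p => rfl
  rw [← Fintype.sum_prod_type', h, Fintype.sum_prod_type]
  simp [Finset.mul_sum]

theorem sum_early_hits_le [Fintype Row] [Fintype Col] [DecidableEq Row] [DecidableEq Col]
    (T : DTree ι α L)
    (rc : ι → Option (Row × Col)) (z : (Col → Row) → Input ι α)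
    (hz : ∀ i r r', (∀ a j, rc i = some (a, j) → (r j = a ↔ r' j = a)) → z r i = z r' i)
    (m : ℕ) :
    Fintype.card Row * ∑ r : Col → Row, (Finset.univ.filter fun j =>
        r j ∈ ((T.path (z r)).filterMap (rowIn rc j)).take m).card ≤
      m * Fintype.card Col * Fintype.card (Col → Row) := by
  simp_rw [Finset.card_filter]
  rw [Finset.sum_comm, Finset.mul_sum]
  have hj : ∀ j : Col, Fintype.card Row * ∑ r : Col → Row,
      (if r j ∈ ((T.path (z r)).filterMap (rowIn rc j)).take m then 1 else 0) ≤
      m * Fintype.card (Col → Row) := by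
    intro j
    rw [← sum_update j]
    calc _ ≤ ∑ _r : Col → Row, m := by
          refine Finset.sum_le_sum fun r _ => ?_
          rw [← Finset.card_filter]
          refine le_trans (le_of_eq ?_) (card_early_hits_le T
            (fun ρ => z (Function.update r j ρ)) (rowIn rc j) ?_ m)
          · simp
          · intro i ρ ρ' h h'
            refine hz i _ _ fun a j' hij => ?_
            by_cases hjj : j' = j
            · subst hjj
              have := rowIn_eq_some.2 hij
              simp only [this, ne_eq, Option.some.injEq] at h h'
              simp [Ne.symm h, Ne.symm h']
            · simp [hjj]
      _ = m * Fintype.card (Col → Row) := by simp [mul_comm]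
  calc _ ≤ ∑ _j : Col, m * Fintype.card (Col → Row) := Finset.sum_le_sum fun j _ => hj j
    _ = _ := by
      simp only [Finset.sum_const, Finset.card_univ, smul_eq_mul]
      ring

theorem sum_length_rowIn_le [Fintype Col] (rc : ι → Option (Row × Col)) (l : List ι) :
    ∑ j : Col, (l.filterMap (rowIn rc j)).length ≤ l.length := by
  classical
  induction l with
  | nil => simp
  | cons i l ih =>
    have h : ∀ j : Col, ((i :: l).filterMap (rowIn rc j)).length ≤
        (if (rc i).map Prod.snd = some j then 1 else 0) +
          (l.filterMap (rowIn rc j)).length := by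
      intro j
      cases hj : rowIn rc j i with
      | none => simp [hj]
      | some a => simp [hj, rowIn_eq_some.1 hj, add_comm]
    refine le_trans (Finset.sum_le_sum fun j _ => h j) ?_
    rw [Finset.sum_add_distrib, List.length_cons, add_comm]
    refine Nat.add_le_add ih ?_
    cases (rc i).map Prod.snd <;> simp

open Classical in
/-- The columns whose hidden position, according to `r`, appears in the list `l`. -/
noncomputable def found [Fintype Col] (rc : ι → Option (Row × Col)) (r : Col → Row)
    (l : List ι) : Finset Col :=
  Finset.univ.filter fun j => ∃ i ∈ l, rc i = some (r j, j)

theorem mem_found [Fintype Col] {rc : ι → Option (Row × Col)} {r : Col → Row} {l : List ι}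
    {j : Col} : j ∈ found rc r l ↔ ∃ i ∈ l, rc i = some (r j, j) := by
  simp [found]

theorem card_found_lt [Fintype Col] [DecidableEq Row] [DecidableEq Col]
    (rc : ι → Option (Row × Col)) (r : Col → Row)
    (l : List ι) (m Q : ℕ) (hl : l.length < m * Q)
    (hearly : (Finset.univ.filter fun j =>
      r j ∈ (l.filterMap (rowIn rc j)).take m).card < Q) :
    (found rc r l).card < 2 * Q := by
  set big := Finset.univ.filter fun j : Col => m < (l.filterMap (rowIn rc j)).length with hbig
  have hsub : found rc r l ⊆ (Finset.univ.filter fun j =>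
      r j ∈ (l.filterMap (rowIn rc j)).take m) ∪ big := by
    intro j hj
    simp only [found, Finset.mem_filter, Finset.mem_univ, true_and] at hj
    obtain ⟨i, hil, hi⟩ := hj
    simp only [Finset.mem_union, Finset.mem_filter, Finset.mem_univ, true_and, hbig]
    by_cases hlen : m < (l.filterMap (rowIn rc j)).length
    · exact Or.inr hlen
    · left
      rw [List.take_of_length_le (not_lt.1 hlen), List.mem_filterMap]
      exact ⟨i, hil, rowIn_eq_some.2 hi⟩
  have hcard : big.card * m ≤ l.length :=
    calc big.card * m = ∑ _j ∈ big, m := by simp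
      _ ≤ ∑ j ∈ big, (l.filterMap (rowIn rc j)).length :=
        Finset.sum_le_sum fun j hj => (Finset.mem_filter.1 hj).2.le
      _ ≤ ∑ j, (l.filterMap (rowIn rc j)).length :=
        Finset.sum_le_sum_of_subset (Finset.subset_univ _)
      _ ≤ l.length := sum_length_rowIn_le rc l
  have hb : big.card < Q := by
    by_contra hcon
    have := Nat.mul_le_mul_left m (not_lt.1 hcon)
    rw [mul_comm] at hcard
    omega
  have := (Finset.card_le_card hsub).trans (Finset.card_union_le _ _)
  omega

/-- If a tree must give up whenever it has made few queries and found few hidden positions,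
then on average over the hidden positions it makes many queries or often gives up. -/
theorem average_cost_bound [Fintype Row] [Fintype Col] [DecidableEq Row] [DecidableEq Col]
    (T : DTree ι α (Option Bool))
    (rc : ι → Option (Row × Col)) (z : (Col → Row) → Input ι α)
    (hz : ∀ i r r', (∀ a j, rc i = some (a, j) → (r j = a ↔ r' j = a)) → z r i = z r' i)
    (m Q : ℕ)
    (hRow : Fintype.card Row = 16 * m) (hCol : Fintype.card Col = 4 * Q)
    (hnone : ∀ r, (T.path (z r)).length < m * Q → (found rc r (T.path (z r))).card < 2 * Q →
      T.eval (z r) = none) :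
    3 * Fintype.card (Col → Row) * (m * Q) ≤ 4 * ∑ r, T.cost (z r) +
      4 * (m * Q) * ∑ r, if T.eval (z r) = none then 1 else 0 := by
  set X : (Col → Row) → ℕ := fun r => (Finset.univ.filter fun j =>
        r j ∈ ((T.path (z r)).filterMap (rowIn rc j)).take m).card with hX
  have hpt : ∀ r, m * Q ≤ T.cost (z r) +
      (m * Q) * (if T.eval (z r) = none then 1 else 0) + m * X r := by
    intro r
    by_cases hlen : (T.path (z r)).length < m * Q
    · by_cases hx : X r < Q
      · have := hnone r hlen (card_found_lt rc r _ m Q hlen hx)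
        simp only [this, if_true]
        omega
      · have := Nat.mul_le_mul_left m (not_lt.1 hx)
        omega
    · rw [DTree.length_path] at hlen
      omega
  have hsum := Finset.sum_le_sum fun r (_ : r ∈ Finset.univ) => hpt r
  simp only [Finset.sum_add_distrib, ← Finset.mul_sum, Finset.sum_const, Finset.card_univ,
    smul_eq_mul] at hsum
  have hE := sum_early_hits_le T rc z hz m
  rw [hRow, hCol] at hE
  have hE' : 4 * (m * ∑ r, X r) ≤ m * Q * Fintype.card (Col → Row) := by linarith
  linarith

end Search

theorem exists_binary_sum (c : ℕ) (l : ℕ) (h : l < 2 ^ c) :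
    ∃ b : Fin c → Bool, (∑ i, if b i then 2 ^ (i : ℕ) else 0) = l := by
  induction c generalizing l with
  | zero => exact ⟨fun _ => false, by simp at h ⊢; omega⟩
  | succ c ih =>
    obtain ⟨b, hb⟩ := ih (l / 2) (by rw [pow_succ] at h; omega)
    refine ⟨Fin.cons (decide (l % 2 = 1)) b, ?_⟩
    rw [Fin.sum_univ_succ]
    have : ∑ i : Fin c, (if b i then 2 ^ ((i : ℕ) + 1) else 0) =
        2 * ∑ i : Fin c, (if b i then 2 ^ (i : ℕ) else 0) := by
      rw [Finset.mul_sum]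
      refine Finset.sum_congr rfl fun i _ => ?_
      split_ifs <;> ring
    simp only [Fin.cons_zero, Fin.cons_succ, Fin.val_succ, Fin.val_zero, this, hb]
    by_cases hl : l % 2 = 1 <;> simp [hl] <;> omega

theorem binToFin_surjective (c : ℕ) : Function.Surjective (binToFin c) := by
  intro l
  obtain ⟨b, hb⟩ := exists_binary_sum c l l.2
  exact ⟨b, Fin.ext (by simp [binToFin, hb, Nat.mod_eq_of_lt l.2])⟩

section Construction

/-- Names of the columns of the matrix: bit strings of length `w + 1`. -/
abbrev MCol (w : ℕ) := Fin (w + 1) → Fin 2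

/-- Positions of the bits of a matrix with `R` rows: the cell in row `i` and column `j` holds
a flag `(i, j, none)` and a pointer to a column, with bits `(i, j, some t)`. -/
abbrev MCell (R w : ℕ) := Fin R × MCol w × Option (Fin (w + 1))

/-- Column `j` of the matrix has only flags `1`, every other column `j'` has a flag `0` in
row `pos j'`, and at least half of the pointers at these positions point to `j`. -/
def Valid {R w : ℕ} (x : MCell R w → Fin 2) (j : MCol w) (pos : MCol w → Fin R) : Prop :=
  (∀ i, x (i, j, none) = 1) ∧ (∀ j', j' ≠ j → x (pos j', j', none) = 0) ∧
  2 ^ (w + 1) ≤ 2 * (Finset.univ.filter fun j' =>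
    (fun t => x (pos j', j', some t)) = j).card

variable {R w : ℕ} {ι : Type}

theorem Valid.eq_of_flags {x : MCell R w → Fin 2} {j j' : MCol w} {pos : MCol w → Fin R}
    (h : Valid x j pos) (h' : ∀ i, x (i, j', none) = 1) : j' = j := by
  by_contra hne
  have h0 := h.2.1 j' hne
  rw [h'] at h0
  exact absurd h0 (by decide)

theorem Valid.congr {x x' : MCell R w → Fin 2} {j : MCol w} {pos : MCol w → Fin R}
    (h₁ : ∀ i, x (i, j, none) = x' (i, j, none))
    (h₂ : ∀ j' t, x (pos j', j', t) = x' (pos j', j', t)) :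
    Valid x j pos ↔ Valid x' j pos := by
  simp only [Valid, h₁, h₂]

/-- The bit attached to a column. -/
def colBit (j : MCol w) : Bool := decide (j 0 = 1)

open Classical in
/-- The partial function whose domain consists of the matrices with a valid column,
and whose value is the bit attached to that column. The matrix is read off from the
input through `e`. -/
noncomputable def matFn (e : MCell R w → ι) : PartialFn ι (fun _ => 2) := fun x =>
  if h : ∃ j pos, Valid (fun p => x (e p)) j pos then some (colBit h.choose) else none

theorem matFn_eq_of_valid {e : MCell R w → ι} {x : Input ι fun _ => 2} {j : MCol w}
    {pos : MCol w → Fin R} (h : Valid (fun p => x (e p)) j pos) :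
    matFn e x = some (colBit j) := by
  have hex : ∃ j pos, Valid (fun p => x (e p)) j pos := ⟨j, pos, h⟩
  obtain ⟨pos', h'⟩ := hex.choose_spec
  rw [matFn, dif_pos hex, h.eq_of_flags h'.1]

theorem exists_valid_of_matFn_eq {e : MCell R w → ι} {x : Input ι fun _ => 2} {b : Bool}
    (h : matFn e x = some b) : ∃ j pos, Valid (fun p => x (e p)) j pos ∧ colBit j = b := by
  by_cases hex : ∃ j pos, Valid (fun p => x (e p)) j pos
  · obtain ⟨j, pos, hv⟩ := hex
    exact ⟨j, pos, hv, by simpa [matFn_eq_of_valid hv] using h⟩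
  · simp [matFn, hex] at h

/-- The certificate string of a column and positions, built from an encoding `E`. -/
def certEnc {M : ℕ} (E : MCol w × (MCol w → Fin R) ↪ (Fin M → Fin 2)) (j : MCol w)
    (pos : MCol w → Fin R) : Fin (M + 2) → Fin 2 :=
  Fin.cons (j 0) (Fin.cons 1 (E (j, pos)))

theorem certEnc_injective {M : ℕ} {E : MCol w × (MCol w → Fin R) ↪ (Fin M → Fin 2)}
    {j j' : MCol w} {pos pos' : MCol w → Fin R}
    (h : certEnc E j pos = certEnc E j' pos') : j = j' ∧ pos = pos' := by
  have h1 := (Fin.cons_inj.1 (Fin.cons_inj.1 h).2).2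
  simpa using E.injective h1

/-- The certifying function that accepts exactly the encodings of valid certificates. -/
noncomputable def matCert {M : ℕ} (e : MCell R w → ι)
    (E : MCol w × (MCol w → Fin R) ↪ (Fin M → Fin 2)) (x : Input ι fun _ => 2)
    (y : Fin (M + 2) → Fin 2) : Bool :=
  ofProp (∃ j pos, certEnc E j pos = y ∧ Valid (fun p => x (e p)) j pos)

theorem ofProp_eq_true {P : Prop} : ofProp P = true ↔ P := by simp [ofProp]

theorem ofProp_eq_false {P : Prop} : ofProp P = false ↔ ¬ P := by simp [ofProp]

theorem isCertifying_matCert {M : ℕ} (e : MCell R w → ι)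
    (E : MCol w × (MCol w → Fin R) ↪ (Fin M → Fin 2)) :
    IsCertifying (Nat.succ_pos (M + 1)) (matFn e) (matCert e E) := by
  refine ⟨?_, ?_, ?_, ?_⟩
  · intro x y hx
    refine ofProp_eq_false.2 ?_
    rintro ⟨j, pos, -, hv⟩
    simp [matFn_eq_of_valid hv] at hx
  · intro x y b hx hy
    refine ofProp_eq_false.2 ?_
    rintro ⟨j, pos, rfl, hv⟩
    rw [matFn_eq_of_valid hv, Option.some.injEq] at hx
    refine hy ?_
    change j 0 = _
    subst hx
    simp only [colBit, decide_eq_true_eq]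
    split_ifs <;> omega
  · intro x b hx
    obtain ⟨j, pos, hv, -⟩ := exists_valid_of_matFn_eq hx
    exact ⟨_, ofProp_eq_true.2 ⟨j, pos, rfl, hv⟩⟩
  · intro x
    refine ofProp_eq_false.2 ?_
    rintro ⟨j, pos, h, -⟩
    have := congrFun h 1
    change (1 : Fin 2) = 0 at this
    exact absurd this (by decide)

/-! ### Upper bounds -/

/-- The bits of the pointer in row `i` and column `j`. -/
def ptrBits (e : MCell R w → ι) (i : Fin R) (j : MCol w) : List ι :=
  (List.finRange (w + 1)).map fun t => e (i, j, some t)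

/-- The flags in column `j`. -/
def flagBits (e : MCell R w → ι) (j : MCol w) : List ι :=
  (List.finRange R).map fun i => e (i, j, none)

open Classical in
/-- Follow the pointers of column `j` in the given rows until reaching a column
with only flags `1`. -/
noncomputable def followTree (e : MCell R w → ι) (j : MCol w) :
    List (Fin R) → DTree ι (fun _ => 2) (Option Bool)
  | [] => .leaf none
  | i :: l => .read (ptrBits e i j) (fun _ => 0) fun a =>
      .read (flagBits e fun t => a (e (i, j, some t))) (fun _ => 0) fun a' =>
        if ∀ i', a' (e (i', fun t => a (e (i, j, some t)), none)) = 1 then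
          .leaf (some (colBit fun t => a (e (i, j, some t))))
        else followTree e j l

theorem followTree_spec (e : MCell R w → ι) (j : MCol w) (l : List (Fin R))
    (x : Input ι fun _ => 2) :
    (followTree e j l).cost x ≤ l.length * (w + 1 + R) ∧
    (∀ j₀ pos, Valid (fun p => x (e p)) j₀ pos →
      ((followTree e j l).eval x = some (colBit j₀) ∨ (followTree e j l).eval x = none) ∧
      ((∃ i ∈ l, (fun t => x (e (i, j, some t))) = j₀) → (followTree e j l).eval x ≠ none)) := by
  classical
  induction l with
  | nil => simp [followTree, DTree.cost, DTree.eval]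
  | cons i l ih =>
    obtain ⟨a, ha, -, hev, hcost⟩ := DTree.read_spec (ptrBits e i j) (fun _ => 0) (fun a =>
      DTree.read (flagBits e fun t => a (e (i, j, some t))) (fun _ => 0) fun a' =>
        if ∀ i', a' (e (i', fun t => a (e (i, j, some t)), none)) = 1 then
          .leaf (some (colBit fun t => a (e (i, j, some t))))
        else followTree e j l) x
    have hptr : (fun t => a (e (i, j, some t))) = fun t => x (e (i, j, some t)) := by
      funext t
      exact ha _ (by simp [ptrBits])
    rw [hptr] at hev hcost
    obtain ⟨a', ha', -, hev', hcost'⟩ := DTree.read_spec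
      (flagBits e fun t => x (e (i, j, some t))) (fun _ => 0) (fun a' =>
        if ∀ i', a' (e (i', fun t => x (e (i, j, some t)), none)) = 1 then
          DTree.leaf (some (colBit fun t => x (e (i, j, some t))))
        else followTree e j l) x
    have hflag : ∀ i', a' (e (i', fun t => x (e (i, j, some t)), none)) =
        x (e (i', fun t => x (e (i, j, some t)), none)) := fun i' =>
      ha' _ (by simp [flagBits])
    simp only [hflag] at hev' hcost'
    rw [hev'] at hev
    rw [hcost'] at hcost
    have h1 : (ptrBits e i j).length = w + 1 := by simp [ptrBits]
    have h2 : (flagBits e fun t => x (e (i, j, some t))).length = R := by simp [flagBits]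
    rw [h1, h2] at hcost
    constructor
    · change DTree.cost (DTree.read _ _ _) x ≤ _
      rw [hcost, List.length_cons, Nat.succ_mul]
      split_ifs
      · simp only [DTree.cost]
        omega
      · have := ih.1
        omega
    · intro j₀ pos hv
      change (DTree.eval (DTree.read _ _ _) x = _ ∨ DTree.eval (DTree.read _ _ _) x = _) ∧
        (_ → DTree.eval (DTree.read _ _ _) x ≠ _)
      rw [hev]
      split_ifs with hall
      · have hj := hv.eq_of_flags hall
        simp [DTree.eval, hj]
      · refine ⟨(ih.2 j₀ pos hv).1, ?_⟩
        rintro ⟨i', hi', hj⟩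
        rcases List.mem_cons.1 hi' with rfl | hi'
        · exact absurd (by rw [hj]; exact hv.1) hall
        · exact (ih.2 j₀ pos hv).2 ⟨i', hi', hj⟩

theorem R0expq_matFn_le (e : MCell R w → ι) :
    R0expq (matFn e) ≤ (R * (w + 1 + R) : ℕ) := by
  classical
  refine R0expq_le_of_family (J := MCol w) _ (fun j => followTree e j (List.finRange R)) _
    ?_ ?_ ?_
  · intro j x b hx
    obtain ⟨j₀, pos, hv, rfl⟩ := exists_valid_of_matFn_eq hx
    exact ((followTree_spec e j _ x).2 j₀ pos hv).1
  · intro j x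
    simpa using (followTree_spec e j (List.finRange R) x).1
  · intro x b hx s hs
    obtain ⟨j₀, pos, hv, -⟩ := exists_valid_of_matFn_eq hx
    have hdisj : Disjoint s (Finset.univ.filter fun j' =>
        (fun t => x (e (pos j', j', some t))) = j₀) := by
      rw [Finset.disjoint_left]
      intro j' hj' hmem
      exact ((followTree_spec e j' _ x).2 j₀ pos hv).2
        ⟨pos j', List.mem_finRange _, (Finset.mem_filter.1 hmem).2⟩ (hs j' hj')
    have h1 := Finset.card_le_univ (s ∪ Finset.univ.filter fun j' =>
        (fun t => x (e (pos j', j', some t))) = j₀)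
    rw [Finset.card_union_of_disjoint hdisj] at h1
    have h2 : 2 ^ (w + 1) ≤ 2 * (Finset.univ.filter fun j' =>
        (fun t => x (e (pos j', j', some t))) = j₀).card := hv.2.2
    have h3 : Fintype.card (MCol w) = 2 ^ (w + 1) := by simp
    rw [h3] at h1 ⊢
    omega

theorem R0expq_matCert_le {M : ℕ} (e : MCell R w → ι)
    (E : MCol w × (MCol w → Fin R) ↪ (Fin M → Fin 2)) :
    R0expq (certFn (matCert e E)) ≤ (M + 2 + (R + 2 ^ (w + 1) * (w + 2)) : ℕ) := by
  classical
  let α := certAlphabet (fun _ : ι => 2) (M + 2)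
  let zero : Input (CertIdx ι (M + 2)) α := fun q => match q with
    | .inl _ => (0 : Fin 2)
    | .inr _ => (0 : Fin 2)
  let lst : MCol w → (MCol w → Fin R) → List (CertIdx ι (M + 2)) := fun j pos =>
    ((Finset.univ : Finset (Fin R ⊕ (MCol w × Option (Fin (w + 1))))).toList).map
      (Sum.elim (fun i => .inl (e (i, j, none))) fun q => .inl (e (pos q.1, q.1, q.2)))
  let lstY : List (CertIdx ι (M + 2)) := (List.finRange (M + 2)).map .inr
  let T : DTree (CertIdx ι (M + 2)) α (Option Bool) :=
    .read lstY zero fun a =>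
      if h : ∃ p : MCol w × (MCol w → Fin R), certEnc E p.1 p.2 = fun q => a (.inr q) then
        .read (lst h.choose.1 h.choose.2) zero fun a' =>
          .leaf (some (ofProp (Valid (fun p => a' (.inl (e p))) h.choose.1 h.choose.2)))
      else .leaf (some false)
  have hT : ∀ z, T.eval z = certFn (matCert e E) z ∧
      T.cost z ≤ M + 2 + (R + 2 ^ (w + 1) * (w + 2)) := by
    intro z
    obtain ⟨a, ha, -, hev, hcost⟩ := DTree.read_spec lstY zero (fun a =>
      if h : ∃ p : MCol w × (MCol w → Fin R), certEnc E p.1 p.2 = fun q => a (.inr q) then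
        .read (lst h.choose.1 h.choose.2) zero fun a' =>
          .leaf (some (ofProp (Valid (fun p => a' (.inl (e p))) h.choose.1 h.choose.2)))
      else .leaf (some false)) z
    have hlen : lstY.length = M + 2 := by simp [lstY]
    have hy : (fun q => a (.inr q)) = fun q => z (.inr q) := by
      funext q
      exact ha _ (by simp [lstY])
    rw [hlen] at hcost
    change T.eval z = _ at hev
    change T.cost z = _ at hcost
    rw [hev, hcost]
    simp only [certFn, matCert]
    split_ifs with h
    · have hsp := h.choose_spec.trans hy
      set p := h.choose with hp
      obtain ⟨a', ha', -, hev', hcost'⟩ := DTree.read_spec (lst p.1 p.2) zero (fun a' =>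
          DTree.leaf (some (ofProp (Valid (fun p => a' (.inl (e p))) p.1 p.2)))) z
      rw [hev', hcost']
      have hl : (lst p.1 p.2).length = R + 2 ^ (w + 1) * (w + 2) := by simp [lst]
      refine ⟨?_, by simp [hl, DTree.cost]⟩
      simp only [DTree.eval]
      congr 2
      have hvc : Valid (fun q => a' (.inl (e q))) p.1 p.2 ↔
          Valid (fun q => z (.inl (e q))) p.1 p.2 := by
        refine Valid.congr (fun i => ha' _ ?_) fun j' t => ha' _ ?_
        · exact List.mem_map.2 ⟨.inl i, by simp, rfl⟩
        · exact List.mem_map.2 ⟨.inr (j', t), by simp, rfl⟩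
      refine propext (hvc.trans ⟨fun hv => ⟨p.1, p.2, hsp, hv⟩, ?_⟩)
      rintro ⟨j, pos, hE, hv⟩
      rw [← hsp] at hE
      obtain ⟨rfl, rfl⟩ := certEnc_injective hE
      exact hv
    · refine ⟨?_, by simp [DTree.cost]⟩
      simp only [DTree.eval]
      congr 1
      refine (ofProp_eq_false.2 ?_).symm
      rintro ⟨j, pos, hE, -⟩
      exact h ⟨(j, pos), by rw [hy, hE]⟩
  refine R0expq_le_of_tree _ T _ (fun z b hz => ?_) fun z => (hT z).2
  rw [(hT z).1, hz]

end Construction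

section LowerBound

variable {R w : ℕ} {ι : Type}

/-- The matrix without any column of only flags `1`: the flag in row `r j` of column `j`
is `0`, all other flags are `1`, and all pointers are null. -/
def hardMatrix (r : MCol w → Fin R) (p : MCell R w) : Fin 2 :=
  if p.2.2 = none ∧ p.1 ≠ r p.2.1 then 1 else 0

/-- The matrix obtained from `hardMatrix r` by turning `j` into a valid column, with pointers
to it stored at the flags `0` of the columns outside `S`. -/
def plantedMatrix (r : MCol w → Fin R) (S : Finset (MCol w)) (j : MCol w) :
    MCell R w → Fin 2
  | (a, j', none) => if j' ≠ j ∧ a = r j' then 0 else 1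
  | (a, j', some t) => if a = r j' ∧ j' ∉ S then j t else 0

theorem valid_plantedMatrix (r : MCol w → Fin R) {S : Finset (MCol w)} (j : MCol w)
    (hS : S.card ≤ 2 ^ w) : Valid (plantedMatrix r S j) j r := by
  refine ⟨fun i => by simp [plantedMatrix], fun j' hj => by simp [plantedMatrix, hj], ?_⟩
  have hsub : Sᶜ ⊆ Finset.univ.filter fun j' =>
      (fun t => plantedMatrix r S j (r j', j', some t)) = j := by
    intro j' hj'
    have : j' ∉ S := by simpa using hj'
    simp [plantedMatrix, this]
  have h1 := Finset.card_le_card hsub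
  have h2 : Fintype.card (MCol w) = 2 ^ (w + 1) := by simp
  rw [Finset.card_compl, h2] at h1
  rw [pow_succ] at h1 ⊢
  omega

theorem hardMatrix_eq_plantedMatrix (r : MCol w → Fin R) {S : Finset (MCol w)} {j : MCol w}
    (hj : j ∉ S) (p : MCell R w) (hp : p.1 = r p.2.1 → p.2.1 ∈ S) :
    hardMatrix r p = plantedMatrix r S j p := by
  obtain ⟨a, j', _ | t⟩ := p
  · by_cases ha : a = r j'
    · have hne : j' ≠ j := fun h => hj (h ▸ hp ha)
      simp [hardMatrix, plantedMatrix, ha, hne]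
    · simp [hardMatrix, plantedMatrix, ha]
  · have : ¬ (a = r j' ∧ j' ∉ S) := fun h => h.2 (hp h.1)
    simp [hardMatrix, plantedMatrix, this]

theorem exists_colBit_eq {S : Finset (MCol w)} (hS : S.card < 2 ^ w) (b : Bool) :
    ∃ j ∉ S, colBit j = b := by
  classical
  let F : (Fin w → Fin 2) → MCol w := fun v => Fin.cons (if b then 1 else 0) v
  have hF : Function.Injective F := fun v v' h => (Fin.cons_inj.1 h).2
  have hc : S.card < (Finset.univ.image F).card := by
    rw [Finset.card_image_of_injective _ hF]
    simpa using hS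
  obtain ⟨j, hj, hjS⟩ := Finset.exists_mem_notMem_of_card_lt_card hc
  obtain ⟨v, -, rfl⟩ := Finset.mem_image.1 hj
  exact ⟨_, hjS, by cases b <;> simp [F, colBit]⟩

/-- The cheat sheet input all of whose copies are `hardMatrix r` and all of whose cells
are empty. -/
def hardInput (d : ι → Option (MCell R w)) (c k : ℕ) (r : MCol w → Fin R) :
    Input (CSIdx ι c k) (csAlphabet (fun _ => 2) c k)
  | .inl p => ((d p.2).elim 0 (hardMatrix r) : Fin 2)
  | .inr _ => (0 : Fin 2)

/-- The row and column of the matrix containing a given bit of a cheat sheet input. -/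
def rowCol (d : ι → Option (MCell R w)) (c k : ℕ) : CSIdx ι c k → Option (Fin R × MCol w)
  | .inl p => (d p.2).map fun q => (q.1, q.2.1)
  | .inr _ => none

theorem not_csCond_hardInput {M c : ℕ} (hc : 0 < c) (e : MCell R w → ι)
    (d : ι → Option (MCell R w)) (hd : ∀ p, d (e p) = some p)
    (E : MCol w × (MCol w → Fin R) ↪ (Fin M → Fin 2)) (r : MCol w → Fin R) :
    ¬ CSCond (matFn e) (matCert e E) (hardInput d c (M + 2) r) := by
  rintro ⟨bvec, hf, -⟩
  obtain ⟨j, pos, hv, -⟩ := exists_valid_of_matFn_eq (hf ⟨0, hc⟩)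
  have h := hv.1 (r j)
  simp [csX, hardInput, hd, hardMatrix] at h

theorem exists_csCond {M c : ℕ} (e : MCell R w → ι)
    (d : ι → Option (MCell R w)) (hd : ∀ p, d (e p) = some p)
    (E : MCol w × (MCol w → Fin R) ↪ (Fin M → Fin 2)) (r : MCol w → Fin R)
    (l : List (CSIdx ι c (M + 2))) (hl : l.length < 2 ^ c)
    (hfound : (found (rowCol d c (M + 2)) r l).card < 2 ^ w) :
    ∃ z, (∀ i ∈ l, hardInput d c (M + 2) r i = z i) ∧
      CSCond (matFn e) (matCert e E) z := by
  classical
  set S := found (rowCol d c (M + 2)) r l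
  choose J hJS hJ using exists_colBit_eq hfound
  obtain ⟨ℓ, hℓ⟩ : ∃ ℓ : Fin (2 ^ c), ∀ i q, Sum.inr (ℓ, i, q) ∉ l := by
    let g : CSIdx ι c (M + 2) → Fin (2 ^ c) := Sum.elim (fun _ => ⟨0, by positivity⟩) Prod.fst
    have hcard : (l.map g).toFinset.card < (Finset.univ : Finset (Fin (2 ^ c))).card := by
      refine (List.toFinset_card_le _).trans_lt ?_
      simpa using hl
    obtain ⟨ℓ, -, hℓ⟩ := Finset.exists_mem_notMem_of_card_lt_card hcard
    refine ⟨ℓ, fun i q h => hℓ ?_⟩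
    rw [List.mem_toFinset]
    exact List.mem_map.2 ⟨_, h, rfl⟩
  obtain ⟨bvec, rfl⟩ := binToFin_surjective c ℓ
  let z : Input (CSIdx ι c (M + 2)) (csAlphabet (fun _ => 2) c (M + 2)) := fun q =>
    match q with
    | .inl p => ((d p.2).elim 0 (plantedMatrix r S (J (bvec p.1))) : Fin 2)
    | .inr p => ((if p.1 = binToFin c bvec then certEnc E (J (bvec p.2.1)) r p.2.2 else 0) :
        Fin 2)
  have hv : ∀ i, Valid (fun p => csX z i (e p)) (J (bvec i)) r := by
    intro i
    have : (fun p => csX z i (e p)) = plantedMatrix r S (J (bvec i)) := by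
      funext p
      simp [csX, z, hd]
    rw [this]
    exact valid_plantedMatrix r _ hfound.le
  refine ⟨z, ?_, bvec, fun i => by rw [matFn_eq_of_valid (hv i), hJ], fun i => ?_⟩
  · rintro (⟨i, q⟩ | ⟨ℓ, i, q⟩) hi
    · change (d q).elim 0 (hardMatrix r) = (d q).elim 0 (plantedMatrix r S (J (bvec i)))
      cases hq : d q with
      | none => rfl
      | some p =>
        refine hardMatrix_eq_plantedMatrix r (hJS _) p fun hp => ?_
        exact mem_found.2 ⟨_, hi, by simp [rowCol, hq, ← hp]⟩
    · have : ℓ ≠ binToFin c bvec := by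
        rintro rfl
        exact hℓ _ _ hi
      change (0 : Fin 2) = if ℓ = binToFin c bvec then _ else 0
      rw [if_neg this]
  · refine ofProp_eq_true.2 ⟨J (bvec i), r, ?_, hv i⟩
    funext q
    simp [csY, z]

theorem le_R0expq_cheatSheet {M c m Q : ℕ} (hc : 0 < c) (hcN : m * Q ≤ 2 ^ c)
    (hm : 0 < m) (hR : R = 16 * m) (hw : 2 ^ (w + 1) = 4 * Q)
    (e : MCell R w → ι) (d : ι → Option (MCell R w)) (hd : ∀ p, d (e p) = some p)
    (E : MCol w × (MCol w → Fin R) ↪ (Fin M → Fin 2)) :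
    ((m * Q : ℕ) : ℝ≥0∞) ≤ 4 * R0expq (cheatSheet c (matFn e) (matCert e E)) := by
  classical
  have : Nonempty (Fin R) := ⟨⟨0, by omega⟩⟩
  refine le_R0expq_of_average (Ω := MCol w → Fin R) _ (hardInput d c (M + 2))
    (fun r => by simp [cheatSheet]) _ fun T hT => ?_
  refine average_cost_bound T (rowCol d c (M + 2)) _ ?_ m Q (by simpa using hR) (by simpa using hw)
    ?_
  · rintro (⟨i, q⟩ | _) r r' h
    · change (d q).elim 0 (hardMatrix r) = (d q).elim 0 (hardMatrix r')
      cases hq : d q with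
      | none => rfl
      | some p =>
        have := h p.1 p.2.1 (by simp [rowCol, hq])
        simp only [Option.elim, hardMatrix, ne_eq, eq_comm (a := p.1), this]
    · rfl
  · intro r hlen hfound
    have hf : (found (rowCol d c (M + 2)) r (T.path (hardInput d c (M + 2) r))).card < 2 ^ w := by
      rw [pow_succ] at hw
      omega
    obtain ⟨z, hz, hcond⟩ := exists_csCond e d hd E r _ (hlen.trans_le hcN) hf
    have heq := T.eval_congr hz
    have h0 := hT (hardInput d c (M + 2) r) false (by
      simpa [cheatSheet] using ofProp_eq_false.2 (not_csCond_hardInput hc e d hd E r))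
    have h1 := hT z true (by simpa [cheatSheet] using ofProp_eq_true.2 hcond)
    rw [heq] at h1
    rcases h0 with h0 | h0
    · rw [h0] at h1
      simp at h1
    · exact h0

end LowerBound

section FullTree

variable {ι : Type} {α : ι → ℕ} [Fintype ι]

theorem exists_full_tree (f : PartialFn ι α) (x₀ : Input ι α) :
    ∃ T : DTree ι α (Option Bool), ∀ x, T.eval x = f x ∧ T.cost x = Fintype.card ι := by
  classical
  refine ⟨.read Finset.univ.toList x₀ fun a => .leaf (f a), fun x => ?_⟩
  obtain ⟨a, ha, -, hev, hcost⟩ :=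
    DTree.read_spec Finset.univ.toList x₀ (fun a => DTree.leaf (f a)) x
  have hax : a = x := funext fun i => ha i (by simp)
  rw [hev, hcost, hax]
  simp [DTree.eval, DTree.cost]

theorem R0expq_le_card (f : PartialFn ι α) (x₀ : Input ι α) :
    R0expq f ≤ (Fintype.card ι : ℕ) := by
  obtain ⟨T, hT⟩ := exists_full_tree f x₀
  exact R0expq_le_of_tree f T _ (fun x b hx => by rw [(hT x).1, hx]) fun x => (hT x).2.le

theorem le_Dq (f : PartialFn ι α) (x₀ : Input ι α) (N : ℕ)
    (h : ∀ T : DTree ι α (Option Bool), (∀ x b, f x = some b → T.eval x = some b) →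
      N ≤ (T.path x₀).length) : N ≤ Dq f := by
  obtain ⟨T, hT⟩ := exists_full_tree f x₀
  refine le_csInf ⟨T.depth, T, le_rfl, fun x b hx => by rw [(hT x).1, hx]⟩ ?_
  rintro d ⟨T, hd, hc⟩
  refine (h T hc).trans (le_trans ?_ hd)
  rw [T.length_path]
  exact T.cost_le_depth x₀

end FullTree

theorem one_le_R0expq {ι : Type} {α : ι → ℕ} (f : PartialFn ι α) {x y : Input ι α}
    (hx : f x = some false) (hy : f y = some true) : 1 ≤ 4 * R0expq f := by
  have := le_R0expq_of_average (Ω := Bool) f (fun b => if b then y else x)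
    (by rintro (_ | _) <;> simp [hx, hy]) 1 fun T hT => ?_
  · simpa using this
  · have h0 := hT x false hx
    have h1 := hT y true hy
    cases T with
    | leaf b =>
      simp only [DTree.eval] at h0 h1
      rcases h0 with rfl | rfl
      · simp at h1
      · simp [DTree.eval]
    | node i child =>
      simp [DTree.cost]
      omega

section Matrix

variable {R w : ℕ} {ι : Type}

/-- The matrix whose column `j` is the only one with flags `1`, and whose pointers in row `i`
all point to `j`. -/
def rowMatrix (i : Fin R) (j : MCol w) : MCell R w → Fin 2
  | (_, j', none) => if j' = j then 1 else 0
  | (a, _, some t) => if a = i then j t else 0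

theorem valid_rowMatrix (i : Fin R) (j : MCol w) : Valid (rowMatrix i j) j fun _ => i := by
  refine ⟨fun a => by simp [rowMatrix], fun j' hj => by simp [rowMatrix, hj], ?_⟩
  simp [rowMatrix]

theorem rowMatrix_eq_zero {i : Fin R} {j : MCol w} {p : MCell R w} (hi : p.1 ≠ i)
    (hj : p.2.1 ≠ j) : rowMatrix i j p = 0 := by
  obtain ⟨a, j', _ | t⟩ := p
  · exact if_neg hj
  · exact if_neg hi

theorem le_Dq_matFn [Fintype ι] (hR : R ≤ 2 ^ w) (e : MCell R w → ι)
    (d : ι → Option (MCell R w)) (hd : ∀ p, d (e p) = some p) : R ≤ Dq (matFn e) := by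
  classical
  refine le_Dq _ (fun _ => 0) _ fun T hT => ?_
  by_contra! hlt
  set l := T.path fun _ => 0 with hl
  have hrow : (l.filterMap fun q => (d q).map Prod.fst).toFinset.card <
      (Finset.univ : Finset (Fin R)).card := by
    refine ((List.toFinset_card_le _).trans (List.length_filterMap_le _ _)).trans_lt ?_
    simpa using hlt
  obtain ⟨i, -, hi⟩ := Finset.exists_mem_notMem_of_card_lt_card hrow
  have hcol : (l.filterMap fun q => (d q).map fun p => p.2.1).toFinset.card < 2 ^ w :=
    ((List.toFinset_card_le _).trans (List.length_filterMap_le _ _)).trans_lt (hlt.trans_le hR)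
  have key : ∀ b, T.eval (fun _ => 0) = some b := by
    intro b
    obtain ⟨j, hj, rfl⟩ := exists_colBit_eq hcol b
    have hv : Valid (fun p => (d (e p)).elim 0 (rowMatrix i j)) j fun _ => i := by
      simpa [hd] using valid_rowMatrix i j
    have h1 := hT (fun q => (d q).elim 0 (rowMatrix i j)) (colBit j) (matFn_eq_of_valid hv)
    rw [← h1]
    refine (T.eval_congr fun q hq => ?_).symm
    cases hdq : d q with
    | none => rfl
    | some p =>
      refine (rowMatrix_eq_zero ?_ ?_).symm
      · rintro rfl
        exact hi (List.mem_toFinset.2 (List.mem_filterMap.2 ⟨q, hq, by simp [hdq]⟩))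
      · rintro rfl
        exact hj (List.mem_toFinset.2 (List.mem_filterMap.2 ⟨q, hq, by simp [hdq]⟩))
  simpa using (key true).symm.trans (key false)

end Matrix

section Parity

variable {n : ℕ}

/-- The parity of two bits of the input. -/
def parityFn (i j : Fin n) : PartialFn (Fin n) (fun _ => 2) := fun x => some (decide (x i ≠ x j))

/-- The certifying function of `parityFn` that recomputes the parity. -/
def parityCert (i j : Fin n) (x : Input (Fin n) fun _ => 2) (y : Fin 2 → Fin 2) : Bool :=
  decide (y 1 = 1 ∧ (y 0 = 1 ↔ x i ≠ x j))

theorem isCertifying_parityCert (i j : Fin n) :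
    IsCertifying Nat.two_pos (parityFn i j) (parityCert i j) := by
  refine ⟨fun x y h => by simp [parityFn] at h, fun x y b h hy => ?_, fun x b _ => ?_,
    fun x => by simp [parityCert]⟩
  · simp only [parityFn, Option.some.injEq] at h
    subst h
    change y 0 ≠ _ at hy
    simp only [parityCert, decide_eq_false_iff_not, decide_eq_true_eq] at hy ⊢
    rintro ⟨-, h⟩
    refine hy ?_
    split_ifs with hx
    · exact h.2 hx
    · have : y 0 ≠ 1 := fun h' => hx (h.1 h')
      omega
  · refine ⟨![if x i ≠ x j then 1 else 0, 1], ?_⟩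
    simp [parityCert]

theorem two_le_Dq_parityFn {i j : Fin n} (hij : i ≠ j) : 2 ≤ Dq (parityFn i j) := by
  classical
  refine le_Dq _ (fun _ => 0) _ fun T hT => ?_
  by_contra! hlt
  set l := T.path fun _ => 0 with hl
  obtain ⟨a, ha, hal⟩ : ∃ a, (a = i ∨ a = j) ∧ a ∉ l := by
    by_contra! h
    have hsub : ({i, j} : Finset (Fin n)) ⊆ l.toFinset := by
      intro a ha
      exact List.mem_toFinset.2 (h a (by simpa using ha))
    have := (Finset.card_le_card hsub).trans (List.toFinset_card_le _)
    rw [Finset.card_pair hij] at this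
    omega
  have h0 := hT (fun _ => 0) false (by simp [parityFn])
  have h1 := hT (fun q => if q = a then 1 else 0) true (by
    rcases ha with rfl | rfl <;> simp [parityFn, hij, hij.symm])
  have h2 := T.eval_congr (x := fun _ => 0) (y := fun q => if q = a then 1 else 0) (by
    intro q hq
    have : q ≠ a := by
      rintro rfl
      exact hal hq
    simp [this])
  rw [h0, h1] at h2
  simp at h2

theorem one_le_R0expq_cheatSheet_parity {c : ℕ} (hc : 0 < c) (i j : Fin n) :
    1 ≤ 4 * R0expq (cheatSheet c (parityFn i j) (parityCert i j)) := by
  let z : Fin 2 → Input (CSIdx (Fin n) c 2) (csAlphabet (fun _ => 2) c 2) := fun b q =>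
    match q with
    | .inl _ => (0 : Fin 2)
    | .inr p => (if p.2.2 = 1 then b else 0 : Fin 2)
  refine one_le_R0expq _ (x := z 0) (y := z 1) ?_ ?_
  · refine congrArg some (ofProp_eq_false.2 ?_)
    rintro ⟨bvec, -, h⟩
    have := h ⟨0, hc⟩
    simp [parityCert, csY, z] at this
  · refine congrArg some (ofProp_eq_true.2 ⟨fun _ => false, fun q => ?_, fun q => ?_⟩)
    · simp [parityFn, csX, z]
    · simp [parityCert, csX, csY, z]

end Parity

section Parameters

theorem four_pow_le_rpow {u n : ℕ} (h : 8 ^ u ≤ n) :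
    ((4 ^ u : ℕ) : ℝ≥0∞) ≤ (n : ℝ≥0∞) ^ ((2 : ℝ) / 3) := by
  have h1 : ((8 ^ u : ℕ) : ℝ≥0∞) ^ ((2 : ℝ) / 3) ≤ (n : ℝ≥0∞) ^ ((2 : ℝ) / 3) :=
    ENNReal.rpow_le_rpow (by exact_mod_cast h) (by norm_num)
  refine le_trans (le_of_eq ?_) h1
  have h8 : ((8 ^ u : ℕ) : ℝ≥0∞) = ((2 ^ u : ℕ) : ℝ≥0∞) ^ (3 : ℝ) := by
    rw [show (3 : ℝ) = ((3 : ℕ) : ℝ) by norm_num, ENNReal.rpow_natCast]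
    norm_cast
    rw [← pow_mul, mul_comm, pow_mul]
    norm_num
  rw [h8, ← ENNReal.rpow_mul, show (3 : ℝ) * (2 / 3) = ((2 : ℕ) : ℝ) by norm_num,
    ENNReal.rpow_natCast]
  norm_cast
  rw [← pow_mul, mul_comm, pow_mul]
  norm_num

theorem one_le_rpow {n : ℕ} (h : 1 ≤ n) : 1 ≤ (n : ℝ≥0∞) ^ ((2 : ℝ) / 3) :=
  ENNReal.one_le_rpow (by exact_mod_cast h) (by norm_num)

/-- The bounds of the separation with constant `A`, for inputs of `n` bits. -/
def Separates (A n : ℕ) {k : ℕ} (f : PartialFn (Fin n) fun _ => 2)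
    (φ : Input (Fin n) (fun _ => 2) → (Fin k → Fin 2) → Bool) : Prop :=
  R0expq f ≤ (A : ℝ≥0∞) * (n : ℝ≥0∞) ^ ((2 : ℝ) / 3) ∧
  R0expq (certFn φ) ≤ (A : ℝ≥0∞) * (Nat.log 2 n : ℝ≥0∞) * (n : ℝ≥0∞) ^ ((2 : ℝ) / 3) ∧
  (n : ℝ≥0∞) ≤ (A : ℝ≥0∞) * (Nat.log 2 n : ℝ≥0∞) *
    R0expq (cheatSheet (10 * Nat.clog 2 (Dq f)) f φ)

theorem exists_separates_small {n : ℕ} (hn : 2 ≤ n) (hn' : n < 36864) :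
    ∃ (f : PartialFn (Fin n) fun _ => 2) (k : ℕ)
      (φ : Input (Fin n) (fun _ => 2) → (Fin k → Fin 2) → Bool) (hk : 0 < k),
      IsCertifying hk f φ ∧ Separates 200000 n f φ := by
  let i : Fin n := ⟨0, by omega⟩
  let j : Fin n := ⟨1, by omega⟩
  have hij : i ≠ j := by simp [i, j]
  have hL : 1 ≤ Nat.log 2 n := Nat.log_pos (by norm_num) hn
  have hL' : (1 : ℝ≥0∞) ≤ (Nat.log 2 n : ℝ≥0∞) := by exact_mod_cast hL
  have hp := one_le_rpow (n := n) (by omega)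
  refine ⟨parityFn i j, 2, parityCert i j, Nat.two_pos, isCertifying_parityCert i j, ?_, ?_, ?_⟩
  · calc R0expq (parityFn i j) ≤ (n : ℕ) := by
          simpa using R0expq_le_card (parityFn i j) fun _ => 0
      _ ≤ ((200000 : ℕ) : ℝ≥0∞) * 1 := by
          rw [mul_one]
          exact_mod_cast (by omega : n ≤ 200000)
      _ ≤ _ := by gcongr
  · calc R0expq (certFn (parityCert i j)) ≤ ((n + 2 : ℕ) : ℝ≥0∞) := by
          have := R0expq_le_card (certFn (parityCert i j)) fun q => match q with
            | .inl _ => (0 : Fin 2)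
            | .inr _ => (0 : Fin 2)
          simpa using this
      _ ≤ ((200000 : ℕ) : ℝ≥0∞) * 1 * 1 := by
          rw [mul_one, mul_one]
          exact_mod_cast (by omega : n + 2 ≤ 200000)
      _ ≤ _ := by gcongr
  · have hD := two_le_Dq_parityFn hij
    have hc : 0 < 10 * Nat.clog 2 (Dq (parityFn i j)) :=
      Nat.mul_pos (by norm_num) (Nat.clog_pos (by norm_num) hD)
    calc (n : ℝ≥0∞) ≤ ((50000 : ℕ) : ℝ≥0∞) * 1 * 1 := by
          rw [mul_one, mul_one]
          exact_mod_cast (by omega : n ≤ 50000)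
      _ ≤ ((50000 : ℕ) : ℝ≥0∞) * (Nat.log 2 n : ℝ≥0∞) *
          (4 * R0expq (cheatSheet (10 * Nat.clog 2 (Dq (parityFn i j)))
            (parityFn i j) (parityCert i j))) := by
          gcongr
          exact one_le_R0expq_cheatSheet_parity hc i j
      _ = ((50000 * 4 : ℕ) : ℝ≥0∞) * (Nat.log 2 n : ℝ≥0∞) *
          R0expq (cheatSheet (10 * Nat.clog 2 (Dq (parityFn i j)))
            (parityFn i j) (parityCert i j)) := by
          push_cast
          ring
      _ = _ := by norm_num

theorem exists_size {n : ℕ} (hn : 36864 ≤ n) :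
    ∃ v : ℕ, 8 ^ (v + 4) * (2 * (v + 4) + 1) ≤ n ∧
      n < 8 ^ (v + 5) * (2 * (v + 5) + 1) := by
  let P : ℕ → Prop := fun u => 8 ^ u * (2 * u + 1) ≤ n
  have hP : P 4 := by simpa [P] using hn
  have h4 : 4 ≤ n := by omega
  have hge := Nat.le_findGreatest h4 hP
  have hspec : P (Nat.findGreatest P n) := Nat.findGreatest_spec h4 hP
  obtain ⟨v, hv⟩ := Nat.exists_eq_add_of_le' hge
  rw [hv] at hspec
  refine ⟨v, hspec, ?_⟩
  by_contra! hcon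
  have hle : v + 5 ≤ n := by
    have := (Nat.lt_pow_self (n := v + 5) (by norm_num : 1 < 8)).le
    nlinarith
  have := Nat.le_findGreatest (P := P) hle hcon
  omega

theorem exists_separates_large {n : ℕ} (hn : 36864 ≤ n) :
    ∃ (f : PartialFn (Fin n) fun _ => 2) (k : ℕ)
      (φ : Input (Fin n) (fun _ => 2) → (Fin k → Fin 2) → Bool) (hk : 0 < k),
      IsCertifying hk f φ ∧ Separates 200000 n f φ := by
  obtain ⟨v, hv, hv'⟩ := exists_size hn
  obtain ⟨u, hu⟩ : ∃ u, u = v + 4 := ⟨_, rfl⟩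
  obtain ⟨R, hR⟩ : ∃ R, R = 2 ^ u := ⟨_, rfl⟩
  obtain ⟨w, hw⟩ : ∃ w, w = 2 * v + 7 := ⟨_, rfl⟩
  have hw1 : 2 ^ (w + 1) = 4 ^ u := by
    rw [hw, hu, show (4 : ℕ) = 2 ^ 2 by norm_num, ← pow_mul]
    congr 1
  have h48 : 2 ^ u * 4 ^ u = 8 ^ u := by rw [← mul_pow]; norm_num
  have h44 : 2 ^ u * 2 ^ u = 4 ^ u := by rw [← mul_pow]; norm_num
  have h8n : 8 ^ u ≤ n := by
    rw [hu]
    nlinarith [Nat.zero_le (8 ^ (v + 4))]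
  have hu2 : u < 2 ^ u := Nat.lt_two_pow_self
  have huL : u ≤ Nat.log 2 n :=
    Nat.le_log_of_pow_le (by norm_num) ((Nat.pow_le_pow_left (by norm_num) u).trans h8n)
  have huL' : (u : ℝ≥0∞) ≤ (Nat.log 2 n : ℝ≥0∞) := by exact_mod_cast huL
  have h4n := four_pow_le_rpow h8n
  obtain ⟨e⟩ : Nonempty (MCell R w ↪ Fin n) := by
    refine Function.Embedding.nonempty_of_card_le ?_
    simp only [Fintype.card_prod, Fintype.card_fin, Fintype.card_pi, Finset.prod_const,
      Finset.card_univ, Fintype.card_option]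
    rw [hw1, hR, ← mul_assoc, h48, hw, hu]
    exact le_of_eq_of_le (by ring) hv
  obtain ⟨E⟩ : Nonempty (MCol w × (MCol w → Fin R) ↪
      (Fin (w + 1 + u * 2 ^ (w + 1)) → Fin 2)) := by
    refine Function.Embedding.nonempty_of_card_le ?_
    simp [hR, ← pow_mul, pow_add]
  have hd : ∀ p, Function.partialInv e (e p) = some p := Function.partialInv_left e.injective
  refine ⟨matFn e, _, matCert e E, Nat.succ_pos _, isCertifying_matCert e E, ?_, ?_, ?_⟩
  · calc R0expq (matFn e) ≤ (R * (w + 1 + R) : ℕ) := R0expq_matFn_le e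
      _ ≤ ((200000 * 4 ^ u : ℕ) : ℝ≥0∞) := by
          have : R * (w + 1 + R) ≤ 200000 * 4 ^ u := by
            rw [hR, ← h44, show w + 1 = 2 * u by omega]
            nlinarith
          exact_mod_cast this
      _ ≤ _ := by
          rw [Nat.cast_mul]
          gcongr
  · calc R0expq (certFn (matCert e E)) ≤
        (w + 1 + u * 2 ^ (w + 1) + 2 + (R + 2 ^ (w + 1) * (w + 2)) : ℕ) := R0expq_matCert_le _ _
      _ ≤ ((200000 * u * 4 ^ u : ℕ) : ℝ≥0∞) := by
          have : w + 1 + u * 2 ^ (w + 1) + 2 + (R + 2 ^ (w + 1) * (w + 2)) ≤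
              200000 * u * 4 ^ u := by
            rw [hw1, hR, show w + 2 = 2 * u + 1 by omega, show w + 1 = 2 * u by omega]
            have h1 : 2 ^ u ≤ 4 ^ u := Nat.pow_le_pow_left (by norm_num) u
            have h2 : 1 ≤ u := by omega
            have h3 : 4 ^ u ≤ u * 4 ^ u := Nat.le_mul_of_pos_left _ h2
            nlinarith
          exact_mod_cast this
      _ ≤ _ := by
          rw [Nat.cast_mul, Nat.cast_mul]
          gcongr
  · have hD : R ≤ Dq (matFn e) := by
      refine le_Dq_matFn ?_ e _ hd
      rw [hR]
      exact Nat.pow_le_pow_right (by norm_num) (by omega)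
    have hD2 : 2 ≤ Dq (matFn e) := by
      refine le_trans ?_ hD
      omega
    have hc : 0 < 10 * Nat.clog 2 (Dq (matFn e)) :=
      Nat.mul_pos (by norm_num) (Nat.clog_pos (by norm_num) hD2)
    have hcN : 2 ^ v * 2 ^ (2 * v + 6) ≤ 2 ^ (10 * Nat.clog 2 (Dq (matFn e))) := by
      rw [← pow_add]
      refine Nat.pow_le_pow_right (by norm_num) ?_
      have h1 : 2 ^ u ≤ 2 ^ Nat.clog 2 (Dq (matFn e)) :=
        (hR.symm.trans_le hD).trans (Nat.le_pow_clog (by norm_num) _)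
      have h2 := (Nat.pow_le_pow_iff_right (by norm_num)).1 h1
      omega
    have hlow := le_R0expq_cheatSheet hc hcN (by positivity)
      (by rw [hR, hu, pow_add]; ring) (by rw [hw, pow_succ, pow_succ]; ring) e _ hd E
    have hnN : n ≤ 50000 * u * (2 ^ v * 2 ^ (2 * v + 6)) := by
      have h1 : 2 ^ v * 2 ^ (2 * v + 6) = 64 * 8 ^ v := by
        rw [← pow_add, show (8 : ℕ) = 2 ^ 3 by norm_num, ← pow_mul,
          show (64 : ℕ) = 2 ^ 6 by norm_num, ← pow_add]
        congr 1
        ring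
      rw [h1, hu]
      rw [pow_add] at hv'
      have h8 : 0 < 8 ^ v := by positivity
      nlinarith
    calc (n : ℝ≥0∞) ≤ ((50000 * u * (2 ^ v * 2 ^ (2 * v + 6)) : ℕ) : ℝ≥0∞) := by
          exact_mod_cast hnN
      _ = ((50000 : ℕ) : ℝ≥0∞) * (u : ℝ≥0∞) * ((2 ^ v * 2 ^ (2 * v + 6) : ℕ) : ℝ≥0∞) := by
          push_cast
          ring
      _ ≤ ((50000 : ℕ) : ℝ≥0∞) * (Nat.log 2 n : ℝ≥0∞) *
          (4 * R0expq (cheatSheet (10 * Nat.clog 2 (Dq (matFn e))) (matFn e) (matCert e E))) := by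
          gcongr
      _ = ((50000 * 4 : ℕ) : ℝ≥0∞) * (Nat.log 2 n : ℝ≥0∞) *
          R0expq (cheatSheet (10 * Nat.clog 2 (Dq (matFn e))) (matFn e) (matCert e E)) := by
          push_cast
          ring
      _ = _ := by norm_num

theorem exists_separates (n : ℕ) :
    ∃ (f : PartialFn (Fin n) fun _ => 2) (k : ℕ)
      (φ : Input (Fin n) (fun _ => 2) → (Fin k → Fin 2) → Bool) (hk : 0 < k),
      IsCertifying hk f φ ∧ (2 ≤ n → Separates 200000 n f φ) := by
  by_cases h2 : 2 ≤ n
  · rcases lt_or_ge n 36864 with h | h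
    · obtain ⟨f, k, φ, hk, hc, hs⟩ := exists_separates_small h2 h
      exact ⟨f, k, φ, hk, hc, fun _ => hs⟩
    · obtain ⟨f, k, φ, hk, hc, hs⟩ := exists_separates_large h
      exact ⟨f, k, φ, hk, hc, fun _ => hs⟩
  · exact ⟨fun _ => none, 1, fun _ _ => false, Nat.one_pos, by simp [IsCertifying],
      fun h => absurd h h2⟩

theorem rpow_le_of_le_mul_rpow {a : ℝ≥0∞} {B n : ℕ} (hB : 1 ≤ B)
    (h : a ≤ (B : ℝ≥0∞) * (n : ℝ≥0∞) ^ ((2 : ℝ) / 3)) :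
    a ^ ((3 : ℝ) / 2) ≤ (B : ℝ≥0∞) ^ 2 * n := by
  calc a ^ ((3 : ℝ) / 2) ≤ ((B : ℝ≥0∞) * (n : ℝ≥0∞) ^ ((2 : ℝ) / 3)) ^ ((3 : ℝ) / 2) :=
        ENNReal.rpow_le_rpow h (by norm_num)
    _ = (B : ℝ≥0∞) ^ ((3 : ℝ) / 2) * n := by
        rw [ENNReal.mul_rpow_of_nonneg _ _ (by norm_num), ← ENNReal.rpow_mul]
        norm_num
    _ ≤ (B : ℝ≥0∞) ^ 2 * n := by
        rw [← ENNReal.rpow_natCast]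
        gcongr
        · exact_mod_cast hB
        · norm_num

end Parameters

end QC

/-- There is a family of partial functions `f` on `{0,1}^n` and
certifying functions `φ` with `R₀(f_CS(φ)) = Ω̃(R₀(f)^{3/2} + R₀(φ)^{3/2})`;
in particular `R₀(f) = O(n^{2/3})` and `R₀(φ) = Õ(n^{2/3})` while
`R₀(f_CS(φ)) = Ω̃(n)`. -/
theorem zero_error_cheat_sheet_can_increase :
    ∃ (f : ∀ n : ℕ, QC.PartialFn (Fin n) fun _ => 2) (k : ℕ → ℕ)
      (φ : ∀ n, QC.Input (Fin n) (fun _ => 2) → (Fin (k n) → Fin 2) → Bool)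
      (hk : ∀ n, 0 < k n),
      (∀ n, QC.IsCertifying (hk n) (f n) (φ n)) ∧
      ∃ (C e : ℕ), 0 < C ∧ ∀ n : ℕ, 2 ≤ n →
        QC.R0expq (f n) ≤ (C : ℝ≥0∞) * (n : ℝ≥0∞) ^ ((2 : ℝ) / 3) ∧
        QC.R0expq (QC.certFn (φ n)) ≤
          (C : ℝ≥0∞) * (Nat.log 2 n : ℝ≥0∞) ^ e * (n : ℝ≥0∞) ^ ((2 : ℝ) / 3) ∧
        (n : ℝ≥0∞) ≤ (C : ℝ≥0∞) * (Nat.log 2 n : ℝ≥0∞) ^ e *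
          QC.R0expq (QC.cheatSheet (10 * Nat.clog 2 (QC.Dq (f n))) (f n) (φ n)) ∧
        QC.R0expq (f n) ^ ((3 : ℝ) / 2) + QC.R0expq (QC.certFn (φ n)) ^ ((3 : ℝ) / 2) ≤
          (C : ℝ≥0∞) * (Nat.log 2 n : ℝ≥0∞) ^ e *
            QC.R0expq (QC.cheatSheet (10 * Nat.clog 2 (QC.Dq (f n))) (f n) (φ n)) := by
  choose f k φ hk hcert hsep using QC.exists_separates
  obtain ⟨A, hA⟩ : ∃ A, A = 200000 := ⟨_, rfl⟩
  have hA1 : 1 ≤ A := by omega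
  refine ⟨f, k, φ, hk, hcert, 2 * A ^ 3, 3, by positivity, fun n hn => ?_⟩
  obtain ⟨h1, h2, h3⟩ := hA ▸ hsep n hn
  generalize QC.R0expq (QC.cheatSheet (10 * Nat.clog 2 (QC.Dq (f n))) (f n) (φ n)) = K at h3 ⊢
  have hL1 : 1 ≤ Nat.log 2 n := Nat.log_pos (by norm_num) hn
  generalize Nat.log 2 n = L at h2 h3 hL1 ⊢
  have hAC : (A : ℝ≥0∞) ≤ ((2 * A ^ 3 : ℕ) : ℝ≥0∞) := by
    have : A ≤ A ^ 3 := Nat.le_self_pow (by norm_num) A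
    exact_mod_cast (by omega : A ≤ 2 * A ^ 3)
  have hLp : (L : ℝ≥0∞) ≤ (L : ℝ≥0∞) ^ 3 := by
    exact_mod_cast Nat.le_self_pow (by norm_num) L
  refine ⟨h1.trans (by gcongr), h2.trans (by gcongr), h3.trans (by gcongr), ?_⟩
  have hL1' : (1 : ℝ≥0∞) ≤ (L : ℝ≥0∞) ^ 2 := by
    exact_mod_cast Nat.one_le_pow _ _ hL1
  have b1 := QC.rpow_le_of_le_mul_rpow hA1 h1
  have b2 := QC.rpow_le_of_le_mul_rpow (n := n) (a := QC.R0expq (QC.certFn (φ n)))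
    (B := A * L) (Nat.mul_pos hA1 hL1) (by rwa [Nat.cast_mul])
  calc _ ≤ (A : ℝ≥0∞) ^ 2 * n + ((A * L : ℕ) : ℝ≥0∞) ^ 2 * n := add_le_add b1 b2
    _ ≤ (A : ℝ≥0∞) ^ 2 * (L : ℝ≥0∞) ^ 2 * n + (A : ℝ≥0∞) ^ 2 * (L : ℝ≥0∞) ^ 2 * n := by
        rw [Nat.cast_mul, mul_pow]
        gcongr
        exact le_mul_of_one_le_right zero_le hL1'
    _ = 2 * (A : ℝ≥0∞) ^ 2 * (L : ℝ≥0∞) ^ 2 * n := by ring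
    _ ≤ 2 * (A : ℝ≥0∞) ^ 2 * (L : ℝ≥0∞) ^ 2 * (A * L * K) := by gcongr
    _ = _ := by
        push_cast
        ring
end
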